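/- arXiv:1812.05153 — 6 statements merged into one kernel-verified Lean document; each statement's English description precedes it below -/
import Mathlib

section
/- Let R be a commutative ring, S ⊆ R a multiplicative subset, and 𝒞 an R-linear abelian category. Then the category 𝒞 ⊗_R S⁻¹R is abelian, and the canonical functor F : 𝒞 → 𝒞 ⊗_R S⁻¹R (the identity on objects, base extension Hom_𝒞(M,N) → Hom_𝒞(M,N) ⊗_R S⁻¹R on morphisms) is exact. Moreover, if 𝒞 is R-linearly symmetric monoidal, then 𝒞 ⊗_R S⁻¹R is symmetric monoidal in a natural way and F is a monoidal functor. -/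
open CategoryTheory TensorProduct

universe w v u

/-- The base change `𝒞 ⊗_R R'` of an `R`-linear category `𝒞` along `R → R'`:
same objects as `𝒞`, morphisms `Hom_𝒞(M,N) ⊗_R R'`. -/
structure BaseChange (R : Type u) [CommRing R] (R' : Type u) [CommRing R'] [Algebra R R']
    (C : Type v) [Category.{w} C] [Preadditive C] [Linear R C] where
  obj : C

variable (R : Type u) [CommRing R] (R' : Type u) [CommRing R'] [Algebra R R']
variable (C : Type v) [Category.{w} C] [Preadditive C] [Linear R C]

variable {C}

/-- Composition in `𝒞` as an `R`-bilinear map. -/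
noncomputable def compBilinear (X Y Z : C) : (X ⟶ Y) →ₗ[R] (Y ⟶ Z) →ₗ[R] (X ⟶ Z) where
  toFun f := Linear.leftComp R Z f
  map_add' f f' := by ext g; simp [Linear.leftComp]
  map_smul' r f := by ext g; simp [Linear.leftComp]

/-- Composition in the base change category, induced by composition in `𝒞` and
multiplication in `R'` : `(f ⊗ r) ≫ (g ⊗ s) = (f ≫ g) ⊗ rs`. -/
noncomputable def compMap (X Y Z : C) :
    (((X ⟶ Y) ⊗[R] R') ⊗[R] ((Y ⟶ Z) ⊗[R] R')) →ₗ[R] ((X ⟶ Z) ⊗[R] R') :=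
  (TensorProduct.map (TensorProduct.lift (compBilinear R X Y Z)) (LinearMap.mul' R R')).comp
    (TensorProduct.tensorTensorTensorComm R (X ⟶ Y) R' (Y ⟶ Z) R').toLinearMap

variable (C)

noncomputable instance : Category (BaseChange R R' C) where
  Hom X Y := (X.obj ⟶ Y.obj) ⊗[R] R'
  id X := 𝟙 X.obj ⊗ₜ[R] (1 : R')
  comp {X Y Z} f g := compMap R R' X.obj Y.obj Z.obj (f ⊗ₜ[R] g)
  id_comp := by
    intro X Y f
    show compMap R R' _ _ _ (_ ⊗ₜ[R] f) = f
    induction f using TensorProduct.induction_on with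
    | zero => simp
    | tmul g r => simp [compMap, compBilinear, Linear.leftComp]
    | add f₁ f₂ h₁ h₂ => rw [tmul_add, map_add, h₁, h₂]
  comp_id := by
    intro X Y f
    show compMap R R' _ _ _ (f ⊗ₜ[R] _) = f
    induction f using TensorProduct.induction_on with
    | zero => simp
    | tmul g r => simp [compMap, compBilinear, Linear.leftComp]
    | add f₁ f₂ h₁ h₂ => rw [add_tmul, map_add, h₁, h₂]
  assoc := by
    intro W X Y Z f g h
    show compMap R R' _ _ _ ((compMap R R' _ _ _ (f ⊗ₜ[R] g)) ⊗ₜ[R] h)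
      = compMap R R' _ _ _ (f ⊗ₜ[R] (compMap R R' _ _ _ (g ⊗ₜ[R] h)))
    induction f using TensorProduct.induction_on with
    | zero => simp
    | add f₁ f₂ h₁ h₂ => simp only [add_tmul, tmul_add, map_add, h₁, h₂]
    | tmul a r =>
      induction g using TensorProduct.induction_on with
      | zero => simp
      | add g₁ g₂ h₁ h₂ => simp only [add_tmul, tmul_add, map_add, h₁, h₂]
      | tmul b s =>
        induction h using TensorProduct.induction_on with
        | zero => simp
        | add h₁ h₂ k₁ k₂ => simp only [add_tmul, tmul_add, map_add, k₁, k₂]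
        | tmul c t => simp [compMap, compBilinear, Linear.leftComp, mul_assoc]

/-- The canonical functor `F : 𝒞 → 𝒞 ⊗_R R'`: the identity on objects and the natural base
extension `f ↦ f ⊗ 1` on morphisms. -/
noncomputable def baseChangeFunctor : C ⥤ BaseChange R R' C where
  obj X := ⟨X⟩
  map f := f ⊗ₜ[R] (1 : R')
  map_id := fun X => rfl
  map_comp := by
    intro X Y Z f g
    show _ = compMap R R' X Y Z _
    simp [compMap, compBilinear, Linear.leftComp]

namespace BC

section generic

variable {A : Type u} [CommRing A] (S : Submonoid A)
variable {E : Type v} [Category.{w} E] [Preadditive E] [Linear A E]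

/-- The base change category along localization. -/
abbrev Loc (E : Type v) [Category.{w} E] [Preadditive E] [Linear A E] :=
  BaseChange A (Localization S) E

variable {S}

/-- The pure tensor `g ⊗ r` as a morphism. -/
noncomputable def mk {X Y : Loc S E} (g : X.obj ⟶ Y.obj) (r : Localization S) : X ⟶ Y :=
  (g ⊗ₜ[A] r : (X.obj ⟶ Y.obj) ⊗[A] (Localization S))

theorem mk_comp {X Y Z : Loc S E} (g : X.obj ⟶ Y.obj) (h : Y.obj ⟶ Z.obj)
    (r s : Localization S) : (mk g r : X ⟶ Y) ≫ (mk h s : Y ⟶ Z) = mk (g ≫ h) (r * s) := by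
  show compMap A _ _ _ _ _ = _
  simp [compMap, compBilinear, Linear.leftComp, mk]

theorem mk_id (X : Loc S E) : mk (𝟙 X.obj) 1 = 𝟙 X := rfl

theorem mk_smul {X Y : Loc S E} (a : A) (g : X.obj ⟶ Y.obj) (r : Localization S) :
    (mk (a • g) r : X ⟶ Y) = mk g (algebraMap A _ a * r) := by
  unfold mk
  rw [TensorProduct.smul_tmul, Algebra.smul_def]

noncomputable instance : Preadditive (Loc S E) where
  homGroup X Y := inferInstanceAs (AddCommGroup ((X.obj ⟶ Y.obj) ⊗[A] (Localization S)))
  add_comp := by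
    intro X Y Z f f' g
    show compMap A _ _ _ _ _ = compMap A _ _ _ _ _ + compMap A _ _ _ _ _
    rw [← map_add, ← TensorProduct.add_tmul]
  comp_add := by
    intro X Y Z f g g'
    show compMap A _ _ _ _ _ = compMap A _ _ _ _ _ + compMap A _ _ _ _ _
    rw [← map_add, ← TensorProduct.tmul_add]

theorem mk_add {X Y : Loc S E} (g h : X.obj ⟶ Y.obj) (r : Localization S) :
    (mk (g + h) r : X ⟶ Y) = mk g r + mk h r := TensorProduct.add_tmul _ _ _

theorem mk_zero {X Y : Loc S E} (r : Localization S) :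
    (mk (0 : X.obj ⟶ Y.obj) r : X ⟶ Y) = 0 := TensorProduct.zero_tmul _ _

/-- `1 / s`. -/
noncomputable def inv (s : S) : Localization S := IsLocalization.mk' _ (1 : A) s

theorem mul_inv (s : S) : algebraMap A (Localization S) s * inv s = 1 := by
  unfold inv; rw [IsLocalization.mul_mk'_eq_mk'_of_mul]; simp

theorem inv_mul (s : S) : inv s * algebraMap A (Localization S) s = 1 := by
  rw [mul_comm, mul_inv]

theorem mk_surj {X Y : Loc S E} (f : X ⟶ Y) : ∃ (g : X.obj ⟶ Y.obj) (s : S), f = mk g (inv s) := by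
  change (X.obj ⟶ Y.obj) ⊗[A] (Localization S) at f
  obtain ⟨⟨g, s⟩, h⟩ := IsLocalizedModule.surj S
    (TensorProduct.mk A (Localization S) (X.obj ⟶ Y.obj) 1)
    (TensorProduct.comm A _ _ f)
  refine ⟨g, s, ?_⟩
  have h2 : (s : A) • f = g ⊗ₜ[A] (1 : Localization S) := by
    apply (TensorProduct.comm A _ _).injective
    rw [map_smul]; simpa [Submonoid.smul_def] using h
  unfold mk
  have key : ∀ z : (X.obj ⟶ Y.obj) ⊗[A] (Localization S),
      LinearMap.lTensor _ (LinearMap.mulLeft A (inv s)) ((s : A) • z) = z := by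
    intro z
    induction z using TensorProduct.induction_on with
    | zero => simp
    | add a b ha hb => rw [smul_add, map_add, ha, hb]
    | tmul a r =>
      rw [← TensorProduct.tmul_smul, LinearMap.lTensor_tmul, LinearMap.mulLeft_apply,
        Algebra.smul_def, ← mul_assoc, inv_mul, one_mul]
  have := key f
  rw [h2] at this
  rw [← this]; simp

theorem mk_inv_eq_zero {X Y : Loc S E} {g : X.obj ⟶ Y.obj} {r : Localization S} (hr : IsUnit r)
    (h : (mk g r : X ⟶ Y) = 0) : ∃ t : S, (t : A) • g = 0 := by
  obtain ⟨r', hr'⟩ := hr.exists_right_inv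
  have h1 : (mk g 1 : X ⟶ Y) = 0 := by
    have : (mk g r : X ⟶ Y) ≫ (mk (𝟙 _) r' : Y ⟶ Y) = 0 := by rw [h, Limits.zero_comp]
    rwa [mk_comp, hr', Category.comp_id] at this
  have h2 : TensorProduct.mk A (Localization S) (X.obj ⟶ Y.obj) 1 g = 0 := by
    have := congrArg (TensorProduct.comm A (X.obj ⟶ Y.obj) (Localization S)) h1
    exact this.trans (map_zero _)
  obtain ⟨t, ht⟩ := (IsLocalizedModule.eq_zero_iff S _).1 h2
  exact ⟨t, ht⟩

theorem isUnit_inv (s : S) : IsUnit (inv s) := .of_mul_eq_one _ (inv_mul s)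

theorem mk_eq_zero {X Y : Loc S E} {g : X.obj ⟶ Y.obj} {r : Localization S} (t : S)
    (h : (t : A) • g = 0) : (mk g r : X ⟶ Y) = 0 := by
  have : (mk ((t : A) • g) (inv t * r) : X ⟶ Y) = mk g r := by
    rw [mk_smul, ← mul_assoc, mul_inv, one_mul]
  rw [← this, h, mk_zero]

variable (S E) in
/-- The canonical functor. -/
noncomputable abbrev F : E ⥤ Loc S E := baseChangeFunctor A (Localization S) E

theorem F_map {X Y : E} (f : X ⟶ Y) : (F S E).map f = mk (X := ⟨X⟩) (Y := ⟨Y⟩) f 1 := rfl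

instance : (F S E).Additive where
  map_add := mk_add _ _ _

/-- scaling by a unit -/
noncomputable def unitIso (X : Loc S E) (s : S) : X ≅ X where
  hom := mk (𝟙 _) (inv s)
  inv := mk (𝟙 _) (algebraMap A _ s)
  hom_inv_id := by rw [mk_comp, inv_mul, Category.comp_id, mk_id]
  inv_hom_id := by rw [mk_comp, mul_inv, Category.comp_id, mk_id]

theorem mk_surj_left {X : E} {W : Loc S E} (k : W ⟶ (F S E).obj X) :
    ∃ (g : W.obj ⟶ X) (s : S), k = mk (Y := (F S E).obj X) g (inv s) := mk_surj k

theorem mk_surj_right {X : E} {W : Loc S E} (k : (F S E).obj X ⟶ W) :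
    ∃ (g : X ⟶ W.obj) (s : S), k = mk (X := (F S E).obj X) g (inv s) := mk_surj k

theorem mk_comp_F {X Y : E} {W : Loc S E} (g : W.obj ⟶ X) (f : X ⟶ Y) (r : Localization S) :
    mk (X := W) (Y := (F S E).obj X) g r ≫ (F S E).map f =
      mk (X := W) (Y := (F S E).obj Y) (g ≫ f) r :=
  (mk_comp (X := W) (Y := (F S E).obj X) (Z := (F S E).obj Y) g f r 1).trans (by rw [mul_one]; rfl)

theorem F_comp_mk {X Y : E} {W : Loc S E} (g : Y ⟶ W.obj) (f : X ⟶ Y) (r : Localization S) :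
    (F S E).map f ≫ mk (X := (F S E).obj Y) (Y := W) g r =
      mk (X := (F S E).obj X) (Y := W) (f ≫ g) r :=
  (mk_comp (X := (F S E).obj X) (Y := (F S E).obj Y) (Z := W) f g 1 r).trans
    (by rw [one_mul]; rfl)

/-- The isomorphism given by a unit, with source in the image of `F`. -/
noncomputable def unitIsoF (X : Loc S E) (s : S) : (F S E).obj X.obj ≅ X := unitIso X s

theorem exists_arrow_iso {X Y : Loc S E} (f : X ⟶ Y) : ∃ (X' Y' : E) (g : X' ⟶ Y')
    (a : X ≅ (F S E).obj X') (b : (F S E).obj Y' ≅ Y),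
    f = a.hom ≫ (F S E).map g ≫ b.hom := by
  obtain ⟨g, s, rfl⟩ := mk_surj f
  refine ⟨X.obj, Y.obj, g, (unitIsoF X 1).symm, unitIsoF Y s, ?_⟩
  refine Eq.symm ((congrArg _ (F_comp_mk (W := Y) (𝟙 _) g (inv s))).trans ?_)
  refine (mk_comp (X := X) (Y := (F S E).obj X.obj) (𝟙 X.obj) (g ≫ 𝟙 _) _ (inv s)).trans ?_
  exact (congrArg₂ (mk (X := X) (Y := Y))
    ((Category.id_comp (g ≫ 𝟙 Y.obj)).trans (Category.comp_id g)) (by simp))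

theorem mk_congr {X Y : Loc S E} {f g : X.obj ⟶ Y.obj} {r s : Localization S}
    (h : f = g) (h' : r = s) : (mk f r : X ⟶ Y) = mk g s := by rw [h, h']

end generic

section abelian

open Limits

variable {A : Type u} [CommRing A] {S : Submonoid A}
variable {E : Type v} [Category.{w} E] [Abelian E] [Linear A E]

theorem F_mono {X Y : E} (f : X ⟶ Y) [Mono f] : Mono ((F S E).map f) := by
  refine Preadditive.mono_of_cancel_zero _ ?_
  intro W h hh
  obtain ⟨g, s, rfl⟩ := mk_surj_left h
  rw [mk_comp_F] at hh
  obtain ⟨t, ht⟩ := mk_inv_eq_zero (isUnit_inv s) hh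
  apply mk_eq_zero t
  have ht' : ((t : A) • g) ≫ f = 0 := by rw [Linear.smul_comp]; exact ht
  have h0 : (t : A) • g = 0 := zero_of_comp_mono f ht'
  exact h0

theorem F_epi {X Y : E} (f : X ⟶ Y) [Epi f] : Epi ((F S E).map f) := by
  refine Preadditive.epi_of_cancel_zero _ ?_
  intro W h hh
  obtain ⟨g, s, rfl⟩ := mk_surj_right h
  rw [F_comp_mk] at hh
  obtain ⟨t, ht⟩ := mk_inv_eq_zero (isUnit_inv s) hh
  apply mk_eq_zero t
  have ht' : f ≫ ((t : A) • g) = 0 := by rw [Linear.comp_smul]; exact ht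
  have h0 : (t : A) • g = 0 := zero_of_epi_comp f ht'
  exact h0

theorem F_comp_zero {X Y Z : E} {f : X ⟶ Y} {g : Y ⟶ Z} (w : f ≫ g = 0) :
    (F S E).map f ≫ (F S E).map g = 0 := by
  rw [← Functor.map_comp, w, Functor.map_zero]

theorem F_kernel {K X Y : E} {i : K ⟶ X} {f : X ⟶ Y} (w : i ≫ f = 0)
    (h : IsLimit (KernelFork.ofι i w)) :
    Nonempty (IsLimit (KernelFork.ofι ((F S E).map i) (F_comp_zero (S := S) w))) := by
  have : Mono i := Fork.IsLimit.mono h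
  have := F_mono (S := S) i
  refine ⟨KernelFork.IsLimit.ofι' _ _ fun {W} k hk => Nonempty.some ?_⟩
  obtain ⟨g, s, rfl⟩ := mk_surj_left k
  rw [mk_comp_F] at hk
  obtain ⟨t, ht⟩ := mk_inv_eq_zero (isUnit_inv s) hk
  have ht' : ((t : A) • g) ≫ f = 0 := by rw [Linear.smul_comp]; exact ht
  obtain ⟨l, hl⟩ := KernelFork.IsLimit.lift' h _ ht'
  change W.obj ⟶ K at l
  replace hl : l ≫ i = (t : A) • g := hl
  refine ⟨⟨mk (Y := (F S E).obj K) l (inv t * inv s), ?_⟩⟩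
  rw [mk_comp_F]
  refine (mk_congr (X := W) (Y := (F S E).obj X) hl rfl).trans ?_
  refine (mk_smul (X := W) (Y := (F S E).obj X) (t : A) g _).trans ?_
  rw [← mul_assoc, mul_inv, one_mul]

theorem F_cokernel {K X Y : E} {f : X ⟶ Y} {p : Y ⟶ K} (w : f ≫ p = 0)
    (h : IsColimit (CokernelCofork.ofπ p w)) :
    Nonempty (IsColimit (CokernelCofork.ofπ ((F S E).map p) (F_comp_zero (S := S) w))) := by
  have : Epi p := Cofork.IsColimit.epi h
  have := F_epi (S := S) p
  refine ⟨CokernelCofork.IsColimit.ofπ' _ _ fun {W} k hk => Nonempty.some ?_⟩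
  obtain ⟨g, s, rfl⟩ := mk_surj_right k
  rw [F_comp_mk] at hk
  obtain ⟨t, ht⟩ := mk_inv_eq_zero (isUnit_inv s) hk
  have ht' : f ≫ ((t : A) • g) = 0 := by rw [Linear.comp_smul]; exact ht
  obtain ⟨l, hl⟩ := CokernelCofork.IsColimit.desc' h _ ht'
  change K ⟶ W.obj at l
  replace hl : p ≫ l = (t : A) • g := hl
  refine ⟨⟨mk (X := (F S E).obj K) l (inv t * inv s), ?_⟩⟩
  rw [F_comp_mk]
  refine (mk_congr (X := (F S E).obj Y) (Y := W) hl rfl).trans ?_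
  refine (mk_smul (X := (F S E).obj Y) (Y := W) (t : A) g _).trans ?_
  rw [← mul_assoc, mul_inv, one_mul]

instance : HasKernels (Loc S E) where
  has_limit {X Y} f := by
    obtain ⟨X', Y', g, a, b, rfl⟩ := exists_arrow_iso f
    have : HasKernel ((F S E).map g) :=
      HasLimit.mk ⟨_, (F_kernel (S := S) (kernel.condition g) (kernelIsKernel g)).some⟩
    infer_instance

instance : HasCokernels (Loc S E) where
  has_colimit {X Y} f := by
    obtain ⟨X', Y', g, a, b, rfl⟩ := exists_arrow_iso f
    have : HasCokernel ((F S E).map g) :=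
      HasColimit.mk ⟨_, (F_cokernel (S := S) (cokernel.condition g) (cokernelIsCokernel g)).some⟩
    infer_instance

instance : (F S E).EssSurj where
  mem_essImage X := ⟨X.obj, ⟨unitIsoF X 1⟩⟩

instance : HasFiniteProducts (Loc S E) :=
  (F S E).hasFiniteProducts_of_additive_of_essSurj

instance : HasBinaryBiproducts (Loc S E) := HasBinaryBiproducts.of_hasBinaryProducts

instance : HasZeroObject (Loc S E) := by
  obtain ⟨Z, hZ⟩ := (inferInstance : HasZeroObject E)
  exact ⟨(F S E).obj Z, (F S E).map_isZero hZ⟩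

instance : PreservesFiniteLimits (F S E) := by
  have : ∀ {X Y : E} (f : X ⟶ Y), PreservesLimit (parallelPair f 0) (F S E) := fun f =>
    preservesLimit_of_preserves_limit_cone (kernelIsKernel f)
      ((isLimitMapConeForkEquiv' _ (kernel.condition f)).symm
        (F_kernel (S := S) (kernel.condition f) (kernelIsKernel f)).some)
  exact Functor.preservesFiniteLimits_of_preservesKernels _

instance : PreservesFiniteColimits (F S E) := by
  have : ∀ {X Y : E} (f : X ⟶ Y), PreservesColimit (parallelPair f 0) (F S E) := fun f =>
    preservesColimit_of_preserves_colimit_cocone (cokernelIsCokernel f)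
      ((isColimitMapCoconeCoforkEquiv' _ (cokernel.condition f)).symm
        (F_cokernel (S := S) (cokernel.condition f) (cokernelIsCokernel f)).some)
  exact Functor.preservesFiniteColimits_of_preservesCokernels _

theorem F_isIso_of_epi {X Y : E} (p : X ⟶ Y) [Epi p] [Mono ((F S E).map p)] :
    IsIso ((F S E).map p) := by
  have h0 : (F S E).map (kernel.ι p) = 0 :=
    zero_of_comp_mono ((F S E).map p) (F_comp_zero (kernel.condition p))
  have hc := Abelian.epiIsCokernelOfKernel _ (kernelIsKernel p)
  exact CokernelCofork.IsColimit.isIso_π _ (F_cokernel (S := S) _ hc).some h0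

theorem F_isIso_of_mono {X Y : E} (p : X ⟶ Y) [Mono p] [Epi ((F S E).map p)] :
    IsIso ((F S E).map p) := by
  have h0 : (F S E).map (cokernel.π p) = 0 :=
    zero_of_epi_comp ((F S E).map p) (F_comp_zero (cokernel.condition p))
  have hc := Abelian.monoIsKernelOfCokernel _ (cokernelIsCokernel p)
  exact KernelFork.IsLimit.isIso_ι _ (F_kernel (S := S) _ hc).some h0

instance : IsNormalMonoCategory (Loc S E) where
  normalMonoOfMono {X Y} f hf := by
    obtain ⟨X', Y', g, a, b, hg⟩ := exists_arrow_iso f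
    let p := Abelian.factorThruImage g
    let m := Abelian.image.ι g
    have hpm : p ≫ m = g := Abelian.image.fac g
    rw [← hpm, Functor.map_comp, Category.assoc] at hg
    have : Mono ((F S E).map p) := by
      have h1 : (F S E).map p ≫ (F S E).map m ≫ b.hom = a.inv ≫ f := by
        rw [hg, Iso.inv_hom_id_assoc]
      have h2 : Mono ((F S E).map p ≫ (F S E).map m ≫ b.hom) := by rw [h1]; infer_instance
      exact mono_of_mono ((F S E).map p) ((F S E).map m ≫ b.hom)
    have := F_isIso_of_epi (S := S) p
    let hm : NormalMono ((F S E).map m) :=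
      { Z := _
        g := _
        w := _
        isLimit := (F_kernel (S := S) (cokernel.condition m)
          (Abelian.monoIsKernelOfCokernel _ (colimit.isColimit (parallelPair m 0)))).some }
    refine ⟨NormalMono.ofArrowIso hm
      (Arrow.isoMk (a ≪≫ asIso ((F S E).map p)).symm b ?_)⟩
    change (a ≪≫ asIso ((F S E).map p)).inv ≫ f = (F S E).map m ≫ b.hom
    rw [Iso.inv_comp_eq, hg]
    simp

instance : IsNormalEpiCategory (Loc S E) where
  normalEpiOfEpi {X Y} f hf := by
    obtain ⟨X', Y', g, a, b, hg⟩ := exists_arrow_iso f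
    let p := Abelian.factorThruImage g
    let m := Abelian.image.ι g
    have hpm : p ≫ m = g := Abelian.image.fac g
    rw [← hpm, Functor.map_comp, Category.assoc] at hg
    have : Epi ((F S E).map m) := by
      have h1 : (a.hom ≫ (F S E).map p) ≫ (F S E).map m = f ≫ b.inv := by
        rw [hg]; simp
      have h2 : Epi ((a.hom ≫ (F S E).map p) ≫ (F S E).map m) := by rw [h1]; infer_instance
      exact epi_of_epi (a.hom ≫ (F S E).map p) _
    have := F_isIso_of_mono (S := S) m
    let hm : NormalEpi ((F S E).map p) :=
      { W := _
        g := _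
        w := _
        isColimit := (F_cokernel (S := S) (kernel.condition p)
          (Abelian.epiIsCokernelOfKernel _ (limit.isLimit (parallelPair p 0)))).some }
    refine ⟨NormalEpi.ofArrowIso hm (Arrow.isoMk a.symm
      (asIso ((F S E).map m) ≪≫ b) ?_)⟩
    change a.inv ≫ f = (F S E).map p ≫ ((F S E).map m ≫ b.hom)
    rw [hg, Iso.inv_hom_id_assoc]

noncomputable instance : Abelian (Loc S E) where

end abelian

section monoidal

open MonoidalCategory

variable {A : Type u} [CommRing A] {S : Submonoid A}
variable {E : Type v} [Category.{w} E] [Preadditive E] [Linear A E]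
variable [MonoidalCategory E] [MonoidalPreadditive E] [MonoidalLinear A E]

/-- Left whiskering as a linear map. -/
def wl (X : E) (Y Z : E) : (Y ⟶ Z) →ₗ[A] (X ⊗ Y ⟶ X ⊗ Z) where
  toFun f := X ◁ f
  map_add' _ _ := MonoidalPreadditive.whiskerLeft_add _ _
  map_smul' _ _ := MonoidalLinear.whiskerLeft_smul _ _ _

/-- Right whiskering as a linear map. -/
def wr (X : E) (Y Z : E) : (Y ⟶ Z) →ₗ[A] (Y ⊗ X ⟶ Z ⊗ X) where
  toFun f := f ▷ X
  map_add' _ _ := MonoidalPreadditive.add_whiskerRight _ _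
  map_smul' _ _ := MonoidalLinear.smul_whiskerRight _ _ _

/-- Isomorphisms of `E` give isomorphisms of the base change. -/
noncomputable def mkIso {X Y : Loc S E} (e : X.obj ≅ Y.obj) : X ≅ Y where
  hom := mk e.hom 1
  inv := mk e.inv 1
  hom_inv_id := by rw [mk_comp, e.hom_inv_id, mul_one, mk_id]
  inv_hom_id := by rw [mk_comp, e.inv_hom_id, mul_one, mk_id]

noncomputable instance : MonoidalCategoryStruct (Loc S E) where
  tensorObj X Y := ⟨X.obj ⊗ Y.obj⟩
  whiskerLeft X {Y Z} f := LinearMap.rTensor (Localization S) (wl (A := A) X.obj Y.obj Z.obj) f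
  whiskerRight {Y Z} f X := LinearMap.rTensor (Localization S) (wr (A := A) X.obj Y.obj Z.obj) f
  tensorUnit := ⟨𝟙_ E⟩
  associator X Y Z := mkIso (α_ X.obj Y.obj Z.obj)
  leftUnitor X := mkIso (λ_ X.obj)
  rightUnitor X := mkIso (ρ_ X.obj)

theorem whiskerLeft_mk (X : Loc S E) {Y Z : Loc S E} (g : Y.obj ⟶ Z.obj) (r : Localization S) :
    X ◁ (mk g r : Y ⟶ Z) = mk (X := X ⊗ Y) (Y := X ⊗ Z) (X.obj ◁ g) r := rfl

theorem whiskerRight_mk (X : Loc S E) {Y Z : Loc S E} (g : Y.obj ⟶ Z.obj) (r : Localization S) :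
    (mk g r : Y ⟶ Z) ▷ X = mk (X := Y ⊗ X) (Y := Z ⊗ X) (g ▷ X.obj) r := rfl

theorem associator_hom (X Y Z : Loc S E) : (α_ X Y Z).hom = 
    mk (X := (X ⊗ Y) ⊗ Z) (Y := X ⊗ (Y ⊗ Z)) (α_ X.obj Y.obj Z.obj).hom 1 := rfl

theorem associator_inv (X Y Z : Loc S E) : (α_ X Y Z).inv = 
    mk (Y := (X ⊗ Y) ⊗ Z) (X := X ⊗ (Y ⊗ Z)) (α_ X.obj Y.obj Z.obj).inv 1 := rfl

theorem leftUnitor_hom (X : Loc S E) : (λ_ X).hom = 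
    mk (X := (𝟙_ (Loc S E)) ⊗ X) (λ_ X.obj).hom 1 := rfl

theorem rightUnitor_hom (X : Loc S E) : (ρ_ X).hom = 
    mk (X := X ⊗ 𝟙_ (Loc S E)) (ρ_ X.obj).hom 1 := rfl

theorem tensorObj_obj (X Y : Loc S E) : (X ⊗ Y).obj = X.obj ⊗ Y.obj := rfl
theorem tensorUnit_obj : (𝟙_ (Loc S E)).obj = 𝟙_ E := rfl

theorem tensorHom_mk {X Y Z W : Loc S E} (f : X.obj ⟶ Y.obj) (g : Z.obj ⟶ W.obj)
    (r s : Localization S) :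
    (mk f r : X ⟶ Y) ⊗ₘ (mk g s : Z ⟶ W) =
      mk (X := X ⊗ Z) (Y := Y ⊗ W) (f ⊗ₘ g) (r * s) := by
  change (mk f r : X ⟶ Y) ▷ Z ≫ Y ◁ (mk g s : Z ⟶ W) = _
  rw [whiskerLeft_mk, whiskerRight_mk, mk_comp, MonoidalCategory.tensorHom_def]

noncomputable instance : MonoidalCategory (Loc S E) where
  tensorHom_def _ _ := rfl
  id_tensorHom_id X Y := by
    rw [← mk_id, ← mk_id, tensorHom_mk, ← mk_id]
    exact mk_congr (id_tensorHom_id _ _) (mul_one _)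
  tensorHom_comp_tensorHom f₁ f₂ g₁ g₂ := by
    obtain ⟨f₁, s₁, rfl⟩ := mk_surj f₁
    obtain ⟨f₂, s₂, rfl⟩ := mk_surj f₂
    obtain ⟨g₁, t₁, rfl⟩ := mk_surj g₁
    obtain ⟨g₂, t₂, rfl⟩ := mk_surj g₂
    simp only [tensorHom_mk, mk_comp]
    exact mk_congr (tensorHom_comp_tensorHom _ _ _ _) (by ring)
  whiskerLeft_id X Y := by
    rw [← mk_id, whiskerLeft_mk, ← mk_id]
    exact mk_congr (whiskerLeft_id _ _) rfl
  id_whiskerRight X Y := by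
    rw [← mk_id, whiskerRight_mk, ← mk_id]
    exact mk_congr (id_whiskerRight _ _) rfl
  associator_naturality f₁ f₂ f₃ := by
    obtain ⟨f₁, s₁, rfl⟩ := mk_surj f₁
    obtain ⟨f₂, s₂, rfl⟩ := mk_surj f₂
    obtain ⟨f₃, s₃, rfl⟩ := mk_surj f₃
    simp only [tensorHom_mk, mk_comp, associator_hom]
    exact mk_congr (associator_naturality _ _ _) (by ring)
  leftUnitor_naturality f := by
    obtain ⟨f, s, rfl⟩ := mk_surj f
    simp only [whiskerLeft_mk, mk_comp, leftUnitor_hom]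
    exact mk_congr (leftUnitor_naturality _) (by ring)
  rightUnitor_naturality f := by
    obtain ⟨f, s, rfl⟩ := mk_surj f
    simp only [whiskerRight_mk, mk_comp, rightUnitor_hom]
    exact mk_congr (rightUnitor_naturality _) (by ring)
  pentagon W X Y Z := by
    simp only [whiskerRight_mk, whiskerLeft_mk, mk_comp, associator_hom]
    exact mk_congr (pentagon _ _ _ _) (by ring)
  triangle X Y := by
    simp only [whiskerRight_mk, whiskerLeft_mk, mk_comp, associator_hom, leftUnitor_hom,
      rightUnitor_hom]
    exact mk_congr (triangle _ _) (by ring)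

/-- The canonical functor is monoidal. -/
noncomputable instance : (F S E).Monoidal := Functor.CoreMonoidal.toMonoidal
  { εIso := Iso.refl _
    μIso X Y := Iso.refl _
    μIso_hom_natural_left f X := (Category.comp_id _).trans (Category.id_comp _).symm
    μIso_hom_natural_right X f := (Category.comp_id _).trans (Category.id_comp _).symm
    associativity X Y Z := by
      refine Eq.trans (b := mk (X := ⟨(X ⊗ Y) ⊗ Z⟩) (Y := ⟨X ⊗ Y ⊗ Z⟩) (α_ X Y Z).hom 1) ?_ ?_
      · exact (congrArg₂ CategoryStruct.comp (id_whiskerRight _ _) rfl).trans ((Category.id_comp _).trans (Category.id_comp _))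
      · refine Eq.symm ((congrArg₂ CategoryStruct.comp rfl ((congrArg₂ CategoryStruct.comp (whiskerLeft_id _ _) rfl).trans (Category.id_comp _))).trans (Category.comp_id _))
    left_unitality X := by
      exact Eq.symm ((congrArg₂ CategoryStruct.comp (id_whiskerRight _ _) rfl).trans
        ((Category.id_comp _).trans (Category.id_comp _)))
    right_unitality X := by
      exact Eq.symm ((congrArg₂ CategoryStruct.comp (whiskerLeft_id _ _) rfl).trans
        ((Category.id_comp _).trans (Category.id_comp _))) }

noncomputable instance [SymmetricCategory E] : SymmetricCategory (Loc S E) where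
  braiding X Y := mkIso (β_ X.obj Y.obj)
  braiding_naturality_right X Y Z f := by
    obtain ⟨f, s, rfl⟩ := mk_surj f
    simp only [mkIso, whiskerRight_mk, whiskerLeft_mk, mk_comp]
    exact mk_congr (BraidedCategory.braiding_naturality_right _ _) (by ring)
  braiding_naturality_left f Z := by
    obtain ⟨f, s, rfl⟩ := mk_surj f
    simp only [mkIso, whiskerRight_mk, whiskerLeft_mk, mk_comp]
    exact mk_congr (BraidedCategory.braiding_naturality_left _ _) (by ring)
  hexagon_forward X Y Z := by
    simp only [mkIso, whiskerRight_mk, whiskerLeft_mk, mk_comp, associator_hom]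
    exact mk_congr (BraidedCategory.hexagon_forward _ _ _) (by ring)
  hexagon_reverse X Y Z := by
    simp only [mkIso, whiskerRight_mk, whiskerLeft_mk, mk_comp, associator_inv]
    exact mk_congr (BraidedCategory.hexagon_reverse _ _ _) (by ring)
  symmetry X Y := by
    simp only [mkIso, mk_comp]
    rw [← mk_id]
    exact mk_congr (SymmetricCategory.symmetry _ _) (by ring)

end monoidal

end BC

/-- Let `R` be a commutative ring, `S ⊆ R` a multiplicative subset and `𝒞`
an `R`-linear abelian category.  Then `𝒞 ⊗_R S⁻¹R` is abelian and the canonical functor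
`F : 𝒞 → 𝒞 ⊗_R S⁻¹R` is exact (it preserves finite limits and finite colimits).  Moreover,
if `𝒞` is `R`-linearly symmetric monoidal, then `𝒞 ⊗_R S⁻¹R` is symmetric monoidal in a
natural way and `F` is a monoidal functor. -/
theorem base_change_of_abelian_category_along_localization
    (R : Type u) [CommRing R] (S : Submonoid R)
    (C : Type v) [Category.{w} C] [Abelian C] [Linear R C] :
    Nonempty (Abelian (BaseChange R (Localization S) C)) ∧
    Nonempty (Limits.PreservesFiniteLimits (baseChangeFunctor R (Localization S) C)) ∧
    Nonempty (Limits.PreservesFiniteColimits (baseChangeFunctor R (Localization S) C)) ∧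
    ∀ [MonoidalCategory C] [MonoidalPreadditive C] [SymmetricCategory C] [MonoidalLinear R C],
      ∃ m : MonoidalCategory (BaseChange R (Localization S) C),
        ∃ _ : @SymmetricCategory _ _ m,
          Nonempty (@Functor.Monoidal C _ _ (BaseChange R (Localization S) C) _ m
            (baseChangeFunctor R (Localization S) C)) := by
  refine ⟨⟨inferInstanceAs (Abelian (BC.Loc S C))⟩,
    ⟨inferInstanceAs (Limits.PreservesFiniteLimits (BC.F S C))⟩,
    ⟨inferInstanceAs (Limits.PreservesFiniteColimits (BC.F S C))⟩, ?_⟩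
  intro _ _ _ _
  exact ⟨inferInstanceAs (MonoidalCategory (BC.Loc S C)),
    inferInstanceAs (SymmetricCategory (BC.Loc S C)),
    ⟨inferInstanceAs (BC.F S C).Monoidal⟩⟩
end

section
/- Let R be a commutative ring, S ⊆ R a multiplicative subset, 𝒞 an R-linear abelian category, and 𝒟 an S⁻¹R-linear abelian category. If G : 𝒞 → 𝒟 is an R-linear exact functor, then the induced functor 𝒞 ⊗_R S⁻¹R → 𝒟 (agreeing with G on objects and with the S⁻¹R-linear extension of G on morphisms) is exact. -/
open CategoryTheory TensorProduct

universe w₂ w v₂ v u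

variable (R : Type u) [CommRing R] (R' : Type u) [CommRing R'] [Algebra R R']
variable (C : Type v) [Category.{w} C] [Preadditive C] [Linear R C]

variable {C}

variable (C)

section Induced

variable {C}
variable (D : Type v₂) [Category.{w₂} D] [Preadditive D] [Linear R D] [Linear R' D]

variable {D}

/-- The `R`-bilinear map `(f, r) ↦ r • G(f)` underlying the induced functor. -/
noncomputable def inducedBil (G : C ⥤ D) [G.Additive] [G.Linear R]
    (hcompat : ∀ (X Y : D) (c : R) (f : X ⟶ Y), c • f = algebraMap R R' c • f)
    (M N : C) : (M ⟶ N) →ₗ[R] R' →ₗ[R] (G.obj M ⟶ G.obj N) where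
  toFun f :=
    { toFun := fun r => r • G.map f
      map_add' := fun r s => add_smul r s _
      map_smul' := fun c r => by
        dsimp
        rw [hcompat _ _ c (r • G.map f), ← mul_smul, Algebra.smul_def] }
  map_add' f f' := by ext r; simp [smul_add]
  map_smul' c f := by
    ext r
    dsimp
    rw [G.map_smul, hcompat _ _ c (r • G.map f), hcompat _ _ c (G.map f),
      ← mul_smul, ← mul_smul, mul_comm]

/-- The functor `𝒞 ⊗_R R' → 𝒟` induced by an `R`-linear functor `G : 𝒞 → 𝒟` into an
`R'`-linear category: it agrees with `G` on objects and with the `R'`-linear extension of `G`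
on morphisms. -/
noncomputable def inducedFunctor (G : C ⥤ D) [G.Additive] [G.Linear R]
    (hcompat : ∀ (X Y : D) (c : R) (f : X ⟶ Y), c • f = algebraMap R R' c • f) :
    BaseChange R R' C ⥤ D where
  obj X := G.obj X.obj
  map {X Y} f := TensorProduct.lift (inducedBil R R' G hcompat X.obj Y.obj) f
  map_id := by
    intro X
    show TensorProduct.lift _ (𝟙 X.obj ⊗ₜ[R] (1 : R')) = _
    simp [inducedBil]
  map_comp := by
    intro X Y Z f g
    show TensorProduct.lift _ (compMap R R' _ _ _ (f ⊗ₜ[R] g)) =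
      TensorProduct.lift _ f ≫ TensorProduct.lift _ g
    induction f using TensorProduct.induction_on with
    | zero => simp
    | add f₁ f₂ h₁ h₂ =>
      simp only [add_tmul, map_add, Preadditive.add_comp, h₁, h₂]
    | tmul a r =>
      induction g using TensorProduct.induction_on with
      | zero => simp
      | add g₁ g₂ h₁ h₂ =>
        simp only [tmul_add, map_add, Preadditive.comp_add, h₁, h₂]
      | tmul b s =>
        simp only [compMap, compBilinear, inducedBil, Linear.leftComp, mul_smul,
          Linear.smul_comp, Linear.comp_smul, LinearMap.coe_comp, LinearEquiv.coe_coe,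
          Function.comp_apply, TensorProduct.tensorTensorTensorComm_tmul,
          TensorProduct.map_tmul, TensorProduct.lift.tmul, LinearMap.coe_mk,
          AddHom.coe_mk, LinearMap.mul'_apply, G.map_comp]
        exact smul_comm r s _

end Induced

section Helpers

open Limits

variable {R R' C}

/-- The morphism `f ⊗ r` of the base change. -/
noncomputable def bcHom {X Y : BaseChange R R' C} (f : X.obj ⟶ Y.obj) (r : R') : X ⟶ Y :=
  f ⊗ₜ[R] r

lemma bcHom_comp {X Y Z : BaseChange R R' C} (f : X.obj ⟶ Y.obj) (g : Y.obj ⟶ Z.obj)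
    (r s : R') : bcHom f r ≫ bcHom g s = (bcHom (f ≫ g) (r * s) : X ⟶ Z) := by
  show compMap R R' _ _ _ ((f ⊗ₜ[R] r) ⊗ₜ[R] (g ⊗ₜ[R] s)) = (f ≫ g) ⊗ₜ[R] (r * s)
  simp [compMap, compBilinear, Linear.leftComp]

noncomputable instance bcPreadditive : Preadditive (BaseChange R R' C) where
  homGroup X Y := inferInstanceAs (AddCommGroup ((X.obj ⟶ Y.obj) ⊗[R] R'))
  add_comp X Y Z f f' g := by
    show compMap R R' _ _ _ (TensorProduct.tmul R (_ + _) _) =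
      compMap R R' _ _ _ _ + compMap R R' _ _ _ _
    rw [← map_add]
    exact congrArg _ (TensorProduct.add_tmul _ _ _)
  comp_add X Y Z f g g' := by
    show compMap R R' _ _ _ (TensorProduct.tmul R _ (_ + _)) =
      compMap R R' _ _ _ _ + compMap R R' _ _ _ _
    rw [← map_add]
    exact congrArg _ (TensorProduct.tmul_add _ _ _)

lemma bcHom_zero {X Y : BaseChange R R' C} (r : R') :
    (bcHom (0 : X.obj ⟶ Y.obj) r : X ⟶ Y) = 0 :=
  TensorProduct.zero_tmul _ _

lemma bcHom_smul {X Y : BaseChange R R' C} (c : R) (f : X.obj ⟶ Y.obj) (r : R') :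
    (bcHom (c • f) r : X ⟶ Y) = bcHom f (algebraMap R R' c * r) := by
  rw [← Algebra.smul_def]
  exact TensorProduct.smul_tmul _ _ _

lemma bcHom_id (X : BaseChange R R' C) : (bcHom (𝟙 X.obj) 1 : X ⟶ X) = 𝟙 X := rfl

variable (R R' C) in
/-- The canonical functor `𝒞 ⥤ 𝒞 ⊗_R R'`. -/
noncomputable def toBC : C ⥤ BaseChange R R' C where
  obj X := ⟨X⟩
  map f := bcHom f 1
  map_id X := rfl
  map_comp f g := by rw [bcHom_comp, one_mul]

instance : (toBC R R' C).Additive where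
  map_add := TensorProduct.add_tmul _ _ _

instance : (toBC R R' C).EssSurj where
  mem_essImage Y := ⟨Y.obj, ⟨Iso.refl _⟩⟩

end Helpers

section Loc

open Limits

variable {R : Type u} [CommRing R] {S : Submonoid R}
  {C : Type v} [Category.{w} C] [Abelian C] [Linear R C]

lemma bcHom_surj {X Y : BaseChange R (Localization S) C} (f : X ⟶ Y) :
    ∃ (f₀ : X.obj ⟶ Y.obj) (s : S), f = bcHom f₀ (Localization.mk 1 s) := by
  obtain ⟨⟨m, s⟩, h⟩ := IsLocalizedModule.mk'_surjective S
    (TensorProduct.mk R (Localization S) (X.obj ⟶ Y.obj) 1)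
      (TensorProduct.comm R (X.obj ⟶ Y.obj) (Localization S) f)
  refine ⟨m, s, ?_⟩
  apply (TensorProduct.comm R (X.obj ⟶ Y.obj) (Localization S)).injective
  rw [← h]
  change IsLocalizedModule.mk' _ m s = Localization.mk 1 s ⊗ₜ[R] m
  rw [IsLocalizedModule.mk'_eq_iff, Submonoid.smul_def, TensorProduct.smul_tmul']
  simp only [TensorProduct.mk_apply]
  congr 1
  rw [Localization.smul_mk, smul_eq_mul, mul_one, Localization.mk_self]

lemma bcHom_one_eq_zero {X Y : BaseChange R (Localization S) C} (f : X.obj ⟶ Y.obj)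
    (h : (bcHom f 1 : X ⟶ Y) = 0) : ∃ s : S, (s : R) • f = 0 := by
  have := (IsLocalizedModule.eq_zero_iff S
    (TensorProduct.mk R (Localization S) (X.obj ⟶ Y.obj) 1) (m := f)).1 ?_
  · exact this
  · apply (TensorProduct.comm R (X.obj ⟶ Y.obj) (Localization S)).symm.injective
    rw [map_zero]
    exact h

lemma bcHom_eq_zero {X Y : BaseChange R (Localization S) C} (f : X.obj ⟶ Y.obj)
    {r : Localization S} (hr : IsUnit r)
    (h : (bcHom f r : X ⟶ Y) = 0) : ∃ s : S, (s : R) • f = 0 := by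
  obtain ⟨q, hq⟩ := hr.exists_right_inv
  apply bcHom_one_eq_zero (X := X) (Y := Y)
  have h2 : (bcHom f r : X ⟶ Y) ≫ (bcHom (𝟙 Y.obj) q : Y ⟶ Y) = 0 := by rw [h, zero_comp]
  rwa [bcHom_comp, Category.comp_id, hq] at h2

lemma bcHom_eq_zero_of_smul {X Y : BaseChange R (Localization S) C} (f : X.obj ⟶ Y.obj)
    (r : Localization S) (s : S) (h : (s : R) • f = 0) : (bcHom f r : X ⟶ Y) = 0 := by
  obtain ⟨q, hq⟩ := (IsLocalization.map_units (Localization S) s).exists_right_inv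
  have : (bcHom f r : X ⟶ Y) = bcHom ((s : R) • f) (q * r) := by
    rw [bcHom_smul, ← mul_assoc, hq, one_mul]
  rw [this, h, bcHom_zero]

lemma isUnit_mk (s : S) : IsUnit (Localization.mk (1 : R) s) :=
  IsUnit.of_mul_eq_one (Localization.mk (s : R) 1) (by
    rw [Localization.mk_mul, one_mul, mul_one, Localization.mk_self])

lemma bcHom_mono {X Y : BaseChange R (Localization S) C} (f : X.obj ⟶ Y.obj) [Mono f] :
    Mono (bcHom f 1 : X ⟶ Y) := by
  refine Preadditive.mono_of_cancel_zero _ fun {W} g hg => ?_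
  obtain ⟨g, s, rfl⟩ := bcHom_surj g
  rw [bcHom_comp, mul_one] at hg
  obtain ⟨u, hu⟩ := bcHom_eq_zero _ (isUnit_mk s) hg
  rw [← Linear.smul_comp] at hu
  exact bcHom_eq_zero_of_smul _ _ u (zero_of_comp_mono _ hu)

lemma bcHom_epi {X Y : BaseChange R (Localization S) C} (f : X.obj ⟶ Y.obj) [Epi f] :
    Epi (bcHom f 1 : X ⟶ Y) := by
  refine Preadditive.epi_of_cancel_zero _ fun {W} g hg => ?_
  obtain ⟨g, s, rfl⟩ := bcHom_surj g
  rw [bcHom_comp, one_mul] at hg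
  obtain ⟨u, hu⟩ := bcHom_eq_zero _ (isUnit_mk s) hg
  rw [← Linear.comp_smul] at hu
  exact bcHom_eq_zero_of_smul _ _ u (zero_of_epi_comp _ hu)

lemma bc_ker_w {X Y : BaseChange R (Localization S) C} (f : X.obj ⟶ Y.obj)
    (r : Localization S) :
    (bcHom (kernel.ι f) 1 : (⟨kernel f⟩ : BaseChange R (Localization S) C) ⟶ X) ≫
      (bcHom f r : X ⟶ Y) = 0 := by
  rw [bcHom_comp, kernel.condition, bcHom_zero]

lemma bc_coker_w {X Y : BaseChange R (Localization S) C} (f : X.obj ⟶ Y.obj)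
    (r : Localization S) :
    (bcHom f r : X ⟶ Y) ≫
      (bcHom (cokernel.π f) 1 : Y ⟶ (⟨cokernel f⟩ : BaseChange R (Localization S) C)) = 0 := by
  rw [bcHom_comp, cokernel.condition, bcHom_zero]

/-- The kernel in `𝒞` is a kernel in the base change. -/
noncomputable def bcKer {X Y : BaseChange R (Localization S) C} (f : X.obj ⟶ Y.obj)
    {r : Localization S} (hr : IsUnit r) :
    IsLimit (KernelFork.ofι _ (bc_ker_w (X := X) (Y := Y) f r)) := by
  have := bcHom_mono (X := (⟨kernel f⟩ : BaseChange R (Localization S) C)) (Y := X) (kernel.ι f)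
  refine KernelFork.IsLimit.ofι' _ _ fun {A} k hk => Classical.choice ?_
  obtain ⟨k, s, rfl⟩ := bcHom_surj k
  rw [bcHom_comp] at hk
  obtain ⟨u, hu⟩ := bcHom_eq_zero _ ((isUnit_mk s).mul hr) hk
  rw [← Linear.smul_comp] at hu
  obtain ⟨q, hq⟩ := (IsLocalization.map_units (Localization S) u).exists_right_inv
  refine ⟨⟨bcHom (kernel.lift f _ hu) (q * Localization.mk 1 s), ?_⟩⟩
  rw [bcHom_comp, mul_one, kernel.lift_ι, bcHom_smul, ← mul_assoc, hq, one_mul]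

/-- The cokernel in `𝒞` is a cokernel in the base change. -/
noncomputable def bcCoker {X Y : BaseChange R (Localization S) C} (f : X.obj ⟶ Y.obj)
    {r : Localization S} (hr : IsUnit r) :
    IsColimit (CokernelCofork.ofπ _ (bc_coker_w (X := X) (Y := Y) f r)) := by
  have := bcHom_epi (X := Y) (Y := (⟨cokernel f⟩ : BaseChange R (Localization S) C)) (cokernel.π f)
  refine CokernelCofork.IsColimit.ofπ' _ _ fun {A} k hk => Classical.choice ?_
  obtain ⟨k, s, rfl⟩ := bcHom_surj k
  rw [bcHom_comp] at hk
  obtain ⟨u, hu⟩ := bcHom_eq_zero _ (hr.mul (isUnit_mk s)) hk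
  rw [← Linear.comp_smul] at hu
  obtain ⟨q, hq⟩ := (IsLocalization.map_units (Localization S) u).exists_right_inv
  refine ⟨⟨bcHom (cokernel.desc f _ hu) (q * Localization.mk 1 s), ?_⟩⟩
  rw [bcHom_comp, one_mul, cokernel.π_desc, bcHom_smul, ← mul_assoc, hq, one_mul]

instance : HasKernels (BaseChange R (Localization S) C) where
  has_limit f := by
    obtain ⟨f, s, rfl⟩ := bcHom_surj f
    exact ⟨⟨⟨_, bcKer f (isUnit_mk s)⟩⟩⟩

instance : HasCokernels (BaseChange R (Localization S) C) where
  has_colimit f := by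
    obtain ⟨f, s, rfl⟩ := bcHom_surj f
    exact ⟨⟨⟨_, bcCoker f (isUnit_mk s)⟩⟩⟩

instance : HasZeroObject (BaseChange R (Localization S) C) :=
  (toBC R (Localization S) C).hasZeroObject_of_additive

instance : HasFiniteProducts (BaseChange R (Localization S) C) :=
  (toBC R (Localization S) C).hasFiniteProducts_of_additive_of_essSurj

instance : HasBinaryBiproducts (BaseChange R (Localization S) C) :=
  HasBinaryBiproducts.of_hasBinaryProducts

instance : HasFiniteCoproducts (BaseChange R (Localization S) C) :=
  have := HasFiniteBiproducts.of_hasFiniteProducts (C := BaseChange R (Localization S) C)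
  inferInstance

instance : HasEqualizers (BaseChange R (Localization S) C) :=
  Preadditive.hasEqualizers_of_hasKernels

instance : HasCoequalizers (BaseChange R (Localization S) C) :=
  Preadditive.hasCoequalizers_of_hasCokernels

variable {D : Type v₂} [Category.{w₂} D] [Abelian D] [Linear R D] [Linear (Localization S) D]
    (hcompat : ∀ (X Y : D) (c : R) (f : X ⟶ Y),
      c • f = algebraMap R (Localization S) c • f)
    (G : C ⥤ D) [G.Additive] [G.Linear R]

instance : (inducedFunctor R (Localization S) G hcompat).Additive where
  map_add := map_add (TensorProduct.lift (inducedBil R (Localization S) G hcompat _ _)) _ _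

lemma induced_map_bcHom {X Y : BaseChange R (Localization S) C} (f : X.obj ⟶ Y.obj)
    (r : Localization S) :
    (inducedFunctor R (Localization S) G hcompat).map (bcHom f r : X ⟶ Y) = r • G.map f :=
  TensorProduct.lift.tmul (f' := inducedBil R (Localization S) G hcompat X.obj Y.obj) f r

lemma comp_unit_smul {A : Type u} [CommRing A] [Linear A D] {q r : A} (hq : r * q = 1)
    {X Y Z : D} (φ : X ⟶ Y) (f : Y ⟶ Z) : φ ≫ f = 0 ↔ φ ≫ (r • f) = 0 := by
  rw [Linear.comp_smul]
  constructor
  · intro h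
    rw [h, smul_zero]
  · intro h
    have h2 := congrArg (q • ·) h
    simpa [smul_smul, mul_comm q, hq] using h2

lemma unit_smul_comp {A : Type u} [CommRing A] [Linear A D] {q r : A} (hq : r * q = 1)
    {X Y Z : D} (φ : Y ⟶ Z) (f : X ⟶ Y) : f ≫ φ = 0 ↔ (r • f) ≫ φ = 0 := by
  rw [Linear.smul_comp]
  constructor
  · intro h
    rw [h, smul_zero]
  · intro h
    have h2 := congrArg (q • ·) h
    simpa [smul_smul, mul_comm q, hq] using h2

lemma induced_preserves_ker [PreservesFiniteLimits G]
    {X Y : BaseChange R (Localization S) C} (f : X ⟶ Y) :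
    PreservesLimit (parallelPair f 0) (inducedFunctor R (Localization S) G hcompat) := by
  obtain ⟨f, s, rfl⟩ := bcHom_surj f
  obtain ⟨q, hq⟩ := (isUnit_mk s).exists_right_inv
  refine preservesLimit_of_preserves_limit_cone (bcKer f (isUnit_mk s)) ?_
  refine (KernelFork.isLimitMapConeEquiv _ _).symm ?_
  have hG := KernelFork.mapIsLimit _ (kernelIsKernel f) G
  refine IsLimit.ofIsoLimit (KernelFork.isLimitOfIsLimitOfIff' hG
    ((inducedFunctor R (Localization S) G hcompat).map (bcHom f (Localization.mk 1 s) : X ⟶ Y))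
    ?_) ?_
  · intro W φ
    rw [induced_map_bcHom]
    exact comp_unit_smul hq φ (G.map f)
  · refine Fork.ext (Iso.refl _) ?_
    have := induced_map_bcHom hcompat G (X := ⟨kernel f⟩) (Y := X) (kernel.ι f) 1
    rw [one_smul] at this
    exact (Category.id_comp _).trans this

lemma induced_preserves_coker [PreservesFiniteColimits G]
    {X Y : BaseChange R (Localization S) C} (f : X ⟶ Y) :
    PreservesColimit (parallelPair f 0) (inducedFunctor R (Localization S) G hcompat) := by
  obtain ⟨f, s, rfl⟩ := bcHom_surj f
  obtain ⟨q, hq⟩ := (isUnit_mk s).exists_right_inv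
  refine preservesColimit_of_preserves_colimit_cocone (bcCoker f (isUnit_mk s)) ?_
  refine (CokernelCofork.isColimitMapCoconeEquiv _ _).symm ?_
  have hG := CokernelCofork.mapIsColimit _ (cokernelIsCokernel f) G
  refine IsColimit.ofIsoColimit (CokernelCofork.isColimitOfIsColimitOfIff' hG
    ((inducedFunctor R (Localization S) G hcompat).map (bcHom f (Localization.mk 1 s) : X ⟶ Y))
    ?_) ?_
  · intro W φ
    rw [induced_map_bcHom]
    exact unit_smul_comp hq φ (G.map f)
  · refine Cofork.ext (Iso.refl _) ?_
    have := induced_map_bcHom hcompat G (X := Y) (Y := ⟨cokernel f⟩) (cokernel.π f) 1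
    rw [one_smul] at this
    exact (Category.comp_id _).trans this.symm

end Loc

/-- Let `R` be a commutative ring, `S ⊆ R` a multiplicative subset, `𝒞` an
`R`-linear abelian category and `𝒟` an `S⁻¹R`-linear abelian category.  If `G : 𝒞 → 𝒟` is an
`R`-linear exact functor, then the induced functor `𝒞 ⊗_R S⁻¹R → 𝒟` (agreeing with `G` on
objects and with the `S⁻¹R`-linear extension of `G` on morphisms) is exact. -/
theorem induced_functor_on_base_change_is_exact
    (R : Type u) [CommRing R] (S : Submonoid R)
    (C : Type v) [Category.{w} C] [Abelian C] [Linear R C]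
    (D : Type v₂) [Category.{w₂} D] [Abelian D] [Linear R D] [Linear (Localization S) D]
    (hcompat : ∀ (X Y : D) (c : R) (f : X ⟶ Y),
      c • f = algebraMap R (Localization S) c • f)
    (G : C ⥤ D) [G.Additive] [G.Linear R]
    [Limits.PreservesFiniteLimits G] [Limits.PreservesFiniteColimits G] :
    Nonempty
      (Limits.PreservesFiniteLimits (inducedFunctor R (Localization S) G hcompat)) ∧
    Nonempty
      (Limits.PreservesFiniteColimits (inducedFunctor R (Localization S) G hcompat)) := by
  have := fun {X Y} f => induced_preserves_ker hcompat G (X := X) (Y := Y) f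
  have := fun {X Y} f => induced_preserves_coker hcompat G (X := X) (Y := Y) f
  exact ⟨⟨Functor.preservesFiniteLimits_of_preservesKernels _⟩,
    ⟨Functor.preservesFiniteColimits_of_preservesCokernels _⟩⟩
end

section
/- Let k be a perfect field of characteristic p > 0, W = W(k) its ring of Witt vectors, and W_n = W/p^nW. Let A be a smooth k-algebra (so X = Spec A is a smooth affine k-scheme). Then there exists a W-algebra B which is flat over W and p-adically complete, together with an isomorphism B ⊗_W k ≅ A of k-algebras, such that B/p^nB is a smooth W_n-algebra for every n ≥ 1; moreover such a B is unique up to isomorphism of W-algebras compatible with the identification modulo p. -/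
universe u

/-- The reduction `R/pⁿ → B/pⁿ` of a ring homomorphism `f : R → B`. -/
noncomputable def reduceModPn (p : ℕ) {R B : Type u} [CommRing R] [CommRing B]
    (f : R →+* B) (n : ℕ) :
    (R ⧸ Ideal.span {(p : R) ^ n}) →+* (B ⧸ Ideal.span {(p : B) ^ n}) :=
  Ideal.quotientMap _ f (Ideal.span_le.mpr (by
    simp only [Set.singleton_subset_iff, SetLike.mem_coe, Ideal.mem_comap, map_pow, map_natCast]
    exact Ideal.subset_span (Set.mem_singleton _)))

/-- A lift of a `k`-algebra `A` to a flat, `p`-adically complete `W(k)`-algebra `B` with an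
identification `B/pB ≅ A` (compatible with the residue map `W(k) → k`, given by the `0`-th
ghost component), such that every reduction `B/pⁿB` is a smooth `W(k)/pⁿ`-algebra. -/
structure WittLift (p : ℕ) [Fact p.Prime] (k : Type u) [Field k] [CharP k p] [PerfectRing k p]
    (A : Type u) [CommRing A] [Algebra k A] : Type (u + 1) where
  B : Type u
  [commRing : CommRing B]
  [alg : Algebra (WittVector p k) B]
  flat : Module.Flat (WittVector p k) B
  complete : IsAdicComplete (Ideal.span {(p : B)}) B
  equiv : (B ⧸ Ideal.span {(p : B)}) ≃+* A
  compat : ∀ w : WittVector p k,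
    equiv (Ideal.Quotient.mk _ (algebraMap (WittVector p k) B w)) =
      algebraMap k A (WittVector.ghostComponent 0 w)
  smooth : ∀ n : ℕ, 1 ≤ n →
    letI : Algebra (WittVector p k ⧸ Ideal.span {(p : WittVector p k) ^ n})
        (B ⧸ Ideal.span {(p : B) ^ n}) :=
      (reduceModPn p (algebraMap (WittVector p k) B) n).toAlgebra
    Algebra.Smooth (WittVector p k ⧸ Ideal.span {(p : WittVector p k) ^ n})
      (B ⧸ Ideal.span {(p : B) ^ n})

section
variable {p : ℕ} [Fact p.Prime] {k : Type u} [Field k] [CharP k p] [PerfectRing k p]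
    {A : Type u} [CommRing A] [Algebra k A]

instance (L : WittLift p k A) : CommRing L.B := L.commRing
instance (L : WittLift p k A) : Algebra (WittVector p k) L.B := L.alg

end


theorem wl_artin_rees {P : Type*} [CommRing P] [IsNoetherianRing P] (J : Ideal P) (a : P) :
    ∃ m : ℕ, ∀ z, z ∈ J ^ m → z ∈ Ideal.span {a} → ∃ s ∈ J, z = a * s := by
  obtain ⟨k, hk⟩ := Ideal.exists_pow_inf_eq_pow_smul J (M := P) (Ideal.span {a})
  refine ⟨k + 1, fun z hz hza => ?_⟩
  have h := hk (k + 1) (by omega)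
  have hz' : z ∈ (J ^ (k+1) • (⊤ : Submodule P P) ⊓ Ideal.span {a}) := by
    refine ⟨by simpa using hz, hza⟩
  rw [h] at hz'
  have h2 : z ∈ J * Ideal.span {a} := by
    have : J ^ (k+1-k) • (J ^ k • (⊤ : Submodule P P) ⊓ Ideal.span {a}) ≤ J * Ideal.span {a} := by
      rw [show k + 1 - k = 1 by omega, pow_one]
      exact Ideal.mul_mono_right inf_le_right
    exact this hz'
  rw [Ideal.mem_mul_span_singleton] at h2
  obtain ⟨s, hs, rfl⟩ := h2
  exact ⟨s, hs, mul_comm _ _⟩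

theorem wl_mem_sup {P : Type*} [CommRing P] {T : Ideal P} {a x : P} :
    x ∈ T ⊔ Ideal.span {a} ↔ ∃ t ∈ T, ∃ y, x = t + a * y := by
  rw [Submodule.mem_sup]
  constructor
  · rintro ⟨t, ht, z, hz, rfl⟩
    obtain ⟨y, rfl⟩ := Ideal.mem_span_singleton'.1 hz
    exact ⟨t, ht, y, by ring⟩
  · rintro ⟨t, ht, y, rfl⟩
    exact ⟨t, ht, _, Ideal.mul_mem_right _ _ (Ideal.mem_span_singleton_self a), rfl⟩

/-- Data of a good ideal at level `m + 1`. -/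
structure WLGood {P : Type*} [CommRing P] (π : P) (J : Ideal P) (m : ℕ) (T : Ideal P) : Prop where
  le : T ≤ J
  ge : J ≤ T ⊔ Ideal.span {π}
  b : ∀ y, π * y ∈ T → y ∈ T ⊔ Ideal.span {π ^ m}
  c : ∀ y ∈ J, π ^ m * y ∈ T

/-- contracting endomorphism adapted to `T` -/
structure WLEndo {P : Type*} [CommRing P] (π : P) (J T : Ideal P) (φ : P →+* P) : Prop where
  pi : φ π = π
  id : ∀ x, φ x - x ∈ T
  sq : ∀ x ∈ J, φ x ∈ J ^ 2 ⊔ Ideal.span {π}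

section
variable {P : Type*} [CommRing P] {π : P} {J T : Ideal P} {m : ℕ} {φ : P →+* P}

theorem WLGood.pow_mem (h : WLGood π J m T) (hπ : π ∈ J) : π ^ (m + 1) ∈ T := by
  rw [pow_succ]; exact h.c _ hπ

theorem WLEndo.map_mem (e : WLEndo π J T φ) {K : Ideal P} (hK : T ≤ K) {x : P} :
    φ x ∈ K ↔ x ∈ K := by
  have := hK (e.id x)
  constructor
  · intro h; simpa using K.sub_mem h this
  · intro h; simpa using K.add_mem this h

/-- `φ(T) ⊂ J T + π^(m+1)`. -/
theorem WLEndo.map_T (h : WLGood π J m T) (e : WLEndo π J T φ) (hπ : π ∈ J) {t : P} (ht : t ∈ T) :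
    φ t ∈ J * T ⊔ Ideal.span {π ^ (m + 1)} := by
  have h1 : φ t ∈ T := (e.map_mem le_rfl).2 ht
  have h2 : J ^ 2 ⊔ Ideal.span {π} ≤ J * T ⊔ Ideal.span {π} := by
    refine sup_le ?_ le_sup_right
    rw [pow_two]
    calc J * J ≤ J * (T ⊔ Ideal.span {π}) := Ideal.mul_mono_right h.ge
      _ = J * T ⊔ J * Ideal.span {π} := Ideal.mul_sup _ _ _
      _ ≤ _ := sup_le_sup_left Ideal.mul_le_right _
  obtain ⟨u, hu, y, hy⟩ := wl_mem_sup.1 (h2 (e.sq t (h.le ht)))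
  have h3 : π * y ∈ T := by
    have : π * y = φ t - u := by rw [hy]; ring
    rw [this]; exact T.sub_mem h1 (Ideal.mul_le_right hu)
  obtain ⟨t', ht', w, hw⟩ := wl_mem_sup.1 (h.b y h3)
  refine wl_mem_sup.2 ⟨u + π * t', Ideal.add_mem _ hu (Ideal.mul_mem_mul hπ ht'), w, ?_⟩
  rw [hy, hw]; ring

theorem WLEndo.map_pow (h : WLGood π J m T) (e : WLEndo π J T φ) (hπ : π ∈ J) (k : ℕ) {z : P}
    (hz : z ∈ J ^ (k + 1) * T) : ∃ u ∈ J ^ (k + 2) * T, ∃ s ∈ J, φ z = u + π ^ (m + 1) * s := by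
  have key : (J ^ (k + 1) * T) ≤ (J ^ (k + 2) * T ⊔ J * Ideal.span {π ^ (m + 1)}).comap φ := by
    rw [Ideal.mul_le]
    intro a ha b hb
    rw [Ideal.mem_comap, map_mul]
    have h1 : φ a ∈ J ^ (k + 1) := by
      have : J ^ (k + 1) ≤ (J ^ (k + 1)).comap φ := by
        refine le_trans ?_ (Ideal.le_comap_pow φ (k + 1))
        exact Ideal.pow_right_mono (fun x hx => (e.map_mem h.le).2 hx) _
      exact this ha
    have h2 := Ideal.mul_mem_mul h1 (e.map_T h hπ hb)
    rw [Ideal.mul_sup, ← mul_assoc] at h2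
    have h3 : J ^ (k + 1) * Ideal.span {π ^ (m + 1)} ≤ J * Ideal.span {π ^ (m + 1)} :=
      Ideal.mul_mono_left (Ideal.pow_le_self (by omega))
    have h5 : J ^ (k + 1) * J * T = J ^ (k + 2) * T := by
      rw [← pow_succ]
    exact (sup_le_sup h5.le h3) h2
  obtain ⟨u, hu, v, hv, huv⟩ := Submodule.mem_sup.1 (key hz)
  rw [Ideal.mem_mul_span_singleton] at hv
  obtain ⟨s, hs, rfl⟩ := hv
  exact ⟨u, hu, s, hs, by rw [← huv, mul_comm s]⟩

theorem WLEndo.star [IsNoetherianRing P] (h : WLGood π J m T) (e : WLEndo π J T φ) (hπ : π ∈ J)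
    (hreg : ∀ x, π * x = 0 → x = 0) {y : P} (hz : π ^ (m + 1) * y ∈ J * T) : y ∈ J := by
  have hregn : ∀ n x, π ^ n * x = 0 → x = 0 := by
    intro n
    induction n with
    | zero => intro x hx; simpa using hx
    | succ n ih => intro x hx; exact ih x (hreg _ (by rw [← hx]; ring))
  have key : ∀ k, ∃ w ∈ J ^ (k + 1) * T, ∃ s ∈ J, π ^ (m + 1) * y = w + π ^ (m + 1) * s := by
    intro k
    induction k with
    | zero => exact ⟨_, by simpa using hz, 0, J.zero_mem, by ring⟩
    | succ k ih =>
      obtain ⟨w, hw, s, hs, hws⟩ := ih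
      obtain ⟨u, hu, s', hs', h'⟩ := e.map_pow h hπ k hw
      have hw' : w = π ^ (m + 1) * (y - s) := by rw [mul_sub, hws]; ring
      have h5 : φ w = π ^ (m + 1) * φ (y - s) := by rw [hw', map_mul, _root_.map_pow, e.pi]
      refine ⟨u, hu, s' + s - (φ (y - s) - (y - s)), ?_, ?_⟩
      · exact J.sub_mem (J.add_mem hs' hs) (h.le (e.id _))
      · rw [h'] at h5
        linear_combination hws + hw' - h5
  obtain ⟨N, hN⟩ := wl_artin_rees J (π ^ (m + 1))
  obtain ⟨w, hw, s, hs, hws⟩ := key N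
  have hw' : w = π ^ (m + 1) * (y - s) := by rw [mul_sub, hws]; ring
  obtain ⟨s', hs', h'⟩ := hN w (Ideal.pow_le_pow_right (Nat.le_succ N) (Ideal.mul_le_left hw))
    (by rw [hw']; exact Ideal.mul_mem_right _ _ (Ideal.mem_span_singleton_self _))
  have : y - s - s' = 0 := hregn (m + 1) _ (by linear_combination h' - hw')
  have : y = s + s' := by linear_combination this
  rw [this]; exact J.add_mem hs hs'

theorem WLGood.step [IsNoetherianRing P] (h : WLGood π J m T) (e : WLEndo π J T φ) (hπ : π ∈ J)
    (hreg : ∀ x, π * x = 0 → x = 0) :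
    ∃ T' : Ideal P, WLGood π J (m + 1) T' ∧ T' ≤ T ∧ T ≤ T' ⊔ Ideal.span {π ^ (m + 1)} ∧
      ∀ y, π * y ∈ T' ↔ y ∈ T := by
  let T' : Ideal P := T ⊓ (J * T).comap φ
  have hJT : J * T ≤ T' := by
    refine le_inf Ideal.mul_le_right ?_
    rw [Ideal.mul_le]
    intro a ha b hb
    rw [Ideal.mem_comap, map_mul]
    exact Ideal.mul_mem_mul ((e.map_mem h.le).2 ha) ((e.map_mem le_rfl).2 hb)
  have hpow := h.pow_mem hπ
  have hle : T' ≤ T := inf_le_left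
  have hge : T ≤ T' ⊔ Ideal.span {π ^ (m + 1)} := by
    intro t ht
    obtain ⟨u, hu, y, hy⟩ := wl_mem_sup.1 (e.map_T h hπ ht)
    refine wl_mem_sup.2 ⟨t - π ^ (m + 1) * y, ⟨?_, ?_⟩, y, by ring⟩
    · exact T.sub_mem ht (T.mul_mem_right _ hpow)
    · rw [SetLike.mem_coe, Ideal.mem_comap, map_sub, map_mul, _root_.map_pow, e.pi, hy]
      have : u + π ^ (m + 1) * y - π ^ (m + 1) * φ y = u - (φ y - y) * π ^ (m + 1) := by ring
      rw [this]
      exact Ideal.sub_mem _ hu (Ideal.mul_mem_mul (h.le (e.id _)) hpow)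
  have hint : ∀ y, π ^ (m + 1) * y ∈ T' → y ∈ J := by
    intro y hy
    have h1 := hy.2
    rw [SetLike.mem_coe, Ideal.mem_comap, map_mul, _root_.map_pow, e.pi] at h1
    exact (e.map_mem h.le).1 (e.star h hπ hreg h1)
  have hp : ∀ y, π * y ∈ T' → y ∈ T := by
    intro y hy
    obtain ⟨t, ht, w, rfl⟩ := wl_mem_sup.1 (h.b y (hle hy))
    have h1 : π ^ (m + 1) * w ∈ T' := by
      have : π ^ (m + 1) * w = π * (t + π ^ m * w) - π * t := by ring
      rw [this]
      exact T'.sub_mem hy (hJT (Ideal.mul_mem_mul hπ ht))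
    exact T.add_mem ht (h.c _ (hint _ h1))
  refine ⟨T', ⟨hle.trans h.le, ?_, fun y hy => hge (hp y hy), ?_⟩, hle, hge, fun y => ⟨hp y, ?_⟩⟩
  · refine h.ge.trans (sup_le (hge.trans (sup_le_sup_left ?_ _)) le_sup_right)
    rw [Ideal.span_singleton_le_span_singleton]
    exact dvd_pow_self _ (by omega)
  · intro y hy
    rw [mul_comm]
    exact hJT (Ideal.mul_mem_mul hy hpow)
  · intro hy
    exact hJT (Ideal.mul_mem_mul hπ hy)

/-- A power of `φ` maps `T` to `T² + π^(m+1)`. -/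
theorem WLGood.exists_iter (h : WLGood π J m T) (e : WLEndo π J T φ) (hπ : π ∈ J) :
    ∀ t ∈ T, φ^[m + 1] t ∈ T ^ 2 ⊔ Ideal.span {π ^ (m + 1)} := by
  have hpow := h.pow_mem hπ
  have key : ∀ k, ∀ t ∈ T, φ^[k] t ∈ J ^ k * T ⊔ Ideal.span {π ^ (m + 1)} := by
    intro k
    induction k with
    | zero => intro t ht; simpa using (le_sup_left : T ≤ T ⊔ Ideal.span {π ^ (m + 1)}) ht
    | succ k ih =>
      intro t ht
      rw [Function.iterate_succ_apply']
      obtain ⟨u, hu, y, hy⟩ := wl_mem_sup.1 (ih t ht)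
      rw [hy, map_add, map_mul, _root_.map_pow, e.pi]
      refine Ideal.add_mem _ ?_ (Ideal.mem_sup_right
        (Ideal.mul_mem_right _ _ (Ideal.mem_span_singleton_self _)))
      rcases k with _ | k
      · simpa using e.map_T h hπ (by simpa using hu)
      · obtain ⟨v, hv, s, hs, h'⟩ := e.map_pow h hπ k hu
        exact wl_mem_sup.2 ⟨v, hv, s, h'⟩
  have hJ : J ^ (m + 1) ≤ T := by
    calc J ^ (m + 1) ≤ (T ⊔ Ideal.span {π}) ^ (m + 1) := Ideal.pow_right_mono h.ge _
      _ ≤ T ⊔ (Ideal.span {π}) ^ (m + 1) := by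
        have : ∀ n, (T ⊔ Ideal.span {π}) ^ n ≤ T ⊔ (Ideal.span {π}) ^ n := by
          intro n
          induction n with
          | zero => simp
          | succ n ih =>
            rw [pow_succ, pow_succ]
            refine (Ideal.mul_mono_left ih).trans ?_
            rw [Ideal.sup_mul, Ideal.mul_sup (Ideal.span {π} ^ n)]
            refine sup_le (Ideal.mul_le_left.trans le_sup_left) (sup_le_sup_right Ideal.mul_le_right _)
        exact this _
      _ ≤ T := by
        rw [Ideal.span_singleton_pow]
        exact sup_le le_rfl ((Ideal.span_singleton_le_iff_mem _).2 hpow)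
  intro t ht
  have h6 : J ^ (m + 1) * T ≤ T ^ 2 := by
    rw [pow_two]
    exact Ideal.mul_mono_left hJ
  exact sup_le_sup_right h6 _ (key (m + 1) t ht)

end

/-- The tower of ideals. -/
theorem wl_tower {P : Type*} [CommRing P] [IsNoetherianRing P] (π : P) (J : Ideal P) (hπ : π ∈ J)
    (hreg : ∀ x, π * x = 0 → x = 0) (Q : (P →+* P) → Prop)
    (H : ∀ T : Ideal P, T ≤ J → J ≤ T ⊔ Ideal.span {π} → ∃ φ : P →+* P, Q φ ∧ WLEndo π J T φ) :
    ∃ T : ℕ → Ideal P, T 0 = ⊤ ∧ T 1 = J ∧ (∀ n, T (n + 1) ≤ T n) ∧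
      (∀ n, T n ≤ T (n + 1) ⊔ Ideal.span {π ^ n}) ∧ (∀ n y, π * y ∈ T (n + 1) ↔ y ∈ T n) ∧
      ∀ n, ∃ φ : P →+* P, Q φ ∧ (∀ x, φ x - x ∈ T (n + 1)) ∧
        ∀ t ∈ T (n + 1), φ^[n + 1] t ∈ T (n + 1) ^ 2 ⊔ Ideal.span {π ^ (n + 1)} := by
  have h0 : WLGood π J 0 J := ⟨le_rfl, le_sup_left, fun y _ => by simp, fun y hy => by simpa using hy⟩
  have hstep : ∀ m (T : {T // WLGood π J m T}), ∃ T' : {T // WLGood π J (m + 1) T},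
      T'.1 ≤ T.1 ∧ T.1 ≤ T'.1 ⊔ Ideal.span {π ^ (m + 1)} ∧ ∀ y, π * y ∈ T'.1 ↔ y ∈ T.1 := by
    rintro m ⟨T, hT⟩
    obtain ⟨φ, -, e⟩ := H T hT.le hT.ge
    obtain ⟨T', h1, h2⟩ := hT.step e hπ hreg
    exact ⟨⟨T', h1⟩, h2⟩
  choose F hF using hstep
  let S : (m : ℕ) → {T // WLGood π J m T} := fun m => Nat.rec ⟨J, h0⟩ (fun m T => F m T) m
  refine ⟨fun n => Nat.casesOn n ⊤ fun m => (S m).1, rfl, rfl, ?_, ?_, ?_, ?_⟩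
  · rintro (_ | n)
    · exact le_top
    · exact (hF n (S n)).1
  · rintro (_ | n)
    · simp
    · exact (hF n (S n)).2.1
  · rintro (_ | n) y
    · simpa [S] using J.mul_mem_right _ hπ
    · exact (hF n (S n)).2.2 y
  · intro n
    obtain ⟨φ, hQ, e⟩ := H _ (S n).2.le (S n).2.ge
    exact ⟨φ, hQ, e.id, (S n).2.exists_iter e hπ⟩

/-- The inverse limit of `P / T n`. -/
def wlLim (R : Type u) {P : Type u} [CommRing R] [CommRing P] [Algebra R P] (T : ℕ → Ideal P)
    (hT : ∀ n, T (n + 1) ≤ T n) : Subalgebra R (∀ n, P ⧸ T n) where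
  carrier := {f | ∀ n, Ideal.Quotient.factor (hT n) (f (n + 1)) = f n}
  mul_mem' := fun ha hb n => by simp [ha n, hb n]
  add_mem' := fun ha hb n => by simp [ha n, hb n]
  algebraMap_mem' := fun r n => rfl

theorem wl_limit (R : Type u) {P : Type u} [CommRing R] [CommRing P] [Algebra R P] (p : ℕ)
    (T : ℕ → Ideal P) (h0 : T 0 = ⊤) (hT : ∀ n, T (n + 1) ≤ T n)
    (hg : ∀ n, T n ≤ T (n + 1) ⊔ Ideal.span {(p : P) ^ n})
    (hb : ∀ n (y : P), (p : P) * y ∈ T (n + 1) ↔ y ∈ T n) :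
    ∃ (B : Type u) (_ : CommRing B) (_ : Algebra R B) (ρ : P →ₐ[R] B),
      (∀ b : B, (p : B) * b = 0 → b = 0) ∧ IsAdicComplete (Ideal.span {(p : B)}) B ∧
      (∀ n b, ∃ x, b - ρ x ∈ Ideal.span {(p : B) ^ n}) ∧
      (∀ n x, ρ x ∈ Ideal.span {(p : B) ^ n} ↔ x ∈ T n) := by
  let B := wlLim R T hT
  have hcomp : ∀ (b : B) n x, b.1 (n + 1) = Ideal.Quotient.mk (T (n+1)) x →
      b.1 n = Ideal.Quotient.mk (T n) x := by
    intro b n x hx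
    rw [← b.2 n, hx]; rfl
  have hanti : Antitone T := antitone_nat_of_succ_le hT
  have hcomp' : ∀ (b : B) {m n} x, n ≤ m → b.1 m = Ideal.Quotient.mk (T m) x →
      b.1 n = Ideal.Quotient.mk (T n) x := by
    intro b m n x hnm
    induction m, hnm using Nat.le_induction with
    | base => exact id
    | succ m hm ih => intro h; exact ih (hcomp b m x h)
  have hext : ∀ a b : B, (∀ n, a.1 n = b.1 n) → a = b := fun a b h => Subtype.ext (funext h)
  have hpc : ∀ (b : B) n, ((p : B) * b).1 n = (p : P ⧸ T n) * b.1 n := by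
    intro b n; rfl
  have hpT : ∀ n, (p : P) ^ n ∈ T n := by
    intro n
    induction n with
    | zero => simp [h0]
    | succ n ih => rw [pow_succ']; exact (hb n _).2 ih
  have hT1 : ∀ n, T 1 ≤ T (n + 1) ⊔ Ideal.span {(p : P)} := by
    intro n
    induction n with
    | zero => exact le_sup_left
    | succ n ih =>
      refine ih.trans (sup_le ((hg (n + 1)).trans (sup_le_sup_left ?_ _)) le_sup_right)
      rw [Ideal.span_singleton_le_span_singleton]
      exact dvd_pow_self _ (by omega)
  have hdown : ∀ (b : B) n, ((p : B) * b).1 (n + 1) = 0 → b.1 n = 0 := by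
    intro b n h
    obtain ⟨x, hx⟩ := Ideal.Quotient.mk_surjective (b.1 (n + 1))
    rw [hpc, ← hx] at h
    have h' : Ideal.Quotient.mk (T (n + 1)) ((p : P) * x) = 0 := by simpa using h
    rw [Ideal.Quotient.eq_zero_iff_mem, hb] at h'
    rw [hcomp b n x hx.symm, Ideal.Quotient.eq_zero_iff_mem]
    exact h'
  have htf : ∀ b : B, (p : B) * b = 0 → b = 0 := by
    intro b h
    refine hext _ _ fun n => hdown b n ?_
    rw [h]; rfl
  have hdiv1 : ∀ b : B, b.1 1 = 0 → ∃ c, b = (p : B) * c := by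
    intro b h
    choose x hx using fun m => Ideal.Quotient.mk_surjective (b.1 (m + 1))
    have hx1 : ∀ m, x m ∈ T 1 := by
      intro m
      rw [← Ideal.Quotient.eq_zero_iff_mem, ← hcomp' b (x m) (by omega : 1 ≤ m + 1) (hx m).symm, h]
    have : ∀ m, ∃ y, x m - p * y ∈ T (m + 1) := by
      intro m
      obtain ⟨t, ht, z, hz, hs⟩ := Submodule.mem_sup.1 (hT1 m (hx1 m))
      obtain ⟨y, rfl⟩ := Ideal.mem_span_singleton'.1 hz
      exact ⟨y, by rw [← hs]; simpa [mul_comm] using ht⟩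
    choose y hy using this
    refine ⟨⟨fun m => Ideal.Quotient.mk _ (y m), ?_⟩, ?_⟩
    · intro m
      rw [Ideal.Quotient.factor_mk, Ideal.Quotient.eq, ← hb]
      have h1 : x (m + 1) - x m ∈ T (m + 1) := by
        rw [← Ideal.Quotient.eq, ← hcomp b (m + 1) _ (hx (m + 1)).symm, hx]
      have : (p : P) * (y (m + 1) - y m) =
          (x (m + 1) - x m) - (x (m + 1) - p * y (m + 1)) + (x m - p * y m) := by ring
      rw [this]
      exact Ideal.add_mem _ (Ideal.sub_mem _ h1 (hT _ (hy (m + 1)))) (hy m)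
    · refine hext _ _ fun m => ?_
      rw [hpc, hcomp b m _ (hx m).symm]
      change _ = (p : P ⧸ T m) * Ideal.Quotient.mk (T m) (y m)
      rw [← map_natCast (Ideal.Quotient.mk (T m)), ← map_mul, Ideal.Quotient.eq]
      exact hT _ (hy m)
  have hker : ∀ n (b : B), b ∈ Ideal.span {(p : B) ^ n} ↔ b.1 n = 0 := by
    intro n
    induction n with
    | zero =>
      intro b
      obtain ⟨x, hx⟩ := Ideal.Quotient.mk_surjective (b.1 0)
      simp only [pow_zero, Ideal.span_singleton_one, Submodule.mem_top, true_iff]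
      rw [← hx, Ideal.Quotient.eq_zero_iff_mem, h0]; trivial
    | succ n ih =>
      intro b
      constructor
      · intro h
        obtain ⟨c, rfl⟩ := Ideal.mem_span_singleton'.1 h
        change c.1 (n + 1) * (p : P ⧸ T (n + 1)) ^ (n + 1) = 0
        rw [← map_natCast (Ideal.Quotient.mk (T (n+1))), ← map_pow,
          Ideal.Quotient.eq_zero_iff_mem.2 (hpT _), mul_zero]
      · intro h
        obtain ⟨c, rfl⟩ := hdiv1 b (by
          have := hcomp' b (m := n + 1) (n := 1) 0 (by omega) (by simpa using h)
          simpa using this)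
        have := (ih c).2 (hdown c n h)
        obtain ⟨d, rfl⟩ := Ideal.mem_span_singleton'.1 this
        exact Ideal.mem_span_singleton'.2 ⟨d, by ring⟩
  let ρ : P →ₐ[R] B :=
    { toFun := fun x => ⟨fun n => Ideal.Quotient.mk _ x, fun n => rfl⟩
      map_one' := rfl
      map_mul' := fun _ _ => rfl
      map_zero' := rfl
      map_add' := fun _ _ => rfl
      commutes' := fun _ => rfl }
  refine ⟨B, inferInstance, inferInstance, ρ, htf, ?_, ?_, ?_⟩
  · have hmem : ∀ n (b : B), b ∈ (Ideal.span {(p : B)} ^ n • ⊤ : Submodule B B) ↔ b.1 n = 0 := by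
      intro n b
      rw [← hker, Ideal.span_singleton_pow, smul_eq_mul, Ideal.mul_top]
    have hsm : ∀ n (a b : B), a ≡ b [SMOD (Ideal.span {(p : B)} ^ n • ⊤ : Submodule B B)] ↔
        a.1 n = b.1 n := by
      intro n a b
      rw [SModEq.sub_mem, hmem, ← sub_eq_zero (a := a.1 n)]
      rfl
    have H1 : IsHausdorff (Ideal.span {(p : B)}) B :=
      ⟨fun x hx => hext _ _ fun n => (hsm n _ _).1 (hx n)⟩
    have H2 : IsPrecomplete (Ideal.span {(p : B)}) B := by
      refine ⟨fun f hf => ⟨⟨fun n => (f n).1 n, fun n => ?_⟩, fun n => (hsm _ _ _).2 rfl⟩⟩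
      rw [(f (n + 1)).2 n]
      exact ((hsm _ _ _).1 (hf (Nat.le_succ n))).symm
    exact { H1, H2 with }
  · intro n b
    obtain ⟨x, hx⟩ := Ideal.Quotient.mk_surjective (b.1 n)
    refine ⟨x, (hker _ _).2 ?_⟩
    change b.1 n - Ideal.Quotient.mk _ x = 0
    rw [hx, sub_self]
  · intro n x
    rw [hker]
    exact Ideal.Quotient.eq_zero_iff_mem

/-- formal smoothness criterion -/
theorem wl_smooth {R S P W : Type u} [CommRing R] [CommRing S] [CommRing P] [CommRing W]
    [Algebra W P] [Algebra.FormallySmooth W P] [Algebra.FiniteType W P]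
    [IsNoetherianRing R] [Algebra R S] (w : W →+* R) (hw : Function.Surjective w)
    (g : P →+* S) (hg : Function.Surjective g)
    (hgw : ∀ a, g (algebraMap W P a) = algebraMap R S (w a))
    (ψ : P →ₐ[W] P) (hψ : ∀ x, g (ψ x) = g x) (π : W) (hπ : w π = 0)
    (hψ2 : ∀ t ∈ RingHom.ker g, ψ t ∈ RingHom.ker g ^ 2 ⊔ Ideal.span {algebraMap W P π}) :
    Algebra.Smooth R S := by
  have h1 : Algebra.FormallySmooth R S := by
    refine Algebra.FormallySmooth.of_comp_surjective fun C _ _ I hI f => ?_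
    letI : Algebra W C := ((algebraMap R C).comp w).toAlgebra
    let f' : P →ₐ[W] C ⧸ I :=
      { (f : S →+* C ⧸ I).comp g with
        commutes' := fun a => by
          change f (g (algebraMap W P a)) = Ideal.Quotient.mk I (algebraMap R C (w a))
          rw [hgw, f.commutes]; rfl }
    obtain ⟨h, hh⟩ := Algebra.FormallySmooth.comp_surjective W P I hI f'
    have hh' : ∀ x, Ideal.Quotient.mk I (h x) = f (g x) := fun x => congr($hh x)
    have hk : RingHom.ker g ≤ I.comap h := by
      intro t ht
      rw [Ideal.mem_comap, ← Ideal.Quotient.eq_zero_iff_mem, hh', RingHom.mem_ker.1 ht, map_zero]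
    have hk2 : RingHom.ker g ^ 2 ⊔ Ideal.span {algebraMap W P π} ≤ RingHom.ker h := by
      refine sup_le ?_ ?_
      · refine (Ideal.pow_right_mono hk 2).trans ((Ideal.le_comap_pow h 2).trans ?_)
        rw [hI]
        intro x hx; exact hx
      · rw [Ideal.span_singleton_le_iff_mem, RingHom.mem_ker, h.commutes]
        change algebraMap R C (w π) = 0
        rw [hπ, map_zero]
    let l : S →+* C := RingHom.liftOfSurjective g hg
      ⟨(h : P →+* C).comp (ψ : P →+* P), fun t ht => hk2 (hψ2 t ht)⟩
    have hl : ∀ x, l (g x) = h (ψ x) := fun x => RingHom.liftOfRightInverse_comp_apply _ _ _ _ x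
    refine ⟨{ l with commutes' := fun r => ?_ }, ?_⟩
    · obtain ⟨a, rfl⟩ := hw r
      change l _ = _
      rw [← hgw, hl, ψ.commutes, h.commutes]; rfl
    · ext s
      obtain ⟨x, rfl⟩ := hg s
      change Ideal.Quotient.mk I (l (g x)) = f (g x)
      rw [hl, hh', hψ]
  have h2 : Algebra.FiniteType R S := by
    letI : Algebra W S := ((algebraMap R S).comp w).toAlgebra
    letI : Algebra W R := w.toAlgebra
    haveI : IsScalarTower W R S := IsScalarTower.of_algebraMap_eq fun _ => rfl
    let g' : P →ₐ[W] S := { g with commutes' := hgw }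
    haveI : Algebra.FiniteType W S := Algebra.FiniteType.of_surjective g' hg
    exact Algebra.FiniteType.of_restrictScalars_finiteType W R S
  exact ⟨h1, Algebra.FinitePresentation.of_finiteType.1 h2⟩

theorem wl_exists_endo {W k A : Type u} [CommRing W] [Field k] [CommRing A] [Algebra k A]
    [Algebra.FormallySmooth k A] (p : ℕ) (c : W →+* k) (hc : Function.Surjective c)
    (hker : RingHom.ker c = Ideal.span {(p : W)}) (r : ℕ)
    (f : MvPolynomial (Fin r) k →ₐ[k] A) (hf : Function.Surjective f)
    (T : Ideal (MvPolynomial (Fin r) W))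
    (hJT : RingHom.ker ((f : MvPolynomial (Fin r) k →+* A).comp (MvPolynomial.map c)) ≤
      T ⊔ Ideal.span {(p : MvPolynomial (Fin r) W)}) :
    ∃ φ : MvPolynomial (Fin r) W →+* MvPolynomial (Fin r) W,
      (∃ φ' : MvPolynomial (Fin r) W →ₐ[W] MvPolynomial (Fin r) W, (φ' : _ →+* _) = φ) ∧
      WLEndo (p : MvPolynomial (Fin r) W)
        (RingHom.ker ((f : MvPolynomial (Fin r) k →+* A).comp (MvPolynomial.map c))) T φ := by
  set P := MvPolynomial (Fin r) W
  let q : P →+* MvPolynomial (Fin r) k := MvPolynomial.map c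
  have hq : Function.Surjective q := MvPolynomial.map_surjective _ hc
  have hqker : RingHom.ker q = Ideal.span {(p : P)} := by
    change RingHom.ker (MvPolynomial.map c) = _
    rw [MvPolynomial.ker_map, hker, Ideal.map_span, Set.image_singleton, map_natCast]
  have hqp : q (p : P) = 0 := by
    rw [← RingHom.mem_ker, hqker]; exact Ideal.mem_span_singleton_self _
  let g : P →+* A := (f : MvPolynomial (Fin r) k →+* A).comp q
  set J : Ideal P := RingHom.ker ((f : MvPolynomial (Fin r) k →+* A).comp (MvPolynomial.map c)) with hJ
  have hgq : ∀ x, g x = f (q x) := fun _ => rfl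
  obtain ⟨s, hs⟩ := (Algebra.FormallySmooth.iff_split_surjection f hf).1 inferInstance
  have hs' : ∀ a, f.kerSquareLift (s a) = a := fun a => congr($hs a)
  have ha : ∀ i, ∃ a : P, Ideal.Quotient.mk (RingHom.ker f.toRingHom ^ 2) (q a) = s (f (MvPolynomial.X i)) := by
    intro i
    obtain ⟨b, hb⟩ := Ideal.Quotient.mk_surjective (s (f (MvPolynomial.X i)))
    obtain ⟨a, rfl⟩ := hq b
    exact ⟨a, hb⟩
  choose a ha using ha
  have hqX : ∀ i, q (MvPolynomial.X i) = MvPolynomial.X i := fun i => MvPolynomial.map_X _ _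
  have hmem : ∀ i, a i - MvPolynomial.X i ∈ J := by
    intro i
    change g (a i - MvPolynomial.X i) = 0
    rw [map_sub, hgq, hgq, hqX, sub_eq_zero]
    have := hs' (f (MvPolynomial.X i))
    rw [← ha] at this
    exact this
  have ht : ∀ i, ∃ t ∈ T, ∃ y, a i - MvPolynomial.X i = t + (p : P) * y :=
    fun i => wl_mem_sup.1 (hJT (hmem i))
  choose t ht y hy using ht
  let φ : P →ₐ[W] P := MvPolynomial.aeval fun i => MvPolynomial.X i + t i
  have hφX : ∀ i, φ (MvPolynomial.X i) = MvPolynomial.X i + t i := fun i =>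
    MvPolynomial.aeval_X _ _
  have hφq : ∀ i, q (φ (MvPolynomial.X i)) = q (a i) := by
    intro i
    have : φ (MvPolynomial.X i) = a i - p * y i := by
      rw [hφX]; linear_combination - hy i
    rw [this, map_sub, map_mul, hqp, zero_mul, sub_zero]
  have hmain : ((Ideal.Quotient.mk (RingHom.ker f.toRingHom ^ 2)).comp q).comp (φ : P →+* P) =
      (s : A →+* _).comp g := by
    refine MvPolynomial.ringHom_ext (fun w => ?_) fun i => ?_
    · change Ideal.Quotient.mk _ (q (φ (algebraMap W P w))) = s (f (q (MvPolynomial.C w)))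
      rw [φ.commutes]
      change Ideal.Quotient.mk _ (MvPolynomial.map c (MvPolynomial.C w)) =
        s (f (MvPolynomial.map c (MvPolynomial.C w)))
      rw [MvPolynomial.map_C]
      have : (MvPolynomial.C (c w) : MvPolynomial (Fin r) k) = algebraMap k _ (c w) := rfl
      rw [this, f.commutes, s.commutes]
      rfl
    · change Ideal.Quotient.mk _ (q (φ (MvPolynomial.X i))) = s (f (q (MvPolynomial.X i)))
      rw [hφq, ha, hqX]
  have hid : (Ideal.Quotient.mk T).comp (φ : P →+* P) = Ideal.Quotient.mk T := by
    refine MvPolynomial.ringHom_ext (fun w => ?_) fun i => ?_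
    · change Ideal.Quotient.mk _ (φ (algebraMap W P w)) = Ideal.Quotient.mk _ (algebraMap W P w)
      rw [φ.commutes]
    · change Ideal.Quotient.mk _ (φ (MvPolynomial.X i)) = _
      rw [hφX, map_add, Ideal.Quotient.eq_zero_iff_mem.2 (ht i), add_zero]
  refine ⟨φ, ⟨φ, rfl⟩, map_natCast _ _, fun x => ?_, fun x hx => ?_⟩
  · rw [← Ideal.Quotient.eq]
    exact congr($hid x)
  · have h1 : Ideal.Quotient.mk (RingHom.ker f.toRingHom ^ 2) (q (φ x)) = s (g x) := congr($hmain x)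
    rw [show g x = 0 from hx, map_zero, Ideal.Quotient.eq_zero_iff_mem] at h1
    have h2 : RingHom.ker f.toRingHom = J.map q := by
      have : J = (RingHom.ker f).comap q := rfl
      rw [this]
      exact (Ideal.map_comap_of_surjective q hq _).symm
    rw [h2, ← Ideal.map_pow] at h1
    have h3 : φ x ∈ (Ideal.map q (J ^ 2)).comap q := h1
    rw [Ideal.comap_map_of_surjective' q hq, hqker] at h3
    exact h3

theorem wl_quotient_equiv {P X Y : Type u} [CommRing P] [CommRing X] [CommRing Y]
    (g : P →+* X) (h : P →+* Y) (hg : Function.Surjective g) (hh : Function.Surjective h)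
    (e : RingHom.ker g = RingHom.ker h) : ∃ E : X ≃+* Y, ∀ x, E (g x) = h x := by
  refine ⟨((RingHom.quotientKerEquivOfSurjective hg).symm.trans (Ideal.quotEquivOfEq e)).trans
    (RingHom.quotientKerEquivOfSurjective hh), fun x => ?_⟩
  have : (RingHom.quotientKerEquivOfSurjective hg).symm (g x) = Ideal.Quotient.mk _ x := by
    rw [RingEquiv.symm_apply_eq]; rfl
  simp [this]

theorem wl_exists
    (p : ℕ) [Fact p.Prime] (k : Type u) [Field k] [CharP k p] [PerfectRing k p]
    (A : Type u) [CommRing A] [Algebra k A] (hA : Algebra.Smooth k A) :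
    Nonempty (WittLift p k A) := by
  let c : WittVector p k →+* k := WittVector.ghostComponent 0
  have hcc : ∀ w, c w = w.coeff 0 := by
    intro w
    simp [c, WittVector.ghostComponent_apply]
  have hc : Function.Surjective c := fun a => ⟨WittVector.teichmuller p a, by simp [hcc]⟩
  have hker : RingHom.ker c = Ideal.span {(p : WittVector p k)} := by
    ext w
    rw [RingHom.mem_ker, hcc, WittVector.mem_span_p_iff_coeff_zero_eq_zero]
  obtain ⟨r, f, hf⟩ := (Algebra.FiniteType.iff_quotient_mvPolynomial'' (R := k) (S := A)).mp
    inferInstance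
  let P := MvPolynomial (Fin r) (WittVector p k)
  let g : P →+* A := (f : MvPolynomial (Fin r) k →+* A).comp (MvPolynomial.map c)
  have hg : Function.Surjective g := hf.comp (MvPolynomial.map_surjective _ hc)
  have hgC : ∀ w, g (algebraMap _ P w) = algebraMap k A (c w) := by
    intro w
    change f (MvPolynomial.map c (MvPolynomial.C w)) = _
    rw [MvPolynomial.map_C]
    exact f.commutes _
  have hp0 : (p : P) ≠ 0 := by
    intro h
    have : MvPolynomial.C (σ := Fin r) (p : WittVector p k) = 0 := by rw [map_natCast]; exact h
    rw [MvPolynomial.C_eq_zero] at this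
    exact WittVector.p_nonzero p k this
  have hpJ : (p : P) ∈ RingHom.ker g := by
    have h1 : c (p : WittVector p k) = 0 := by
      rw [← RingHom.mem_ker, hker]; exact Ideal.mem_span_singleton_self _
    have h2 := hgC (p : WittVector p k)
    rw [h1, map_zero, map_natCast] at h2
    exact h2
  obtain ⟨T, h0, hT1, hT, hge, hb, hφ⟩ := wl_tower (p : P) (RingHom.ker g) hpJ
    (fun x hx => (mul_eq_zero.1 hx).resolve_left hp0)
    (fun φ => ∃ φ' : P →ₐ[WittVector p k] P, (φ' : _ →+* _) = φ)
    (fun T _ h => wl_exists_endo p c hc hker r f hf T h)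
  obtain ⟨B, _, _, ρ, htf, hcomplete, hsurj, hmem⟩ := wl_limit (WittVector p k) p T h0 hT hge hb
  have hflat : Module.Flat (WittVector p k) B := by
    have : Module.IsTorsionFree (WittVector p k) B := by
      refine Module.isTorsionFree_iff_smul_eq_zero.2 fun w b hwb => ?_
      by_cases hw : w = 0
      · exact Or.inl hw
      right
      obtain ⟨n, v, rfl⟩ := WittVector.exists_eq_pow_p_mul' w hw
      rw [Algebra.smul_def, map_mul, map_pow, map_natCast, mul_assoc] at hwb
      have : ∀ n (b : B), (p : B) ^ n * b = 0 → b = 0 := by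
        intro n
        induction n with
        | zero => intro b hb; simpa using hb
        | succ n ih => intro b hb; exact ih b (htf _ (by rw [← hb]; ring))
      have h1 := this _ _ hwb
      exact (v.isUnit.map (algebraMap _ B)).mul_right_eq_zero.1 h1
    infer_instance
  let h : ∀ n, P →+* B ⧸ Ideal.span {(p : B) ^ n} := fun n => (Ideal.Quotient.mk _).comp ρ
  have hh : ∀ n, Function.Surjective (h n) := by
    intro n b
    obtain ⟨b, rfl⟩ := Ideal.Quotient.mk_surjective b
    obtain ⟨x, hx⟩ := hsurj n b
    exact ⟨x, (Ideal.Quotient.eq.2 hx).symm⟩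
  have hhk : ∀ n, RingHom.ker (h n) = T n := by
    intro n
    ext x
    rw [RingHom.mem_ker, ← hmem]
    exact Ideal.Quotient.eq_zero_iff_mem
  have hex : ∃ E : (B ⧸ Ideal.span {(p : B)}) ≃+* A, ∀ x, E (Ideal.Quotient.mk _ (ρ x)) = g x := by
    refine wl_quotient_equiv ((Ideal.Quotient.mk _).comp (ρ : P →+* B)) g ?_ hg ?_
    · have := hh 1
      intro b
      obtain ⟨b, rfl⟩ := Ideal.Quotient.mk_surjective b
      obtain ⟨x, hx⟩ := hsurj 1 b
      rw [pow_one] at hx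
      exact ⟨x, (Ideal.Quotient.eq.2 hx).symm⟩
    · ext x
      rw [← hT1, ← hmem, pow_one]
      exact Ideal.Quotient.eq_zero_iff_mem
  obtain ⟨E, hE⟩ := hex
  refine ⟨{ B := B, flat := hflat, complete := hcomplete, equiv := E, compat := ?_, smooth := ?_ }⟩
  · intro w
    rw [← ρ.commutes, hE, hgC]
  · intro n hn
    obtain ⟨m, rfl⟩ : ∃ m, n = m + 1 := ⟨n - 1, by omega⟩
    obtain ⟨_, ⟨φ, rfl⟩, hφ1, hφ2⟩ := hφ m
    have hit : ∀ j x, h (m + 1) (φ^[j] x) = h (m + 1) x := by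
      intro j
      induction j with
      | zero => intro x; rfl
      | succ j ih =>
        intro x
        rw [Function.iterate_succ_apply, ih, ← sub_eq_zero, ← map_sub, ← RingHom.mem_ker, hhk]
        exact hφ1 x
    have hpow : ∀ x, (φ ^ (m + 1)) x = φ^[m + 1] x := fun x => by
      rw [AlgHom.coe_pow]
    let _ : Algebra (WittVector p k ⧸ Ideal.span {(p : WittVector p k) ^ (m + 1)})
        (B ⧸ Ideal.span {(p : B) ^ (m + 1)}) :=
      (reduceModPn p (algebraMap (WittVector p k) B) (m + 1)).toAlgebra
    refine wl_smooth (W := WittVector p k) (P := P) (Ideal.Quotient.mk _)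
      Ideal.Quotient.mk_surjective (h (m + 1)) (hh _) ?_ (φ ^ (m + 1)) ?_
      ((p : WittVector p k) ^ (m + 1)) ?_ ?_
    · intro a
      change Ideal.Quotient.mk _ (ρ (algebraMap _ P a)) = _
      rw [ρ.commutes]
      rfl
    · intro x
      rw [hpow, hit]
    · exact Ideal.Quotient.eq_zero_iff_mem.2 (Ideal.mem_span_singleton_self _)
    · intro t ht
      rw [hhk] at ht ⊢
      rw [hpow, map_pow, map_natCast]
      exact hφ2 t ht

theorem wl_lift_step {S X Y Z : Type u} [CommRing S] [CommRing X] [CommRing Y] [CommRing Z]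
    [Algebra S X] [Algebra.FormallySmooth S X] (σ : S →+* Y) (π : Y →+* Z)
    (hπ : Function.Surjective π) (hnil : IsNilpotent (RingHom.ker π)) (f : X →+* Z)
    (hf : ∀ s, f (algebraMap S X s) = π (σ s)) :
    ∃ g : X →+* Y, (∀ x, π (g x) = f x) ∧ ∀ s, g (algebraMap S X s) = σ s := by
  let _ : Algebra S Y := σ.toAlgebra
  let _ : Algebra S Z := (π.comp σ).toAlgebra
  let f' : X →ₐ[S] Z := { f with commutes' := hf }
  let π' : Y →ₐ[S] Z := { π with commutes' := fun _ => rfl }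
  let g := Algebra.FormallySmooth.liftOfSurjective f' π' hπ hnil
  exact ⟨g, fun x => Algebra.FormallySmooth.liftOfSurjective_apply f' π' hπ hnil x,
    fun s => g.commutes s⟩

theorem wl_unique_step {p : ℕ} [Fact p.Prime] {k : Type u} [Field k] [CharP k p] [PerfectRing k p]
    {A : Type u} [CommRing A] [Algebra k A] (L₁ L₂ : WittLift p k A) (n : ℕ)
    (f : L₁.B →ₐ[WittVector p k] L₂.B ⧸ Ideal.span {(p : L₂.B)} ^ (n + 1)) :
    ∃ g : L₁.B →ₐ[WittVector p k] L₂.B ⧸ Ideal.span {(p : L₂.B)} ^ (n + 1 + 1),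
      (Ideal.Quotient.factorₐ (WittVector p k)
        (Ideal.pow_le_pow_right (Nat.le_succ (n + 1)))).comp g = f := by
  have hs := L₁.smooth (n + 1 + 1) (by omega)
  let _ : Algebra (WittVector p k ⧸ Ideal.span {(p : WittVector p k) ^ (n + 1 + 1)})
      (L₁.B ⧸ Ideal.span {(p : L₁.B) ^ (n + 1 + 1)}) :=
    (reduceModPn p (algebraMap (WittVector p k) L₁.B) (n + 1 + 1)).toAlgebra
  have : Algebra.FormallySmooth (WittVector p k ⧸ Ideal.span {(p : WittVector p k) ^ (n + 1 + 1)})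
      (L₁.B ⧸ Ideal.span {(p : L₁.B) ^ (n + 1 + 1)}) := hs.formallySmooth
  let I : Ideal L₂.B := Ideal.span {(p : L₂.B)}
  have hpow : ∀ m, (p : L₂.B) ^ m ∈ I ^ m := fun m =>
    Ideal.pow_mem_pow (Ideal.mem_span_singleton_self _) m
  have hp : ∀ m, (p : L₂.B ⧸ I ^ m) ^ m = 0 := by
    intro m
    have := Ideal.Quotient.eq_zero_iff_mem.2 (hpow m)
    rwa [map_pow, map_natCast] at this
  let σ : (WittVector p k ⧸ Ideal.span {(p : WittVector p k) ^ (n + 1 + 1)}) →+*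
      L₂.B ⧸ I ^ (n + 1 + 1) :=
    Ideal.Quotient.lift _ (algebraMap (WittVector p k) _) (by
      intro a ha
      obtain ⟨b, rfl⟩ := Ideal.mem_span_singleton.1 ha
      rw [map_mul, map_pow, map_natCast, hp, zero_mul])
  let π : (L₂.B ⧸ I ^ (n + 1 + 1)) →ₐ[WittVector p k] (L₂.B ⧸ I ^ (n + 1)) :=
    Ideal.Quotient.factorₐ (WittVector p k) (Ideal.pow_le_pow_right (Nat.le_succ (n + 1)))
  have hπmk : ∀ b, π (Ideal.Quotient.mk _ b) = Ideal.Quotient.mk _ b := fun b => rfl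
  let f' : (L₁.B ⧸ Ideal.span {(p : L₁.B) ^ (n + 1 + 1)}) →+* L₂.B ⧸ I ^ (n + 1) :=
    Ideal.Quotient.lift _ (f : L₁.B →+* _) (by
      intro a ha
      obtain ⟨b, rfl⟩ := Ideal.mem_span_singleton.1 ha
      have h1 : (p : L₂.B ⧸ I ^ (n + 1)) ^ (n + 1 + 1) = 0 := by
        rw [pow_succ _ (n + 1), hp, zero_mul]
      rw [map_mul, map_pow, map_natCast]
      exact (congrArg (· * _) h1).trans (zero_mul _))
  obtain ⟨g, hg1, hg2⟩ := wl_lift_step σ (π : _ →+* _) (Ideal.Quotient.factor_surjective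
    (Ideal.pow_le_pow_right (Nat.le_succ (n + 1))))
    ⟨2, by
      rw [Ideal.zero_eq_bot, eq_bot_iff, pow_two, Ideal.mul_le]
      intro x hx y hy
      obtain ⟨x, rfl⟩ := Ideal.Quotient.mk_surjective x
      obtain ⟨y, rfl⟩ := Ideal.Quotient.mk_surjective y
      have hx' : x ∈ I ^ (n + 1) := Ideal.Quotient.eq_zero_iff_mem.1 hx
      have hy' : y ∈ I ^ (n + 1) := Ideal.Quotient.eq_zero_iff_mem.1 hy
      rw [Ideal.mem_bot, ← map_mul, Ideal.Quotient.eq_zero_iff_mem]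
      have := Ideal.mul_mem_mul hx' hy'
      rw [← pow_add] at this
      exact Ideal.pow_le_pow_right (by omega) this⟩ f' (by
      intro w
      obtain ⟨w, rfl⟩ := Ideal.Quotient.mk_surjective w
      change f (algebraMap _ _ w) = π (algebraMap _ _ w)
      rw [f.commutes, π.commutes])
  refine ⟨{ g.comp (Ideal.Quotient.mk _) with
    commutes' := fun w => hg2 (Ideal.Quotient.mk _ w) }, ?_⟩
  ext b
  exact hg1 (Ideal.Quotient.mk _ b)

theorem wl_unique {p : ℕ} [Fact p.Prime] {k : Type u} [Field k] [CharP k p] [PerfectRing k p]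
    {A : Type u} [CommRing A] [Algebra k A] (L₁ L₂ : WittLift p k A) :
    ∃ e : L₁.B ≃ₐ[WittVector p k] L₂.B,
        ∀ b : L₁.B,
          L₂.equiv (Ideal.Quotient.mk _ (e b)) = L₁.equiv (Ideal.Quotient.mk _ b) := by
  let I : Ideal L₂.B := Ideal.span {(p : L₂.B)}
  have hI1 : I ^ (0 + 1) = I := by rw [zero_add, pow_one]
  have hstart : ∃ f : L₁.B →ₐ[WittVector p k] L₂.B ⧸ I ^ (0 + 1),
      ∀ b, L₂.equiv (Ideal.quotEquivOfEq hI1 (f b)) = L₁.equiv (Ideal.Quotient.mk _ b) := by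
    let E := (Ideal.quotEquivOfEq hI1).trans L₂.equiv
    let f : L₁.B →+* L₂.B ⧸ I ^ (0 + 1) :=
      (E.symm : A →+* _).comp ((L₁.equiv : (L₁.B ⧸ Ideal.span {(p : L₁.B)}) →+* A).comp
        (Ideal.Quotient.mk _))
    refine ⟨{ f with commutes' := ?_ }, ?_⟩
    · intro w
      change E.symm (L₁.equiv (Ideal.Quotient.mk _ (algebraMap _ _ w))) = _
      rw [RingEquiv.symm_apply_eq, L₁.compat, ← L₂.compat]
      rfl
    · intro b
      exact E.apply_symm_apply _
  obtain ⟨f₀, hf₀⟩ := hstart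
  choose next hnext using wl_unique_step L₁ L₂
  let h : ∀ n : ℕ, L₁.B →ₐ[WittVector p k] L₂.B ⧸ I ^ (n + 1) := fun n =>
    Nat.rec f₀ (fun n f => next n f) n
  have hh : ∀ n, (Ideal.Quotient.factorₐ (WittVector p k)
        (Ideal.pow_le_pow_right (Nat.le_succ (n + 1)))).comp (h (n + 1)) = h n := fun n =>
    hnext n (h n)
  have hh' : ∀ m n (hmn : m ≤ n), (Ideal.Quotient.factorₐ (WittVector p k)
        (Ideal.pow_le_pow_right (Nat.succ_le_succ hmn))).comp (h n) = h m := by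
    intro m n hmn
    induction n, hmn using Nat.le_induction with
    | base =>
      ext b
      obtain ⟨y, hy⟩ := Ideal.Quotient.mk_surjective (h m b)
      rw [AlgHom.comp_apply, ← hy]
      rfl
    | succ n hmn ih =>
      rw [← ih]
      ext b
      rw [← hh n]
      obtain ⟨y, hy⟩ := Ideal.Quotient.mk_surjective (h (n + 1) b)
      simp only [AlgHom.comp_apply]
      rw [← hy]
      rfl
  let F : ∀ n : ℕ, L₁.B →ₐ[WittVector p k] L₂.B ⧸ I ^ n := fun n =>
    (Ideal.Quotient.factorₐ (WittVector p k)
        (Ideal.pow_le_pow_right (Nat.le_succ n))).comp (h n)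
  have hF : ∀ {m n : ℕ} (hle : m ≤ n),
      (Ideal.Quotient.factorₐ (WittVector p k) (Ideal.pow_le_pow_right hle)).comp (F n) = F m := by
    intro m n hmn
    ext b
    simp only [F]
    rw [← hh' m n hmn]
    obtain ⟨y, hy⟩ := Ideal.Quotient.mk_surjective (h n b)
    simp only [AlgHom.comp_apply]
    rw [← hy]
    rfl
  haveI := L₂.complete
  haveI := L₁.complete
  let φ : L₁.B →ₐ[WittVector p k] L₂.B := IsAdicComplete.liftAlgHom I F hF
  have hφ1 : ∀ b, L₂.equiv (Ideal.Quotient.mk _ (φ b)) = L₁.equiv (Ideal.Quotient.mk _ b) := by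
    intro b
    have h1 : Ideal.Quotient.mk (I ^ 1) (φ b) = F 1 b := IsAdicComplete.mk_liftAlgHom I F hF 1 b
    have h2 : F 1 b = f₀ b := by
      have := hnext 0 f₀
      obtain ⟨y, hy⟩ := Ideal.Quotient.mk_surjective (next 0 f₀ b)
      have h3 : F 1 b = (Ideal.Quotient.factorₐ (WittVector p k)
        (Ideal.pow_le_pow_right (Nat.le_succ (0 + 1)))) (next 0 f₀ b) := rfl
      rw [h3]
      exact congr($this b)
    rw [← hf₀, ← h2, ← h1]
    rfl
  have hmk : ∀ b, φ b ∈ I ↔ b ∈ Ideal.span {(p : L₁.B)} := by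
    intro b
    have := hφ1 b
    rw [← Ideal.Quotient.eq_zero_iff_mem, ← Ideal.Quotient.eq_zero_iff_mem,
      ← map_eq_zero_iff L₂.equiv L₂.equiv.injective, this,
      map_eq_zero_iff L₁.equiv L₁.equiv.injective]
  have htf : ∀ b : L₂.B, (p : L₂.B) * b = 0 → b = 0 := by
    intro b hb
    haveI := L₂.flat
    have h1 : Module.IsTorsionFree (WittVector p k) L₂.B := inferInstance
    have h2 : (p : WittVector p k) • b = 0 := by
      rw [Algebra.smul_def, map_natCast, hb]
    exact (smul_eq_zero.1 h2).resolve_left (WittVector.p_nonzero p k)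
  have hinj : Function.Injective φ := by
    rw [injective_iff_map_eq_zero]
    intro b hb
    have hpow : ∀ n (b : L₁.B), φ b = 0 → b ∈ Ideal.span {(p : L₁.B)} ^ n := by
      intro n
      induction n with
      | zero => intro b _; simp
      | succ n ih =>
        intro b hb
        have h1 := (hmk b).1 (hb ▸ I.zero_mem)
        obtain ⟨c, rfl⟩ := Ideal.mem_span_singleton.1 h1
        rw [map_mul, map_natCast] at hb
        rw [pow_succ']
        exact Ideal.mul_mem_mul (Ideal.mem_span_singleton_self _) (ih c (htf _ hb))
    refine IsHausdorff.haus (I := Ideal.span {(p : L₁.B)}) inferInstance b fun n => ?_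
    rw [SModEq.zero]
    simpa using hpow n b hb
  have hmap : (Ideal.span {(p : L₁.B)}).map (φ : L₁.B →+* L₂.B) = I := by
    rw [Ideal.map_span, Set.image_singleton, map_natCast]
  have hsurj : Function.Surjective φ := by
    haveI : IsHausdorff ((Ideal.span {(p : L₁.B)}).map (φ : L₁.B →+* L₂.B)) L₂.B := by
      rw [hmap]; infer_instance
    refine surjective_of_mk_map_comp_surjective (I := Ideal.span {(p : L₁.B)})
      (φ : L₁.B →+* L₂.B) ?_
    intro y
    obtain ⟨y, rfl⟩ := Ideal.Quotient.mk_surjective y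
    obtain ⟨b, hb⟩ := Ideal.Quotient.mk_surjective
      (L₁.equiv.symm (L₂.equiv (Ideal.Quotient.mk _ y)))
    refine ⟨b, Ideal.Quotient.eq.2 ?_⟩
    rw [hmap, ← Ideal.Quotient.eq]
    apply L₂.equiv.injective
    refine (hφ1 b).trans ?_
    rw [hb, RingEquiv.apply_symm_apply]
  exact ⟨AlgEquiv.ofBijective φ ⟨hinj, hsurj⟩, hφ1⟩

/-- Let `k` be a perfect field of characteristic `p > 0`, `W = W(k)` its ring
of Witt vectors, and `A` a smooth `k`-algebra. Then there exists a flat, `p`-adically complete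
`W`-algebra `B` lifting `A` whose reductions `B/pⁿB` are smooth over `W/pⁿ` for all `n ≥ 1`;
moreover such a `B` is unique up to isomorphism of `W`-algebras compatible with the
identification modulo `p`. -/
theorem exists_unique_witt_lift_of_smooth
    (p : ℕ) [Fact p.Prime] (k : Type u) [Field k] [CharP k p] [PerfectRing k p]
    (A : Type u) [CommRing A] [Algebra k A] (hA : Algebra.Smooth k A) :
    Nonempty (WittLift p k A) ∧
    ∀ L₁ L₂ : WittLift p k A,
      ∃ e : L₁.B ≃ₐ[WittVector p k] L₂.B,
        ∀ b : L₁.B,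
          L₂.equiv (Ideal.Quotient.mk _ (e b)) = L₁.equiv (Ideal.Quotient.mk _ b) := by
  exact ⟨wl_exists p k A hA, fun L₁ L₂ => wl_unique L₁ L₂⟩
end

section
/- Let k be a perfect field of characteristic p > 0, W = W(k), and W_n = W/p^nW. Let A be a smooth k-algebra and B a flat, p-adically complete W-algebra lifting A (i.e. B ⊗_W k ≅ A) such that B/p^nB is smooth over W_n for all n ≥ 1. Let A → C be a smooth homomorphism of k-algebras. Then there exists a p-adically complete B-algebra C̃ which is flat over B together with an isomorphism C̃ ⊗_W k ≅ C of A-algebras lifting A → C, and such a flat lift is unique up to isomorphism. -/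
universe u

/-- A lift of a smooth `A`-algebra `C` to a flat, `p`-adically complete `B`-algebra `C̃`
with an identification `C̃/pC̃ ≅ C` lifting the structure map `A → C`. -/
structure SmoothLift (p : ℕ) [Fact p.Prime] (k : Type u) [Field k] [CharP k p] [PerfectRing k p]
    (A : Type u) [CommRing A] [Algebra k A] (L : WittLift p k A)
    (C : Type u) [CommRing C] [Algebra A C] : Type (u + 1) where
  Ct : Type u
  [commRing : CommRing Ct]
  [alg : Algebra L.B Ct]
  flat : Module.Flat L.B Ct
  complete : IsAdicComplete (Ideal.span {(p : Ct)}) Ct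
  equiv : (Ct ⧸ Ideal.span {(p : Ct)}) ≃+* C
  compat : ∀ b : L.B,
    equiv (Ideal.Quotient.mk _ (algebraMap L.B Ct b)) =
      algebraMap A C (L.equiv (Ideal.Quotient.mk _ b))

section
variable {p : ℕ} [Fact p.Prime] {k : Type u} [Field k] [CharP k p] [PerfectRing k p]
    {A : Type u} [CommRing A] [Algebra k A] {L : WittLift p k A}
    {C : Type u} [CommRing C] [Algebra A C]

instance (M : SmoothLift p k A L C) : CommRing M.Ct := M.commRing
instance (M : SmoothLift p k A L C) : Algebra L.B M.Ct := M.alg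

end

section
open TensorProduct

theorem mem_span_pow_smul_top {S M : Type*} [CommRing S] [AddCommGroup M] [Module S M] (a : S) (n : ℕ)
    (x : M) : x ∈ ((Ideal.span {a}) ^ n • ⊤ : Submodule S M) ↔ ∃ y, x = a ^ n • y := by
  rw [Ideal.span_singleton_pow, Submodule.ideal_span_singleton_smul]
  constructor
  · rintro ⟨y, -, rfl⟩; exact ⟨y, rfl⟩
  · rintro ⟨y, rfl⟩; exact ⟨y, trivial, rfl⟩

theorem pi_isPrecomplete {S : Type*} [CommRing S] (a : S) (ι : Type*)
    [h : IsPrecomplete (Ideal.span {a}) S] : IsPrecomplete (Ideal.span {a}) (ι → S) := by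
  constructor
  intro f hf
  have key : ∀ i, ∃ L : S, ∀ n, f n i ≡ L [SMOD (Ideal.span {a} ^ n • ⊤ : Submodule S S)] := by
    intro i
    refine h.prec' (fun n => f n i) ?_
    intro m n hmn
    have := hf hmn
    rw [SModEq.sub_mem, mem_span_pow_smul_top] at this ⊢
    obtain ⟨y, hy⟩ := this
    exact ⟨y i, by simpa using congrFun hy i⟩
  choose L hL using key
  refine ⟨L, fun n => ?_⟩
  simp only [SModEq.sub_mem, mem_span_pow_smul_top] at hL ⊢
  choose y hy using fun i => hL i n
  exact ⟨y, by ext i; simpa using hy i⟩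

theorem isNoetherianRing_of_complete {S : Type*} [CommRing S] (a : S)
    [IsAdicComplete (Ideal.span {a}) S] [IsNoetherianRing (S ⧸ Ideal.span {a})] :
    IsNoetherianRing S := by
  apply IsNoetherianRing.of_prime
  intro P hP
  have hfg : (P.map (Ideal.Quotient.mk (Ideal.span {a}))).FG := IsNoetherian.noetherian _
  by_cases ha : a ∈ P
  · have h1 : P = (P.map (Ideal.Quotient.mk (Ideal.span {a}))).comap (Ideal.Quotient.mk _) := by
      rw [Ideal.comap_map_of_surjective' _ Ideal.Quotient.mk_surjective, Ideal.mk_ker]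
      exact (sup_eq_left.mpr (by rwa [Ideal.span_singleton_le_iff_mem])).symm
    rw [h1]
    have h := Ideal.fg_ker_comp (Ideal.Quotient.mk (Ideal.span {a}))
      (Ideal.Quotient.mk (P.map (Ideal.Quotient.mk (Ideal.span {a}))))
      (by rw [Ideal.mk_ker]; exact ⟨{a}, by simp⟩) (by rwa [Ideal.mk_ker])
      Ideal.Quotient.mk_surjective
    rwa [← RingHom.comap_ker, Ideal.mk_ker] at h
  · obtain ⟨s, hs⟩ := hfg
    have hs' : ∀ t : s, ∃ f ∈ P, Ideal.Quotient.mk (Ideal.span {a}) f = t := by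
      intro t
      have : (t : S ⧸ Ideal.span {a}) ∈ P.map (Ideal.Quotient.mk (Ideal.span {a})) := by
        rw [← hs]; exact Ideal.subset_span t.2
      rw [Ideal.mem_map_iff_of_surjective _ Ideal.Quotient.mk_surjective] at this
      exact this
    choose f hfP hf using hs'
    have := pi_isPrecomplete a s
    have : IsHausdorff (Ideal.span {a}) P := by
      constructor
      intro x hx
      have : (x : S) = 0 := by
        apply IsHausdorff.haus (I := Ideal.span {a}) inferInstance
        intro n
        have := hx n
        rw [SModEq.zero, mem_span_pow_smul_top] at this ⊢
        obtain ⟨y, hy⟩ := this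
        exact ⟨y, by rw [hy]; rfl⟩
      exact Subtype.ext this
    let F : (s → S) →ₗ[S] P := Fintype.linearCombination S (fun t => (⟨f t, hfP t⟩ : P))
    have hF : ∀ c, (F c : S) = ∑ t, c t * f t := by
      intro c; simp [F, Fintype.linearCombination_apply]
    have hsurj : Function.Surjective F := by
      apply surjective_of_mkQ_comp_surjective (I := Ideal.span {a})
      intro x
      obtain ⟨x, rfl⟩ := Submodule.Quotient.mk_surjective _ x
      have hx : Ideal.Quotient.mk (Ideal.span {a}) x ∈ Ideal.span (s : Set (S ⧸ Ideal.span {a})) := by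
        rw [hs]; exact Ideal.mem_map_of_mem _ x.2
      obtain ⟨c, hc⟩ := (Submodule.mem_span_finset'.mp hx)
      choose d hd using fun t => Ideal.Quotient.mk_surjective (c t)
      refine ⟨d, ?_⟩
      rw [LinearMap.comp_apply, Submodule.mkQ_apply, Submodule.Quotient.eq]
      have : (F d : S) - x ∈ Ideal.span {a} := by
        rw [← Ideal.Quotient.eq, hF, map_sum, ← hc]
        refine Finset.sum_congr rfl fun t _ => ?_
        rw [map_mul, hd, hf]; rfl
      obtain ⟨y, hy⟩ := Ideal.mem_span_singleton'.mp this
      have hyP : y ∈ P := by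
        have : y * a ∈ P := hy ▸ P.sub_mem (F d).2 x.2
        exact (hP.mem_or_mem this).resolve_right ha
      have := (mem_span_pow_smul_top a 1 (F d - x)).mpr ⟨⟨y, hyP⟩, Subtype.ext (by
        simpa [mul_comm] using hy.symm)⟩
      simpa using this
    have := Module.Finite.of_surjective F hsurj
    exact (Submodule.fg_top P).mp this.1

theorem flat_of_dense {B D E : Type*} [CommRing B] [CommRing D] [CommRing E] [Algebra B D] [Algebra B E]
    [IsNoetherianRing B] [IsNoetherianRing E] [Module.Flat B D] (h : D →ₐ[B] E) (a : B)
    (ha : algebraMap B E a ∈ (⊥ : Ideal E).jacobson)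
    (h1 : ∀ n (e : E), ∃ d e', e = h d + a ^ n • e')
    (h2 : ∀ n (d : D), (∃ e, h d = a ^ n • e) → ∃ d', d = a ^ n • d') : Module.Flat B E := by
  rw [Module.Flat.iff_lTensor_injective']
  intro K
  rw [injective_iff_map_eq_zero]
  intro t ht
  obtain ⟨c, hc⟩ := Ideal.exists_pow_inf_eq_pow_smul (Ideal.span {a}) K
  have dens : ∀ n (t : E ⊗[B] K), ∃ (u : D ⊗[B] K) (t' : E ⊗[B] K),
      t = h.toLinearMap.rTensor K u + a ^ n • t' := by
    intro n t
    induction t with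
    | zero => exact ⟨0, 0, by simp⟩
    | add x y hx hy =>
      obtain ⟨u, t', rfl⟩ := hx
      obtain ⟨v, s', rfl⟩ := hy
      exact ⟨u + v, t' + s', by simp only [map_add, smul_add]; abel⟩
    | tmul x y =>
      obtain ⟨d, e', rfl⟩ := h1 n x
      exact ⟨d ⊗ₜ y, e' ⊗ₜ y, by simp [add_tmul, smul_tmul']⟩
  have key : ∀ n, ∃ t', t = a ^ n • t' := by
    intro n
    obtain ⟨u, t', rfl⟩ := dens (n + c) t
    have hu : ∃ d', TensorProduct.rid B D (K.subtype.lTensor D u) = a ^ (n + c) • d' := by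
      apply h2
      refine ⟨- TensorProduct.rid B E (K.subtype.lTensor E t'), ?_⟩
      have e1 : h (TensorProduct.rid B D (K.subtype.lTensor D u)) =
          TensorProduct.rid B E (K.subtype.lTensor E (h.toLinearMap.rTensor K u)) := by
        have e2 : h.toLinearMap ∘ₗ (TensorProduct.rid B D).toLinearMap ∘ₗ K.subtype.lTensor D =
            (TensorProduct.rid B E).toLinearMap ∘ₗ K.subtype.lTensor E ∘ₗ
              h.toLinearMap.rTensor K := by
          ext x y
          simp
        exact LinearMap.congr_fun e2 u
      rw [e1]
      have := congrArg (TensorProduct.rid B E) ht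
      rw [map_add, map_add, map_smul, map_smul, map_zero] at this
      rw [smul_neg]; exact eq_neg_of_add_eq_zero_left this
    obtain ⟨d', hd'⟩ := hu
    let N : Submodule B B := Ideal.span {a} ^ (n + c) • ⊤
    let g : K →ₗ[B] B ⧸ N := N.mkQ.comp K.subtype
    have ex : Function.Exact (LinearMap.ker g).subtype g := LinearMap.exact_subtype_ker_map g
    have ex2 := Module.Flat.lTensor_exact D ex
    have hgu : g.lTensor D u = 0 := by
      have : K.subtype.lTensor D u = a ^ (n+c) • (d' ⊗ₜ[B] (1:B)) := by
        apply (TensorProduct.rid B D).injective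
        rw [hd']; simp
      rw [LinearMap.lTensor_comp, LinearMap.comp_apply, this]
      rw [smul_tmul', smul_tmul, LinearMap.lTensor_tmul]
      have : N.mkQ (a ^ (n+c) • (1:B)) = 0 := by
        rw [Submodule.mkQ_apply, Submodule.Quotient.mk_eq_zero]
        exact (mem_span_pow_smul_top _ _ _).mpr ⟨1, rfl⟩
      rw [this, tmul_zero]
    obtain ⟨v, hv⟩ := (ex2 u).mp hgu
    have hK : ∀ x : LinearMap.ker g, ∃ y : K, (x : K) = a ^ n • y := by
      intro x
      have hx : ((x : K) : B) ∈ N ⊓ K := by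
        refine ⟨?_, x.1.2⟩
        have := x.2
        rwa [LinearMap.mem_ker, LinearMap.comp_apply, Submodule.mkQ_apply, Submodule.Quotient.mk_eq_zero] at this
      have h3 := hc (n + c) (by omega)
      have hx' : ((x : K) : B) ∈ Ideal.span {a} ^ n • (Ideal.span {a} ^ c • ⊤ ⊓ K : Submodule B B) := by
        have : n + c - c = n := by omega
        rw [this] at h3
        rw [← h3]; exact hx
      rw [Ideal.span_singleton_pow, Submodule.ideal_span_singleton_smul] at hx'
      obtain ⟨y, hy, hxy⟩ := hx'
      exact ⟨⟨y, hy.2⟩, Subtype.ext hxy.symm⟩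
    have hvv : ∀ v : D ⊗[B] LinearMap.ker g, ∃ w, (LinearMap.ker g).subtype.lTensor D v = a ^ n • w := by
      intro v
      induction v with
      | zero => exact ⟨0, by simp⟩
      | tmul x y =>
        obtain ⟨z, hz⟩ := hK y
        exact ⟨x ⊗ₜ z, by rw [LinearMap.lTensor_tmul, Submodule.subtype_apply, hz, tmul_smul]⟩
      | add x y hx hy =>
        obtain ⟨w, hw⟩ := hx
        obtain ⟨w', hw'⟩ := hy
        exact ⟨w + w', by rw [map_add, hw, hw', smul_add]⟩
    obtain ⟨w, hw⟩ := hvv v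
    refine ⟨h.toLinearMap.rTensor K w + a ^ c • t', ?_⟩
    rw [← hv, hw, map_smul, smul_add, smul_smul, pow_add]
  have hle : Ideal.span {algebraMap B E a} ≤ (⊥ : Ideal E).jacobson := by
    rwa [Ideal.span_singleton_le_iff_mem]
  have := Ideal.iInf_pow_smul_eq_bot_of_le_jacobson (M := E ⊗[B] K) _ hle
  rw [← Submodule.mem_bot E, ← this, Submodule.mem_iInf]
  intro n
  obtain ⟨t', rfl⟩ := key n
  rw [mem_span_pow_smul_top]
  exact ⟨t', by rw [← map_pow, algebraMap_smul]⟩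


theorem exists_complete_lift {B C D : Type u} [CommRing B] [CommRing C] [CommRing D] [IsNoetherianRing B]
    [IsNoetherianRing C] [Algebra B D] [Algebra B C] [Module.Flat B D] (a : B) (ρ : D →ₐ[B] C)
    (hρ : Function.Surjective ρ) (hker : ∀ x, ρ x = 0 ↔ ∃ y, x = a • y) :
    ∃ (E : Type u) (_ : CommRing E) (_ : Algebra B E) (_ : Module.Flat B E) (σ : E →ₐ[B] C),
      Function.Surjective σ ∧ RingHom.ker σ = Ideal.span {algebraMap B E a} ∧
      IsAdicComplete (Ideal.span {algebraMap B E a}) E := by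
  let I : Ideal D := Ideal.span {algebraMap B D a}
  have fg : I.FG := ⟨{algebraMap B D a}, by simp [I]⟩
  have hI : ∀ x, x ∈ I ↔ ρ x = 0 := by
    intro x
    rw [hker, Ideal.mem_span_singleton']
    constructor
    · rintro ⟨y, rfl⟩; exact ⟨y, by rw [Algebra.smul_def, mul_comm]⟩
    · rintro ⟨y, rfl⟩; exact ⟨y, by rw [Algebra.smul_def, mul_comm]⟩
  let E := AdicCompletion I D
  have hE : I.map (algebraMap D E) = Ideal.span {algebraMap B E a} := by
    rw [Ideal.map_span, Set.image_singleton, ← IsScalarTower.algebraMap_apply B D E]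
  have hc : IsAdicComplete (Ideal.span {algebraMap B E a}) E := by
    rw [← hE]; exact AdicCompletion.isAdicComplete_self I fg
  let lf : D ⧸ I →ₐ[B] C := Ideal.Quotient.liftₐ I ρ (fun x hx => (hI x).1 hx)
  let σ : E →ₐ[B] C := lf.comp ((AdicCompletion.evalOneₐ I).restrictScalars B)
  have hσ : Function.Surjective σ := by
    intro c
    obtain ⟨d, rfl⟩ := hρ c
    exact ⟨algebraMap D E d, rfl⟩
  have hlf : Function.Injective lf := by
    rw [injective_iff_map_eq_zero]
    intro x hx
    obtain ⟨x, rfl⟩ := Ideal.Quotient.mk_surjective x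
    exact Ideal.Quotient.eq_zero_iff_mem.2 ((hI x).2 hx)
  have hσk : RingHom.ker σ = Ideal.span {algebraMap B E a} := by
    rw [← hE, ← AdicCompletion.ker_evalOneₐ_eq_map I fg]
    ext x
    rw [RingHom.mem_ker, RingHom.mem_ker]
    exact map_eq_zero_iff lf hlf
  have e1 : (E ⧸ Ideal.span {algebraMap B E a}) ≃+* C := by
    rw [← hσk]
    exact RingHom.quotientKerEquivOfSurjective (f := (σ : E →+* C)) hσ
  have : IsNoetherianRing (E ⧸ Ideal.span {algebraMap B E a}) :=
    isNoetherianRing_of_ringEquiv C e1.symm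
  have : IsNoetherianRing E := isNoetherianRing_of_complete (algebraMap B E a)
  have hmem : ∀ (n : ℕ) (x : E), x ∈ (I ^ n • ⊤ : Submodule D E) ↔ ∃ y, x = a ^ n • y := by
    intro n x
    rw [mem_span_pow_smul_top]
    simp only [← map_pow, algebraMap_smul]
  have hflat : Module.Flat B E := by
    refine flat_of_dense (IsScalarTower.toAlgHom B D E) a ?_ ?_ ?_
    · exact IsAdicComplete.le_jacobson_bot (Ideal.span {algebraMap B E a})
        (Ideal.mem_span_singleton_self _)
    · intro n e
      obtain ⟨d, hd⟩ := Submodule.Quotient.mk_surjective _ (AdicCompletion.eval I D n e)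
      have : e - algebraMap D E d ∈ (I ^ n • ⊤ : Submodule D E) := by
        rw [AdicCompletion.pow_smul_top_eq_ker_eval fg, LinearMap.mem_ker, map_sub, ← hd, sub_eq_zero]
        rfl
      obtain ⟨y, hy⟩ := (hmem n _).1 this
      exact ⟨d, y, by rw [← hy]; simp⟩
    · rintro n d ⟨e, he⟩
      have h1 := (hmem n _).2 ⟨e, he⟩
      rw [AdicCompletion.pow_smul_top_eq_ker_eval fg, LinearMap.mem_ker] at h1
      have h2 : d ∈ (I ^ n • ⊤ : Submodule D D) := (Submodule.Quotient.mk_eq_zero _).1 h1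
      rw [mem_span_pow_smul_top] at h2
      obtain ⟨y, rfl⟩ := h2
      exact ⟨y, by rw [← map_pow, algebraMap_smul]⟩
  exact ⟨E, inferInstance, inferInstance, hflat, σ, hσ, hσk, hc⟩

end


theorem exists_colim {B Q C : Type u} [CommRing B] [CommRing Q] [CommRing C] [Algebra B Q] [Algebra B C]
    [Module.Flat B Q] (a : B) (π : Q →ₐ[B] C) (hπ : Function.Surjective π) (haC : algebraMap B C a = 0)
    (e : Q →ₐ[B] Q) (hπe : ∀ x, π (e x) = π x) (he : ∀ x, π x = 0 → ∃ y, e x = a • y) :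
    ∃ (D : Type u) (_ : CommRing D) (_ : Algebra B D) (_ : Module.Flat B D) (ρ : D →ₐ[B] C),
      Function.Surjective ρ ∧ ∀ x, ρ x = 0 ↔ ∃ y, x = a • y := by
  let G : ℕ → Type u := fun _ => Q
  let f : ∀ i j, i ≤ j → G i →+* G j := fun i j _ => ((e ^ (j - i) : Q →ₐ[B] Q) : Q →+* Q)
  have hDS : DirectedSystem G fun i j h => f i j h := by
    constructor
    · intro i x
      change (e ^ (i - i)) x = x
      simp
    · intro k j i hij hjk x
      change (e ^ (_)) ((e ^ _) x) = (e ^ _) x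
      rw [← AlgHom.mul_apply, ← pow_add]
      congr 2
      omega
  let D := Ring.DirectLimit G (fun i j h => f i j h)
  let ι : ∀ i, Q →+* D := fun i => Ring.DirectLimit.of G (fun i j h => f i j h) i
  have hι : ∀ i j (h : i ≤ j) (x : Q), ι j ((e ^ (j - i)) x) = ι i x := by
    intro i j h x
    exact Ring.DirectLimit.of_f (f := fun i j h => f i j h) h x
  let _ : Algebra B D := ((ι 0).comp (algebraMap B Q)).toAlgebra
  have halg : ∀ i b, ι i (algebraMap B Q b) = algebraMap B D b := by
    intro i b
    have := hι 0 i (Nat.zero_le _) (algebraMap B Q b)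
    rw [AlgHom.commutes] at this
    exact this
  have hsm : ∀ i (b : B) x, ι i (b • x) = b • ι i x := by
    intro i b x
    rw [Algebra.smul_def, map_mul, halg, Algebra.smul_def]
  have hex : ∀ d : D, ∃ i x, ι i x = d := fun d => Ring.DirectLimit.exists_of d
  have hex' : ∀ {l : ℕ} (d : Fin l → D), ∃ i, ∃ x : Fin l → Q, ∀ t, ι i (x t) = d t := by
    intro l d
    choose i x hx using fun t => hex (d t)
    refine ⟨∑ t, i t, fun t => (e ^ ((∑ t, i t) - i t)) (x t), fun t => ?_⟩
    rw [hι _ _ (Finset.single_le_sum (f := i) (fun _ _ => Nat.zero_le _) (Finset.mem_univ t)), hx]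
  have hzero : ∀ i x, ι i x = 0 → ∃ j, i ≤ j ∧ (e ^ (j - i)) x = 0 := by
    intro i x h
    obtain ⟨j, hij, h⟩ := Ring.DirectLimit.of.zero_exact (f' := f) h
    exact ⟨j, hij, h⟩
  have hflat : Module.Flat B D := by
    apply Module.Flat.of_forall_isTrivialRelation
    intro l c d hd
    obtain ⟨i, x, hx⟩ := hex' d
    have h0 : ι i (∑ t, c t • x t) = 0 := by
      rw [map_sum, ← hd]
      exact Finset.sum_congr rfl fun t _ => by rw [hsm, hx]
    obtain ⟨j, hij, h0⟩ := hzero _ _ h0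
    have h1 : ∑ t, c t • ((e ^ (j - i)) (x t)) = 0 := by
      rw [← h0, map_sum]
      exact Finset.sum_congr rfl fun t _ => by rw [map_smul]
    obtain ⟨k, m, y, hy, hm⟩ := Module.Flat.isTrivialRelation_of_sum_smul_eq_zero (R := B) (M := Q) (f := c)
      (x := fun t => (e ^ (j - i)) (x t)) h1
    refine ⟨k, m, fun s => ι j (y s), fun t => ?_, hm⟩
    have hyt : (e ^ (j - i)) (x t) = ∑ j, m t j • y j := hy t
    rw [← hx, ← hι i j hij, hyt, map_sum]
    exact Finset.sum_congr rfl fun t _ => by rw [hsm]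
  have hπe' : ∀ n x, π ((e ^ n) x) = π x := by
    intro n
    induction n with
    | zero => intro x; simp
    | succ n ih => intro x; rw [pow_succ, AlgHom.mul_apply, ih, hπe]
  let ρ₀ : D →+* C := Ring.DirectLimit.lift G (fun i j h => f i j h) C (fun _ => (π : Q →+* C))
    (fun i j h x => hπe' _ _)
  have hρ : ∀ i x, ρ₀ (ι i x) = π x := fun i x => Ring.DirectLimit.lift_of ..
  have hρc : ∀ b, ρ₀ (algebraMap B D b) = algebraMap B C b := by
    intro b
    rw [← halg 0, hρ, AlgHom.commutes]
  let ρ : D →ₐ[B] C := { ρ₀ with commutes' := hρc }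
  refine ⟨D, inferInstance, inferInstance, hflat, ρ, ?_, ?_⟩
  · intro c
    obtain ⟨x, rfl⟩ := hπ c
    exact ⟨ι 0 x, hρ 0 x⟩
  · intro d
    constructor
    · obtain ⟨i, x, rfl⟩ := hex d
      intro h
      have h : π x = 0 := by rw [← hρ i]; exact h
      obtain ⟨y, hy⟩ := he x h
      refine ⟨ι (i + 1) y, ?_⟩
      rw [← hsm, ← hy, ← hι i (i+1) (by omega)]
      simp
    · rintro ⟨y, rfl⟩
      rw [map_smul, Algebra.smul_def, haC, zero_mul]


theorem isAdicComplete_of_equiv {R M N : Type*} [CommRing R] [AddCommGroup M] [Module R M]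
    [AddCommGroup N] [Module R N] (I : Ideal R) (e : M ≃ₗ[R] N) [h : IsAdicComplete I M] :
    IsAdicComplete I N := by
  have key : ∀ (n : ℕ) (y : N), y ∈ (I ^ n • ⊤ : Submodule R N) ↔ e.symm y ∈ (I ^ n • ⊤ : Submodule R M) := by
    intro n y
    have : (I ^ n • ⊤ : Submodule R N) = (I ^ n • ⊤ : Submodule R M).map (e : M →ₗ[R] N) := by
      rw [Submodule.map_smul'', Submodule.map_top, LinearEquiv.range]
    rw [this]
    constructor
    · rintro ⟨z, hz, rfl⟩
      simpa using hz
    · intro hz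
      exact ⟨_, hz, by simp⟩
  refine { haus' := ?_, prec' := ?_ }
  · intro x hx
    have : e.symm x = 0 := by
      refine h.haus' _ fun n => ?_
      have := hx n
      rw [SModEq.zero] at this ⊢
      exact (key n x).1 this
    simpa using this
  · intro f hf
    obtain ⟨L, hL⟩ := h.prec' (fun n => e.symm (f n)) (by
      intro m n hmn
      have := hf hmn
      rw [SModEq.sub_mem, key, map_sub] at this
      rwa [SModEq.sub_mem])
    refine ⟨e L, fun n => ?_⟩
    have := hL n
    rw [SModEq.sub_mem] at this ⊢
    rw [key, map_sub, e.symm_apply_apply]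
    exact this

theorem completion_quot_complete {R : Type u} [CommRing R] [IsNoetherianRing R] (J : Ideal R) (a : R) :
    IsAdicComplete J (AdicCompletion J R ⧸ Ideal.span {algebraMap R (AdicCompletion J R) a}) := by
  have fg : J.FG := IsNoetherian.noetherian J
  let g : R →ₗ[R] (R ⧸ Ideal.span {a}) := (Ideal.span {a} : Submodule R R).mkQ
  have hg : Function.Surjective g := Submodule.mkQ_surjective _
  let f : (Ideal.span {a} : Submodule R R) →ₗ[R] R := Submodule.subtype _
  have hex := AdicCompletion.map_exact (I := J) (f := f) (g := g) (Submodule.subtype_injective _)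
    (LinearMap.exact_subtype_mkQ _) hg
  let t : R →ₗ[R] (Ideal.span {a} : Submodule R R) :=
    (LinearMap.toSpanSingleton R R a).codRestrict _ (fun r => by
      simpa using Ideal.mul_mem_left _ r (Ideal.mem_span_singleton_self a))
  have ht : Function.Surjective t := by
    rintro ⟨x, hx⟩
    obtain ⟨r, hr⟩ := Ideal.mem_span_singleton'.1 hx
    exact ⟨r, Subtype.ext (by simpa [t] using hr)⟩
  have hsurj := AdicCompletion.map_surjective J ht
  have hft : f ∘ₗ t = LinearMap.lsmul R R a := by
    ext; simp [f, t]
  have hcomp : ∀ x, AdicCompletion.map J f (AdicCompletion.map J t x) =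
      a • x := by
    intro x
    rw [AdicCompletion.map_comp_apply, hft]
    induction x using AdicCompletion.induction_on with
    | _ c =>
    refine AdicCompletion.ext fun n => ?_
    rw [AdicCompletion.map_mk]
    simp
    rfl
  let G : AdicCompletion J R →ₗ[R] AdicCompletion J (R ⧸ Ideal.span {a}) :=
    (AdicCompletion.map J g).restrictScalars R
  have hG : Function.Surjective G := AdicCompletion.map_surjective J hg
  have hker : LinearMap.ker G = (Ideal.span {algebraMap R (AdicCompletion J R) a}).restrictScalars R := by
    ext x
    rw [LinearMap.mem_ker, Submodule.restrictScalars_mem, Ideal.mem_span_singleton']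
    change AdicCompletion.map J g x = 0 ↔ _
    rw [hex x]
    constructor
    · rintro ⟨y, rfl⟩
      obtain ⟨z, rfl⟩ := hsurj y
      exact ⟨z, by rw [hcomp, Algebra.smul_def, mul_comm]⟩
    · rintro ⟨z, rfl⟩
      exact ⟨AdicCompletion.map J t z, by rw [hcomp, Algebra.smul_def, mul_comm]⟩
  have e1 := G.quotKerEquivOfSurjective hG
  rw [hker] at e1
  have : IsAdicComplete J (AdicCompletion J (R ⧸ Ideal.span {a})) := AdicCompletion.isAdicComplete fg
  exact isAdicComplete_of_equiv J (M := AdicCompletion J (R ⧸ Ideal.span {a}))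
    (e1.symm.trans (Submodule.Quotient.restrictScalarsEquiv R _))

theorem exists_Q {B A C : Type u} [CommRing B] [CommRing A] [CommRing C] [IsNoetherianRing B]
    [Algebra B A] [Algebra A C] [Algebra B C] [IsScalarTower B A C] (a : B)
    (hBA : Function.Surjective (algebraMap B A))
    (hker : ∀ b, algebraMap B A b = 0 ↔ ∃ c, b = a * c)
    [Algebra.FormallySmooth A C] [Algebra.FiniteType A C] :
    ∃ (Q : Type u) (_ : CommRing Q) (_ : Algebra B Q) (_ : Module.Flat B Q) (π : Q →ₐ[B] C)
      (e : Q →ₐ[B] Q), Function.Surjective π ∧ (∀ x, π (e x) = π x) ∧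
      (∀ x, π x = 0 → ∃ y, e x = a • y) := by
  have haA : algebraMap B A a = 0 := (hker a).2 ⟨1, by simp⟩
  have haC : algebraMap B C a = 0 := by
    rw [IsScalarTower.algebraMap_apply B A C, haA, map_zero]
  have hBAft : Algebra.FiniteType B A :=
    Algebra.FiniteType.of_surjective (Algebra.ofId B A) hBA
  have hBC : Algebra.FiniteType B C := Algebra.FiniteType.trans hBAft inferInstance
  obtain ⟨n, f, hf⟩ := Algebra.FiniteType.iff_quotient_mvPolynomial''.1 hBC
  let R := MvPolynomial (Fin n) B
  let J : Ideal R := RingHom.ker f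
  have fg : J.FG := IsNoetherian.noetherian J
  let Q := AdicCompletion J R
  have hflatR : Module.Flat R Q := inferInstance
  have hflat : Module.Flat B Q := Module.Flat.trans B R Q
  let π : Q →ₐ[B] C := AdicCompletion.kerProj hf
  have hπ : Function.Surjective π := AdicCompletion.kerProj_surjective hf
  have hπR : ∀ r : R, π (algebraMap R Q r) = f r := fun r => rfl
  let J' : Ideal Q := J.map (algebraMap R Q)
  have hJ'c : IsAdicComplete J' Q := AdicCompletion.isAdicComplete_self J fg
  have hkerπ : ∀ x, π x = 0 ↔ x ∈ J' := by
    intro x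
    have := AdicCompletion.ker_evalOneₐ_eq_map J fg
    change _ ↔ x ∈ J.map (algebraMap R (AdicCompletion J R))
    rw [← this]
    change (Ideal.quotientKerAlgEquivOfSurjective hf) (AdicCompletion.evalOneₐ J x) = 0 ↔ _
    rw [map_eq_zero_iff _ (AlgEquiv.injective _)]
    rfl
  have haJ' : algebraMap B Q a ∈ J' := by
    rw [← hkerπ, AlgHom.commutes, haC]
  let I : Ideal Q := Ideal.span {algebraMap B Q a}
  have hIa : ∀ x, x ∈ I → ∃ y, x = a • y := by
    intro x hx
    obtain ⟨y, hy⟩ := Ideal.mem_span_singleton'.1 hx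
    exact ⟨y, by rw [Algebra.smul_def, mul_comm, hy]⟩
  let Qb := Q ⧸ I
  let q : Q →+* Qb := Ideal.Quotient.mk I
  have hq : Function.Surjective q := Ideal.Quotient.mk_surjective
  have hQbR : IsAdicComplete J Qb :=
    completion_quot_complete J (algebraMap B R a)
  let K : Ideal Qb := J.map (algebraMap R Qb)
  have hQb : IsAdicComplete K Qb := (IsAdicComplete.map_algebraMap_iff J Qb).2 hQbR
  have hKJ : K = J'.map q := by
    rw [Ideal.map_map]; rfl
  let ι : A →+* Qb := RingHom.liftOfSurjective (algebraMap B A) hBA ⟨q.comp (algebraMap B Q), by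
    intro b hb
    obtain ⟨c, rfl⟩ := (hker b).1 hb
    rw [RingHom.mem_ker, RingHom.comp_apply, map_mul]
    exact Ideal.Quotient.eq_zero_iff_mem.2 (Ideal.mul_mem_right _ _ (Ideal.mem_span_singleton_self _))⟩
  have hι : ∀ b, ι (algebraMap B A b) = q (algebraMap B Q b) := fun b =>
    RingHom.liftOfSurjective_comp_apply _ _ _ _
  let _ : Algebra A Qb := ι.toAlgebra
  let πb0 : Qb →+* C := Ideal.Quotient.lift I (π : Q →+* C) (by
    intro x hx
    obtain ⟨y, rfl⟩ := hIa x hx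
    simp [haC, Algebra.smul_def])
  have hπb0 : ∀ x, πb0 (q x) = π x := fun x => Ideal.Quotient.lift_mk _ _ _
  let πb : Qb →ₐ[A] C := { πb0 with
    commutes' := by
      intro x
      obtain ⟨b, rfl⟩ := hBA x
      change πb0 (ι _) = _
      rw [hι, hπb0, AlgHom.commutes, IsScalarTower.algebraMap_apply B A C] }
  have hπb : ∀ x, πb (q x) = π x := hπb0
  have hπbs : Function.Surjective πb := fun c => by
    obtain ⟨x, rfl⟩ := hπ c
    exact ⟨q x, hπb x⟩
  have hK : RingHom.ker πb = K := by
    ext x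
    obtain ⟨x, rfl⟩ := hq x
    rw [RingHom.mem_ker, hπb, hkerπ, hKJ, Ideal.mem_map_iff_of_surjective q hq]
    constructor
    · intro h; exact ⟨x, h, rfl⟩
    · rintro ⟨y, hy, hxy⟩
      have : x = y + (x - y) := by ring
      rw [this]
      refine J'.add_mem hy ?_
      have h2 : x - y ∈ I := Ideal.Quotient.eq.1 hxy.symm
      exact (Ideal.span_singleton_le_iff_mem _).2 haJ' h2
  have hQb' : IsAdicComplete (RingHom.ker πb) Qb := by rw [hK]; exact hQb
  obtain ⟨g, hg⟩ := Algebra.FormallySmooth.exists_mkₐ_comp_eq_of_isAdicComplete (R := A)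
    (I := RingHom.ker πb) ((Ideal.quotientKerAlgEquivOfSurjective hπbs).symm : C →ₐ[A] Qb ⧸ RingHom.ker πb)
  have hπg : ∀ c, πb (g c) = c := by
    intro c
    have h1 := congrArg (Ideal.quotientKerAlgEquivOfSurjective hπbs) (DFunLike.congr_fun hg c)
    simpa using h1
  choose s hs using hq
  let ψ : R →ₐ[B] Q := MvPolynomial.aeval fun i => s (g (f (MvPolynomial.X i)))
  have hgB : ∀ b, g (algebraMap B C b) = q (algebraMap B Q b) := by
    intro b
    rw [IsScalarTower.algebraMap_apply B A C, AlgHom.commutes, ← hι]; rfl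
  have hψ : ∀ r, q (ψ r) = g (f r) := by
    intro r
    have : (q.comp (ψ : R →+* Q)) = (g : C →+* Qb).comp (f : R →+* C) := by
      apply MvPolynomial.ringHom_ext
      · intro b
        have h1 : ψ (MvPolynomial.C b) = algebraMap B Q b := ψ.commutes b
        have h2 : f (MvPolynomial.C b) = algebraMap B C b := f.commutes b
        change q (ψ (MvPolynomial.C b)) = g (f (MvPolynomial.C b))
        rw [h1, h2, hgB]
      · intro i
        have h1 : ψ (MvPolynomial.X i) = s (g (f (MvPolynomial.X i))) := MvPolynomial.aeval_X _ i
        change q (ψ (MvPolynomial.X i)) = g (f (MvPolynomial.X i))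
        rw [h1, hs]
    exact DFunLike.congr_fun this r
  have hπψ : ∀ r, π (ψ r) = f r := by
    intro r
    rw [← hπb, hψ, hπg]
  have hψI : ∀ r ∈ J, ψ r ∈ I := by
    intro r hr
    have : f r = 0 := hr
    rw [← Ideal.Quotient.eq_zero_iff_mem]
    change q _ = 0
    rw [hψ, this, map_zero]
  have hψJ : J ≤ J'.comap ψ := by
    intro r hr
    exact (Ideal.span_singleton_le_iff_mem _).2 haJ' (hψI r hr)
  have hψJn : ∀ n, J ^ n ≤ (J' ^ n).comap ψ := fun n =>
    (Ideal.pow_right_mono hψJ n).trans (Ideal.le_comap_pow _ n)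
  let E : ∀ n : ℕ, Q →ₐ[B] Q ⧸ J' ^ n := fun n =>
    (Ideal.Quotient.liftₐ (J ^ n) ((Ideal.Quotient.mkₐ B (J' ^ n)).comp ψ) (by
      intro r hr
      exact Ideal.Quotient.eq_zero_iff_mem.2 (hψJn n hr))).comp
    ((AdicCompletion.evalₐ J n).restrictScalars B)
  have hEmk : ∀ (n : ℕ) (x : Q) (r : R), Ideal.Quotient.mk (J ^ n) r = AdicCompletion.evalₐ J n x →
      E n x = Ideal.Quotient.mk (J' ^ n) (ψ r) := by
    intro n x r h
    simp only [E, AlgHom.comp_apply]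
    rw [AlgHom.restrictScalars_apply, ← h]
    rfl
  have hE : ∀ {m n : ℕ} (hle : m ≤ n),
      (Ideal.Quotient.factorₐ B (Ideal.pow_le_pow_right hle)).comp (E n) = E m := by
    intro m n hle
    ext x
    obtain ⟨c, rfl⟩ := AdicCompletion.mk_surjective J R x
    let r : R := c n
    have hr : Ideal.Quotient.mk (J ^ n) r = AdicCompletion.evalₐ J n (AdicCompletion.mk J R c) := by
      rw [AdicCompletion.evalₐ_mk]
    have hr2 : Ideal.Quotient.mk (J ^ m) r = AdicCompletion.evalₐ J m (AdicCompletion.mk J R c) := by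
      rw [AdicCompletion.evalₐ_mk]
      have h := c.property hle
      rw [SModEq.sub_mem, smul_eq_mul, Ideal.mul_top] at h
      exact (Ideal.Quotient.eq.2 h).symm
    have h1 := hEmk n _ r hr
    have h2 := hEmk m _ r hr2
    rw [AlgHom.comp_apply, h1, h2]
    rfl
  let e : Q →ₐ[B] Q := IsAdicComplete.liftAlgHom J' E hE
  have heR : ∀ r : R, e (algebraMap R Q r) = ψ r := by
    intro r
    have : e.comp (IsScalarTower.toAlgHom B R Q) = ψ := by
      refine IsAdicComplete.algHom_ext J' fun n => ?_
      ext1 r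
      exact IsAdicComplete.mk_liftAlgHom J' E hE n _
    exact DFunLike.congr_fun this r
  have heJ : ∀ x ∈ J', e x ∈ I := by
    have : J' ≤ I.comap e := by
      refine Ideal.map_le_iff_le_comap.2 fun r hr => ?_
      change e _ ∈ I
      rw [heR]
      exact hψI r hr
    exact this
  refine ⟨Q, inferInstance, inferInstance, hflat, π, e, hπ, ?_, ?_⟩
  · intro x
    obtain ⟨r, hr⟩ := hf (π x)
    have h1 : x - algebraMap R Q r ∈ J' := by
      rw [← hkerπ, map_sub, hπR, hr, sub_self]
    have h2 := heJ _ h1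
    have h3 : π (e (x - algebraMap R Q r)) = 0 := by
      rw [hkerπ]; exact (Ideal.span_singleton_le_iff_mem _).2 haJ' h2
    rw [map_sub, map_sub, heR, hπψ, hr, sub_eq_zero] at h3
    exact h3
  · intro x hx
    exact hIa _ (heJ _ ((hkerπ x).1 hx))

theorem lift_step {R S T T' : Type u} [CommRing R] [CommRing S] [CommRing T] [CommRing T']
    (f : R →+* S) (hf : f.FormallySmooth) (t : R →+* T) (q : T →+* T')
    (hq : Function.Surjective q) (hnil : ∀ x y, q x = 0 → q y = 0 → x * y = 0)
    (s : S →+* T') (h : s.comp f = q.comp t) :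
    ∃ s' : S →+* T, q.comp s' = s ∧ s'.comp f = t := by
  algebraize [f, t, q.comp t]
  let qa : T →ₐ[R] T' := { q with commutes' := fun r => rfl }
  let sa : S →ₐ[R] T' := { s with commutes' := fun r => DFunLike.congr_fun h r }
  have hn : IsNilpotent (RingHom.ker (qa : T →+* T')) := by
    refine ⟨2, ?_⟩
    rw [pow_two, Ideal.zero_eq_bot, eq_bot_iff, Ideal.mul_le]
    intro x hx y hy
    exact hnil x y hx hy
  let g := Algebra.FormallySmooth.liftOfSurjective sa qa hq hn
  refine ⟨g, ?_, ?_⟩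
  · ext x
    exact Algebra.FormallySmooth.liftOfSurjective_apply sa qa hq hn x
  · ext x
    exact g.commutes x

/-- The map `B/I → M/IM`. -/
noncomputable def quotHom {B : Type u} (M : Type u) [CommRing B] [CommRing M] [Algebra B M] (I : Ideal B) :
    B ⧸ I →+* M ⧸ I.map (algebraMap B M) :=
  Ideal.quotientMap _ (algebraMap B M) Ideal.le_comap_map

theorem quotHom_flat {B : Type u} (M : Type u) [CommRing B] [CommRing M] [Algebra B M] [Module.Flat B M]
    (I : Ideal B) : (quotHom M I).Flat := by
  have : Module.Flat (B ⧸ I) (M ⧸ I.map (algebraMap B M)) :=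
    Module.Flat.of_linearEquiv
      (Algebra.TensorProduct.quotIdealMapEquivQuotTensor M I).toLinearEquiv
  exact RingHom.flat_algebraMap_iff.2 this

theorem quotHom_smooth {B A M C : Type u} [CommRing B] [CommRing A] [CommRing C] [CommRing M]
    [Algebra B A] [Algebra A C] [Algebra B C] [IsScalarTower B A C] (a : B)
    (hBA : Function.Surjective (algebraMap B A))
    (hker : ∀ b, algebraMap B A b = 0 ↔ ∃ c, b = a * c)
    [Algebra.FormallySmooth A C] [Algebra B M] [Module.Flat B M] (σ : M →ₐ[B] C)
    (hσ : Function.Surjective σ) (hσk : RingHom.ker σ = Ideal.span {algebraMap B M a}) (n : ℕ) :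
    (quotHom M (Ideal.span {a} ^ (n + 1))).FormallySmooth := by
  have hI : RingHom.ker (algebraMap B A) = Ideal.span {a} := by
    ext b
    rw [RingHom.mem_ker, hker, Ideal.mem_span_singleton]
    rfl
  have hIM : (Ideal.span {a}).map (algebraMap B M) = RingHom.ker σ := by
    rw [hσk, Ideal.map_span, Set.image_singleton]
  induction n with
  | zero =>
    let qR : B ⧸ Ideal.span {a} ^ (0 + 1) →+* A := Ideal.Quotient.lift _ (algebraMap B A) (by
      intro b hb; rw [zero_add, pow_one, ← hI] at hb; exact hb)
    let qS : M ⧸ (Ideal.span {a} ^ (0 + 1)).map (algebraMap B M) →+* C :=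
      Ideal.Quotient.lift _ (σ : M →+* C) (by
      intro b hb; rw [zero_add, pow_one, hIM] at hb; exact hb)
    have kR : RingHom.ker qR = ⊥ := by
      rw [eq_bot_iff]
      intro x hx
      obtain ⟨x, rfl⟩ := Ideal.Quotient.mk_surjective x
      have hx' : algebraMap B A x = 0 := hx
      rw [Ideal.mem_bot, Ideal.Quotient.eq_zero_iff_mem, zero_add, pow_one, ← hI]
      exact hx'
    have kS : RingHom.ker qS = ⊥ := by
      rw [eq_bot_iff]
      intro x hx
      obtain ⟨x, rfl⟩ := Ideal.Quotient.mk_surjective x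
      have hx' : σ x = 0 := hx
      rw [Ideal.mem_bot, Ideal.Quotient.eq_zero_iff_mem, zero_add, pow_one, hIM]
      exact hx'
    refine RingHom.FormallySmooth.of_flat_of_ker_eq_map_of_square_zero _ (quotHom_flat M _)
      qR qS (algebraMap A C) ?_ ?_ ?_ ?_ ?_ ?_
    · exact Ideal.Quotient.lift_surjective_of_surjective _ _ hBA
    · exact Ideal.Quotient.lift_surjective_of_surjective _ _ hσ
    · apply Ideal.Quotient.ringHom_ext
      ext b
      change σ (algebraMap B M b) = algebraMap A C (algebraMap B A b)
      rw [AlgHom.commutes, IsScalarTower.algebraMap_apply B A C]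
    · rw [kR]; simp
    · rw [kR, kS, Ideal.map_bot]
    · exact RingHom.formallySmooth_algebraMap.2 inferInstance
  | succ n ih =>
    have hle : Ideal.span {a} ^ (n + 1 + 1) ≤ Ideal.span {a} ^ (n + 1) :=
      Ideal.pow_le_pow_right (by omega)
    have hleM := Ideal.map_mono (f := algebraMap B M) hle
    refine RingHom.FormallySmooth.of_flat_of_ker_eq_map_of_square_zero _ (quotHom_flat M _)
      (Ideal.Quotient.factor hle) (Ideal.Quotient.factor hleM) _ (Ideal.Quotient.factor_surjective _)
      (Ideal.Quotient.factor_surjective _) ?_ ?_ ?_ ih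
    · apply Ideal.Quotient.ringHom_ext
      ext b
      rfl
    · rw [Ideal.Quotient.factor_ker, ← Ideal.map_pow, ← pow_mul, Ideal.map_mk_eq_bot_of_le]
      exact Ideal.pow_le_pow_right (by omega)
    · rw [Ideal.Quotient.factor_ker, Ideal.Quotient.factor_ker, Ideal.map_map, Ideal.map_map]
      rfl

theorem exists_lift_hom {B A M N C : Type u} [CommRing B] [CommRing A] [CommRing C] [CommRing M]
    [CommRing N] [Algebra B A] [Algebra A C] [Algebra B C] [IsScalarTower B A C] (a : B)
    (hBA : Function.Surjective (algebraMap B A))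
    (hker : ∀ b, algebraMap B A b = 0 ↔ ∃ c, b = a * c)
    [Algebra.FormallySmooth A C] [Algebra B M] [Module.Flat B M] (σ : M →ₐ[B] C)
    (hσ : Function.Surjective σ) (hσk : RingHom.ker σ = Ideal.span {algebraMap B M a})
    [Algebra B N] (τ : N →ₐ[B] C)
    (hτ : Function.Surjective τ) (hτk : RingHom.ker τ = Ideal.span {algebraMap B N a})
    [hN : IsAdicComplete (Ideal.span {algebraMap B N a}) N] :
    ∃ g : M →ₐ[B] N, ∀ x, τ (g x) = σ x := by
  let I : Ideal B := Ideal.span {a}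
  let K : Ideal N := Ideal.span {algebraMap B N a}
  have hIK : I.map (algebraMap B N) = K := by
    rw [Ideal.map_span, Set.image_singleton]
  have step : ∀ (n : ℕ) (φ : M →ₐ[B] N ⧸ K ^ (n + 1)), ∃ φ' : M →ₐ[B] N ⧸ K ^ (n + 2),
      (Ideal.Quotient.factorₐ B (Ideal.pow_le_pow_right (Nat.le_succ (n + 1)))).comp φ' = φ := by
    intro n φ
    have hIn : (I ^ (n + 2)) ≤ (K ^ (n + 2)).comap (algebraMap B N) := by
      rw [← Ideal.map_le_iff_le_comap, Ideal.map_pow, hIK]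
    let t : B ⧸ I ^ (n + 2) →+* N ⧸ K ^ (n + 2) := Ideal.quotientMap _ (algebraMap B N) hIn
    let q : N ⧸ K ^ (n + 2) →+* N ⧸ K ^ (n + 1) :=
      Ideal.Quotient.factor (Ideal.pow_le_pow_right (Nat.le_succ (n + 1)))
    have hφ : (I ^ (n + 2)).map (algebraMap B M) ≤ RingHom.ker φ := by
      rw [Ideal.map_le_iff_le_comap]
      intro b hb
      rw [Ideal.mem_comap, RingHom.mem_ker, AlgHom.commutes]
      change Ideal.Quotient.mk _ (algebraMap B N b) = 0
      exact Ideal.Quotient.eq_zero_iff_mem.2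
        (Ideal.pow_le_pow_right (Nat.le_succ (n + 1)) (hIn hb))
    let s : M ⧸ (I ^ (n + 2)).map (algebraMap B M) →+* N ⧸ K ^ (n + 1) :=
      Ideal.Quotient.lift _ (φ : M →+* N ⧸ K ^ (n + 1)) (fun x hx => hφ hx)
    obtain ⟨s', h1, h2⟩ := lift_step (quotHom M (I ^ (n + 2)))
      (quotHom_smooth a hBA hker σ hσ hσk (n + 1)) t q (Ideal.Quotient.factor_surjective _) (by
        intro x y hx hy
        obtain ⟨x, rfl⟩ := Ideal.Quotient.mk_surjective x
        obtain ⟨y, rfl⟩ := Ideal.Quotient.mk_surjective y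
        have hx' : x ∈ K ^ (n + 1) := Ideal.Quotient.eq_zero_iff_mem.1 hx
        have hy' : y ∈ K ^ (n + 1) := Ideal.Quotient.eq_zero_iff_mem.1 hy
        rw [← map_mul, Ideal.Quotient.eq_zero_iff_mem]
        have := Ideal.mul_mem_mul hx' hy'
        rw [← pow_add] at this
        exact Ideal.pow_le_pow_right (by omega) this) s (by
        apply Ideal.Quotient.ringHom_ext
        ext b
        exact φ.commutes b)
    refine ⟨{ s'.comp (Ideal.Quotient.mk _) with
      commutes' := fun b => ?_ }, ?_⟩
    · exact DFunLike.congr_fun h2 (Ideal.Quotient.mk _ b)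
    · ext x
      exact DFunLike.congr_fun h1 (Ideal.Quotient.mk _ x)
  choose st hst using step
  have hkK : RingHom.ker τ ≤ K ^ (0 + 1) := by rw [hτk, zero_add, pow_one]
  let φ0 : M →ₐ[B] N ⧸ K ^ (0 + 1) := (Ideal.Quotient.factorₐ B hkK).comp
    ((Ideal.quotientKerAlgEquivOfSurjective hτ).symm.toAlgHom.comp σ)
  have hφ0 : ∀ x y, τ y = σ x → φ0 x = Ideal.Quotient.mk _ y := by
    intro x y h
    change Ideal.Quotient.factorₐ B hkK ((Ideal.quotientKerAlgEquivOfSurjective hτ).symm (σ x)) = _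
    rw [← h]
    have : (Ideal.quotientKerAlgEquivOfSurjective hτ).symm (τ y) = Ideal.Quotient.mk _ y := by
      rw [AlgEquiv.symm_apply_eq]
      rfl
    rw [this]
    rfl
  let Φ : ∀ n : ℕ, M →ₐ[B] N ⧸ K ^ (n + 1) := fun n => Nat.rec φ0 (fun n φ => st n φ) n
  have hΦ : ∀ n, (Ideal.Quotient.factorₐ B (Ideal.pow_le_pow_right (Nat.le_succ (n + 1)))).comp
      (Φ (n + 1)) = Φ n := fun n => hst n (Φ n)
  let E : ∀ n : ℕ, M →ₐ[B] N ⧸ K ^ n := fun n =>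
    (Ideal.Quotient.factorₐ B (Ideal.pow_le_pow_right (Nat.le_succ n))).comp (Φ n)
  have hE1 : ∀ n, (Ideal.Quotient.factorₐ B (Ideal.pow_le_pow_right (Nat.le_succ n))).comp (E (n + 1))
      = E n := by
    intro n
    change AlgHom.comp _ (AlgHom.comp _ (Φ (n + 1))) = _
    rw [hΦ n]
  have hE : ∀ {m n : ℕ} (hle : m ≤ n),
      (Ideal.Quotient.factorₐ B (Ideal.pow_le_pow_right hle)).comp (E n) = E m := by
    intro m n hle
    induction n, hle using Nat.le_induction with
    | base =>
      ext x
      obtain ⟨y, hy⟩ := Ideal.Quotient.mk_surjective (E m x)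
      rw [AlgHom.comp_apply, ← hy]
      rfl
    | succ n hmn ih =>
      ext x
      obtain ⟨y, hy⟩ := Ideal.Quotient.mk_surjective (E (n + 1) x)
      have h1 := DFunLike.congr_fun (hE1 n) x
      rw [AlgHom.comp_apply, ← hy] at h1
      have h2 := DFunLike.congr_fun ih x
      rw [AlgHom.comp_apply, ← h1] at h2
      rw [← h2]
      change Ideal.Quotient.factorₐ B (Ideal.pow_le_pow_right (hmn.trans (Nat.le_succ n))) (E (n + 1) x) = _
      rw [← hy]
      rfl
  refine ⟨IsAdicComplete.liftAlgHom K E hE, fun x => ?_⟩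
  obtain ⟨y, hy⟩ := hτ (σ x)
  have h1 := IsAdicComplete.mk_liftAlgHom K E hE 1 x
  have h2 : E 1 x = Φ 0 x := DFunLike.congr_fun (hΦ 0) x
  have h3 : Φ 0 x = Ideal.Quotient.mk _ y := hφ0 x y hy
  rw [h2, h3] at h1
  have h4 := Ideal.Quotient.eq.1 h1
  rw [pow_one] at h4
  have h5 := hτk.ge h4
  rw [RingHom.mem_ker, map_sub, hy, sub_eq_zero] at h5
  exact h5

theorem exists_lift_equiv {B A M N C : Type u} [CommRing B] [CommRing A] [CommRing C] [CommRing M]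
    [CommRing N] [Algebra B A] [Algebra A C] [Algebra B C] [IsScalarTower B A C] (a : B)
    (hBA : Function.Surjective (algebraMap B A))
    (hker : ∀ b, algebraMap B A b = 0 ↔ ∃ c, b = a * c)
    [Algebra.FormallySmooth A C] [Algebra B M] [Module.Flat B M] (σ : M →ₐ[B] C)
    (hσ : Function.Surjective σ) (hσk : RingHom.ker σ = Ideal.span {algebraMap B M a})
    [hM : IsAdicComplete (Ideal.span {algebraMap B M a}) M]
    [Algebra B N] (τ : N →ₐ[B] C)
    (hτ : Function.Surjective τ) (hτk : RingHom.ker τ = Ideal.span {algebraMap B N a})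
    [hN : IsAdicComplete (Ideal.span {algebraMap B N a}) N]
    (htf : ∀ x : N, algebraMap B N a * x = 0 → x = 0) :
    ∃ e : M ≃ₐ[B] N, ∀ x, τ (e x) = σ x := by
  obtain ⟨g, hg⟩ := exists_lift_hom a hBA hker σ hσ hσk τ hτ hτk
  have hinj : Function.Injective g := by
    rw [injective_iff_map_eq_zero]
    intro x hx
    have key : ∀ n : ℕ, ∃ y, x = algebraMap B M a ^ n • y ∧ g y = 0 := by
      intro n
      induction n with
      | zero => exact ⟨x, by simp, hx⟩
      | succ n ih =>
        obtain ⟨y, hy, hgy⟩ := ih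
        have h1 : y ∈ RingHom.ker σ := by rw [RingHom.mem_ker, ← hg, hgy, map_zero]
        rw [hσk] at h1
        obtain ⟨z, rfl⟩ := Ideal.mem_span_singleton.1 h1
        refine ⟨z, ?_, htf _ ?_⟩
        · rw [hy, pow_succ, smul_eq_mul, smul_eq_mul, mul_assoc]
        · rw [← hgy, map_mul, AlgHom.commutes]
    refine hM.toIsHausdorff.haus x fun n => ?_
    rw [SModEq.zero, mem_span_pow_smul_top]
    obtain ⟨y, hy, -⟩ := key n
    exact ⟨y, hy⟩
  have hmap : (Ideal.span {algebraMap B M a}).map (g : M →+* N) = Ideal.span {algebraMap B N a} := by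
    rw [Ideal.map_span, Set.image_singleton]
    simp
  have hsurj : Function.Surjective g := by
    have : IsHausdorff ((Ideal.span {algebraMap B M a}).map (g : M →+* N)) N := by
      rw [hmap]; infer_instance
    refine surjective_of_mk_map_comp_surjective (I := Ideal.span {algebraMap B M a})
      (g : M →+* N) ?_
    intro y
    obtain ⟨y, rfl⟩ := Ideal.Quotient.mk_surjective y
    obtain ⟨x, hx⟩ := hσ (τ y)
    refine ⟨x, Ideal.Quotient.eq.2 ?_⟩
    rw [hmap, ← hτk, RingHom.mem_ker, map_sub, sub_eq_zero, ← hx]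
    exact hg x
  exact ⟨AlgEquiv.ofBijective g ⟨hinj, hsurj⟩, hg⟩

section
open TensorProduct
variable {p : ℕ} [Fact p.Prime] {k : Type u} [Field k] [CharP k p] [PerfectRing k p]
    {A : Type u} [CommRing A] [Algebra k A]

/-- The reduction map `B → A` of a lift. -/
noncomputable def WittLift.red (L : WittLift p k A) : L.B →+* A :=
  (L.equiv : (L.B ⧸ Ideal.span {(p : L.B)}) →+* A).comp (Ideal.Quotient.mk _)

theorem WittLift.red_surjective (L : WittLift p k A) : Function.Surjective L.red :=
  L.equiv.surjective.comp Ideal.Quotient.mk_surjective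

theorem WittLift.red_eq_zero (L : WittLift p k A) (b : L.B) :
    L.red b = 0 ↔ ∃ c, b = (p : L.B) * c := by
  change L.equiv (Ideal.Quotient.mk _ b) = 0 ↔ _
  rw [map_eq_zero_iff _ L.equiv.injective, Ideal.Quotient.eq_zero_iff_mem,
    Ideal.mem_span_singleton]
  rfl

theorem WittLift.noetherian (L : WittLift p k A) [IsNoetherianRing A] : IsNoetherianRing L.B := by
  have := L.complete
  have : IsNoetherianRing (L.B ⧸ Ideal.span {(p : L.B)}) :=
    isNoetherianRing_of_ringEquiv A L.equiv.symm
  exact isNoetherianRing_of_complete (p : L.B)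

theorem torsion_free_of_flat {R M : Type u} [CommRing R] [AddCommGroup M] [Module R M]
    [Module.Flat R M] (r : R) (hr : ∀ x : R, r * x = 0 → x = 0) (m : M) (h : r • m = 0) : m = 0 := by
  have h1 : Function.Injective (LinearMap.lsmul R R r) := by
    rw [injective_iff_map_eq_zero]
    intro x hx
    exact hr x hx
  have h2 := Module.Flat.rTensor_preserves_injective_linearMap (M := M) _ h1
  have h3 : (LinearMap.lsmul R R r).rTensor M ((1 : R) ⊗ₜ[R] m) = 0 := by
    rw [LinearMap.rTensor_tmul]
    change (r • (1 : R)) ⊗ₜ[R] m = 0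
    rw [TensorProduct.smul_tmul, h, TensorProduct.tmul_zero]
  have h4 := h2 (h3.trans (map_zero _).symm)
  have h5 := congrArg (TensorProduct.lid R M) h4
  simpa using h5

end


/-- Let `A` be a smooth `k`-algebra with lift `B` and let `A → C` be a smooth
homomorphism of `k`-algebras. Then there exists a `p`-adically complete `B`-algebra `C̃`, flat
over `B`, lifting `A → C`, and such a flat lift is unique up to isomorphism. -/
theorem exists_unique_smooth_lift
    (p : ℕ) [Fact p.Prime] (k : Type u) [Field k] [CharP k p] [PerfectRing k p]
    (A : Type u) [CommRing A] [Algebra k A] (hA : Algebra.Smooth k A)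
    (L : WittLift p k A)
    (C : Type u) [CommRing C] [Algebra k C] [Algebra A C] [IsScalarTower k A C]
    (hC : Algebra.Smooth A C) :
    Nonempty (SmoothLift p k A L C) ∧
    ∀ M₁ M₂ : SmoothLift p k A L C,
      ∃ e : M₁.Ct ≃ₐ[L.B] M₂.Ct,
        ∀ x : M₁.Ct,
          M₂.equiv (Ideal.Quotient.mk _ (e x)) = M₁.equiv (Ideal.Quotient.mk _ x) := by
  have hAft : Algebra.FiniteType k A := inferInstance
  have hAn : IsNoetherianRing A := Algebra.FiniteType.isNoetherianRing k A
  have hCft : Algebra.FiniteType A C := inferInstance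
  have hCn : IsNoetherianRing C := Algebra.FiniteType.isNoetherianRing A C
  have hCs : Algebra.FormallySmooth A C := inferInstance
  have hBn : IsNoetherianRing L.B := L.noetherian
  let _ : Algebra L.B A := L.red.toAlgebra
  let _ : Algebra L.B C := ((algebraMap A C).comp L.red).toAlgebra
  have hBAC : IsScalarTower L.B A C := IsScalarTower.of_algebraMap_eq' rfl
  have hBA : Function.Surjective (algebraMap L.B A) := L.red_surjective
  have hker : ∀ b, algebraMap L.B A b = 0 ↔ ∃ c, b = (p : L.B) * c := L.red_eq_zero
  refine ⟨?_, ?_⟩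
  · obtain ⟨Q, _, _, _, π, e, hπ, hπe, he⟩ := exists_Q (B := L.B) (A := A) (C := C)
      (p : L.B) hBA hker
    have haC : algebraMap L.B C (p : L.B) = 0 := by
      rw [IsScalarTower.algebraMap_apply L.B A C, (hker _).2 ⟨1, by simp⟩, map_zero]
    obtain ⟨D, _, _, _, ρ, hρ, hρk⟩ := exists_colim (p : L.B) π hπ haC e hπe he
    obtain ⟨E, _, _, hE, σ, hσ, hσk, hEc⟩ := exists_complete_lift (p : L.B) ρ hρ hρk
    rw [map_natCast] at hσk hEc
    let eq1 : (E ⧸ Ideal.span {(p : E)}) ≃+* C :=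
      (Ideal.quotEquivOfEq hσk.symm).trans
        (RingHom.quotientKerEquivOfSurjective (f := (σ : E →+* C)) hσ)
    exact ⟨{
      Ct := E
      flat := hE
      complete := hEc
      equiv := eq1
      compat := fun b => σ.commutes b }⟩
  · intro M₁ M₂
    have mk : ∀ M : SmoothLift p k A L C, ∃ σ : M.Ct →ₐ[L.B] C,
        (∀ x, σ x = M.equiv (Ideal.Quotient.mk _ x)) ∧ Function.Surjective σ ∧
        RingHom.ker σ = Ideal.span {algebraMap L.B M.Ct (p : L.B)} ∧
        IsAdicComplete (Ideal.span {algebraMap L.B M.Ct (p : L.B)}) M.Ct := by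
      intro M
      let σ : M.Ct →ₐ[L.B] C :=
        { (M.equiv : (M.Ct ⧸ Ideal.span {(p : M.Ct)}) →+* C).comp (Ideal.Quotient.mk _) with
          commutes' := fun b => M.compat b }
      refine ⟨σ, fun x => rfl, M.equiv.surjective.comp Ideal.Quotient.mk_surjective, ?_, ?_⟩
      · rw [map_natCast]
        ext x
        change M.equiv (Ideal.Quotient.mk _ x) = 0 ↔ _
        rw [map_eq_zero_iff _ M.equiv.injective, Ideal.Quotient.eq_zero_iff_mem]
      · rw [map_natCast]
        exact M.complete
    obtain ⟨σ, hσ0, hσ, hσk, hσc⟩ := mk M₁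
    obtain ⟨τ, hτ0, hτ, hτk, hτc⟩ := mk M₂
    have := M₁.flat
    have := M₂.flat
    have := L.flat
    have hB : ∀ x : L.B, (p : L.B) * x = 0 → x = 0 := by
      intro x hx
      refine torsion_free_of_flat (R := WittVector p k) (p : WittVector p k) ?_ x ?_
      · intro w hw
        exact (mul_eq_zero.1 hw).resolve_left (WittVector.p_nonzero p k)
      · rw [Algebra.smul_def, map_natCast, hx]
    obtain ⟨e, he⟩ := exists_lift_equiv (B := L.B) (A := A) (C := C) (p : L.B) hBA hker σ hσ hσk
      τ hτ hτk (by
        intro x hx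
        refine torsion_free_of_flat (R := L.B) (p : L.B) hB x ?_
        rw [Algebra.smul_def, hx])
    exact ⟨e, fun x => by rw [← hτ0, ← hσ0, he]⟩
end

section
/- Let π : 𝒜 → ℬ be a left exact additive functor between abelian categories, where 𝒜 has enough injectives and there exists d ∈ ℕ with R^nπ = 0 for all n > d, so that π admits a right derived functor Rπ : D(𝒜) → D(ℬ) on the unbounded derived categories (computed on complexes of right π-acyclic objects). Fix a prime p. Let α : C → D be a morphism in D(𝒜) and N : ℤ → ℕ a function with N_i = 0 for all sufficiently large i, such that H^i(α) is a p^{N_i}-isogeny for every i ∈ ℤ. Then there exists a function N' : ℤ → ℕ, depending only on N (and d), with N'_i = 0 for all sufficiently large i, such that H^i(Rπ(α)) is a p^{N'_i}-isogeny for every i ∈ ℤ. -/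
open CategoryTheory CategoryTheory.Limits

universe v₁ v₂ u₁ u₂

/-- In an abelian category, a morphism is a `p^N`-isogeny if its kernel and cokernel are
killed by `p^N`. -/
def IsPIsogeny {C : Type*} [Category C] [Abelian C] (p N : ℕ) {X Y : C} (f : X ⟶ Y) : Prop :=
  (p ^ N) • 𝟙 (kernel f) = 0 ∧ (p ^ N) • 𝟙 (cokernel f) = 0

namespace IsogAux

section generic
variable {C : Type*} [Category C] [Abelian C]

lemma killed_of_exact {S : ShortComplex C} (hS : S.Exact) (a b : ℕ)
    (hf : a • S.f = 0) (hg : b • S.g = 0) : (a * b) • 𝟙 S.X₂ = 0 := by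
  rw [S.exact_iff_exact_up_to_refinements] at hS
  obtain ⟨A, q, _, y, hy⟩ := hS (b • 𝟙 S.X₂) (by simp [hg])
  rw [← cancel_epi q, mul_smul, comp_zero]
  rw [Preadditive.comp_nsmul, hy, ← Preadditive.comp_nsmul, hf, comp_zero]

lemma killed_iso {X Y : C} (e : X ≅ Y) (a : ℕ) (h : a • 𝟙 X = 0) : a • 𝟙 Y = 0 := by
  rw [← e.inv_hom_id, ← Category.id_comp e.hom, ← Preadditive.comp_nsmul,
    ← Preadditive.nsmul_comp, h, zero_comp, comp_zero]

lemma killed_kernel {X Y Z : C} (f : X ⟶ Y) (d : Z ⟶ X) (w : d ≫ f = 0)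
    (hS : (ShortComplex.mk d f w).Exact) (a : ℕ) (h : a • 𝟙 Z = 0) :
    a • 𝟙 (kernel f) = 0 := by
  rw [ShortComplex.exact_iff_exact_up_to_refinements] at hS
  obtain ⟨A, q, _, y, hy⟩ := hS (kernel.ι f) (by simp)
  rw [← cancel_epi q, ← cancel_mono (kernel.ι f)]
  dsimp at hy
  have : a • y = 0 := by rw [← Category.comp_id y, ← Preadditive.comp_nsmul, h, comp_zero]
  simp [hy, ← Preadditive.nsmul_comp, this]

lemma killed_cokernel {X Y Z : C} (f : X ⟶ Y) (g : Y ⟶ Z) (w : f ≫ g = 0)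
    (hS : (ShortComplex.mk f g w).Exact) (a : ℕ) (h : a • 𝟙 Z = 0) :
    a • 𝟙 (cokernel f) = 0 := by
  have : Mono (cokernel.desc f g w) := hS.mono_cokernelDesc
  rw [← cancel_mono (cokernel.desc f g w), Preadditive.nsmul_comp, Category.id_comp, zero_comp,
    ← Category.comp_id (cokernel.desc f g w), ← Preadditive.comp_nsmul, h, comp_zero]

lemma nsmul_eq_zero_of_kernel {X Y Z : C} (f : X ⟶ Y) (d : Z ⟶ X) (w : d ≫ f = 0) (a : ℕ)
    (h : a • 𝟙 (kernel f) = 0) : a • d = 0 := by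
  rw [← kernel.lift_ι f d w, ← Category.comp_id (kernel.lift f d w), Category.assoc,
    ← Preadditive.comp_nsmul, ← Preadditive.nsmul_comp, h, zero_comp, comp_zero]

lemma nsmul_eq_zero_of_cokernel {X Y Z : C} (f : X ⟶ Y) (g : Y ⟶ Z) (w : f ≫ g = 0) (a : ℕ)
    (h : a • 𝟙 (cokernel f) = 0) : a • g = 0 := by
  rw [← cokernel.π_desc f g w, ← Category.id_comp (cokernel.desc f g w),
    ← Preadditive.comp_nsmul, ← Preadditive.nsmul_comp, h, zero_comp, comp_zero]

lemma nsmul_of_src {X Y : C} (f : X ⟶ Y) (a : ℕ) (h : a • 𝟙 X = 0) : a • f = 0 := by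
  rw [← Category.id_comp f, ← Preadditive.nsmul_comp, h, zero_comp]

lemma nsmul_of_tgt {X Y : C} (f : X ⟶ Y) (a : ℕ) (h : a • 𝟙 Y = 0) : a • f = 0 := by
  rw [← Category.comp_id f, ← Preadditive.comp_nsmul, h, comp_zero]

section
variable (I : ℤ → C)

/-- The contractible complex with terms `I i ⊞ I (i+1)`. -/
noncomputable def cpx : CochainComplex C ℤ :=
  CochainComplex.of (fun i => I i ⊞ I (i + 1)) (fun _ => biprod.snd ≫ biprod.inl) (by simp)

lemma cpx_d (i : ℤ) : (cpx I).d i (i + 1) =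
    (biprod.snd ≫ biprod.inl : I i ⊞ I (i + 1) ⟶ I (i + 1) ⊞ I (i + 1 + 1)) :=
  CochainComplex.of_d (fun i => I i ⊞ I (i + 1)) (fun _ => biprod.snd ≫ biprod.inl) i

lemma cpx_exactAt (j : ℤ) : (cpx I).ExactAt j := by
  obtain ⟨i, rfl⟩ : ∃ i, j = i + 1 := ⟨j - 1, by simp⟩
  rw [HomologicalComplex.exactAt_iff' _ i (i + 1) (i + 1 + 1) (by simp) (by simp),
    ShortComplex.exact_iff_exact_up_to_refinements]
  intro A x hx
  change A ⟶ I (i + 1) ⊞ I (i + 1 + 1) at x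
  have hx2 : x ≫ biprod.snd = 0 := by
    have h0 : x ≫ (cpx I).d (i + 1) (i + 1 + 1) = 0 := hx
    rw [cpx_d] at h0
    have h1 : x ≫ (biprod.snd ≫ biprod.inl :
      I (i + 1) ⊞ I (i + 1 + 1) ⟶ I (i + 1 + 1) ⊞ I (i + 1 + 1 + 1)) = 0 := h0
    rw [← Category.assoc] at h1
    exact zero_of_comp_mono _ h1
  refine ⟨A, 𝟙 _, inferInstance, x ≫ biprod.fst ≫ biprod.inr, ?_⟩
  have : 𝟙 A ≫ x = (x ≫ biprod.fst ≫ biprod.inr) ≫ (cpx I).d i (i + 1) := by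
    rw [cpx_d]
    have h1 : 𝟙 A ≫ x = (x ≫ biprod.fst ≫ biprod.inr) ≫ (biprod.snd ≫ biprod.inl :
        I i ⊞ I (i + 1) ⟶ I (i + 1) ⊞ I (i + 1 + 1)) := by
      apply biprod.hom_ext <;> simp [hx2]
    exact h1
  exact this

variable {I} (K : CochainComplex C ℤ) (ι : ∀ i, K.X i ⟶ I i)

/-- The canonical map to the contractible complex. -/
noncomputable def toCpx : K ⟶ cpx I where
  f i := (biprod.lift (ι i) (K.d i (i + 1) ≫ ι (i + 1)) : K.X i ⟶ I i ⊞ I (i + 1))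
  comm' i j hij := by
    obtain rfl : i + 1 = j := hij
    rw [cpx_d]
    change biprod.lift _ _ ≫ (biprod.snd ≫ biprod.inl : I i ⊞ I (i + 1) ⟶ I (i + 1) ⊞ I (i + 1 + 1))
      = K.d i (i + 1) ≫ (biprod.lift _ _ : _ ⟶ I (i + 1) ⊞ I (i + 1 + 1))
    apply biprod.hom_ext <;> simp

lemma mono_toCpx [∀ i, Mono (ι i)] : Mono (toCpx K ι) := by
  have (i : ℤ) : Mono ((toCpx K ι).f i) := by
    have : Mono ((toCpx K ι).f i ≫ (biprod.fst : I i ⊞ I (i + 1) ⟶ I i)) := by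
      have : (toCpx K ι).f i ≫ (biprod.fst : I i ⊞ I (i + 1) ⟶ I i) = ι i :=
        biprod.lift_fst _ _
      rw [this]; infer_instance
    exact mono_of_mono _ (biprod.fst : I i ⊞ I (i + 1) ⟶ I i)
  exact HomologicalComplex.mono_of_mono_f _ this

end

lemma exists_inj [EnoughInjectives C] (X : C) :
    ∃ (I : C) (f : X ⟶ I), Injective I ∧ Mono f ∧ (IsZero X → IsZero I) := by
  by_cases h : IsZero X
  · exact ⟨X, 𝟙 X, h.injective, inferInstance, id⟩
  · exact ⟨Injective.under X, Injective.ι X, inferInstance, inferInstance, fun h' => (h h').elim⟩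

lemma exists_step [EnoughInjectives C] (K : CochainComplex C ℤ) :
    ∃ (S : ShortComplex (CochainComplex C ℤ)) (_ : S.ShortExact), S.X₁ = K ∧
      (∀ i, Injective (S.X₂.X i)) ∧ (∀ i, S.X₂.ExactAt i) ∧
      (∀ i, IsZero (K.X i) → IsZero (K.X (i + 1)) → IsZero (S.X₃.X i)) := by
  choose I ι h₁ h₂ h₃ using fun i => exists_inj (K.X i)
  have := mono_toCpx K ι
  have hS : (ShortComplex.mk (toCpx K ι) (cokernel.π (toCpx K ι)) (by simp)).ShortExact :=
    { exact := ShortComplex.exact_cokernel _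
      mono_f := this
      epi_g := by dsimp; infer_instance }
  refine ⟨_, hS, rfl, fun i => ?_, cpx_exactAt I, fun i hi hi' => ?_⟩
  · change Injective (I i ⊞ I (i + 1))
    infer_instance
  · have := hS.epi_g
    dsimp at this
    have : Epi ((cokernel.π (toCpx K ι)).f i) := inferInstance
    have hz : IsZero ((cpx I).X i) := by
      change IsZero (I i ⊞ I (i + 1))
      exact (biprod_isZero_iff _ _).2 ⟨h₃ _ hi, h₃ _ hi'⟩
    exact IsZero.of_epi ((cokernel.π (toCpx K ι)).f i) hz

/-- Splicing an injective resolution. -/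
lemma exists_splice {S : ShortComplex C} (hS : S.ShortExact) (hI : Injective S.X₂)
    (L : CochainComplex C ℕ) (hL : ∀ n, Injective (L.X n)) (e : S.X₃ ⟶ L.X 0) (he : Mono e)
    (w0 : e ≫ L.d 0 1 = 0) (h2 : (ShortComplex.mk e (L.d 0 1) w0).Exact)
    (h3 : ∀ n, (ShortComplex.mk _ _ (L.d_comp_d n (n + 1) (n + 2))).Exact)
    (w : (S.g ≫ e) ≫ L.d 0 1 = 0) :
    ∃ R' : InjectiveResolution S.X₁, R'.cocomplex = L.augment (S.g ≫ e) w := by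
  have := hS.mono_f
  have := hS.epi_g
  have w1 : S.f ≫ S.g ≫ e = 0 := by rw [← Category.assoc, S.zero, zero_comp]
  have hex : (ShortComplex.mk S.f (S.g ≫ e) w1).Exact := by
    let α : S ⟶ ShortComplex.mk S.f (S.g ≫ e) w1 :=
      { τ₁ := 𝟙 _, τ₂ := 𝟙 _, τ₃ := e }
    have : Mono α.τ₃ := he
    have : Epi α.τ₁ := inferInstanceAs (Epi (𝟙 _))
    have : IsIso α.τ₂ := inferInstanceAs (IsIso (𝟙 _))
    exact (ShortComplex.exact_iff_of_epi_of_isIso_of_mono α).1 hS.exact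
  refine ⟨{ cocomplex := L.augment (S.g ≫ e) w
            injective := ?_
            ι := (CochainComplex.fromSingle₀Equiv _ _).symm ⟨S.f, w1⟩
            quasiIso := ⟨?_⟩ }, rfl⟩
  · rintro (_ | n)
    · assumption
    · exact hL n
  · rintro (_ | _ | n)
    · rw [CochainComplex.quasiIsoAt₀_iff, ShortComplex.quasiIso_iff_of_zeros]
      · refine (ShortComplex.exact_and_mono_f_iff_of_iso ?_).2 ⟨hex, by dsimp; infer_instance⟩
        refine ShortComplex.isoMk (Iso.refl _) (Iso.refl _) (Iso.refl _) ?_ ?_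
        · refine (Category.id_comp S.f).trans ((Category.comp_id _).trans ?_).symm
          exact CochainComplex.fromSingle₀Equiv_symm_apply_f_zero
            (C := L.augment (S.g ≫ e) w) S.f w1
        · exact (Category.id_comp (S.g ≫ e)).trans (Category.comp_id (S.g ≫ e)).symm
      all_goals rfl
    · rw [quasiIsoAt_iff_exactAt]
      · rw [HomologicalComplex.exactAt_iff' _ 0 1 2 (by simp) (by simp)]
        let α : ShortComplex.mk (S.g ≫ e) (L.d 0 1) w ⟶ ShortComplex.mk e (L.d 0 1) w0 :=
          { τ₁ := S.g, τ₂ := 𝟙 _, τ₃ := 𝟙 _ }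
        have : Mono α.τ₃ := inferInstanceAs (Mono (𝟙 _))
        have : Epi α.τ₁ := inferInstanceAs (Epi S.g)
        have : IsIso α.τ₂ := inferInstanceAs (IsIso (𝟙 _))
        exact (ShortComplex.exact_iff_of_epi_of_isIso_of_mono α).2 h2
      · apply CochainComplex.exactAt_succ_single_obj
    · rw [quasiIsoAt_iff_exactAt]
      · rw [HomologicalComplex.exactAt_iff' _ (n + 1) (n + 2) (n + 3) (by simp) (by simp)]
        exact h3 n
      · apply CochainComplex.exactAt_succ_single_obj

lemma rightDerived_step {D : Type*} [Category D] [Abelian D] [EnoughInjectives C]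
    (F : C ⥤ D) [F.Additive] {S : ShortComplex C} (hS : S.ShortExact) (hI : Injective S.X₂)
    (n : ℕ) (h : IsZero ((F.rightDerived (n + 2)).obj S.X₁)) :
    IsZero ((F.rightDerived (n + 1)).obj S.X₃) := by
  let R := InjectiveResolution.of S.X₃
  have w0 := R.ι_f_zero_comp_complex_d
  have h2 : (ShortComplex.mk (R.ι.f 0) (R.cocomplex.d 0 1) w0).Exact :=
    ShortComplex.exact_of_f_is_kernel _ R.isLimitKernelFork
  have hm : Mono (R.ι.f 0) := inferInstance
  obtain ⟨e, he, w0, h2⟩ : ∃ (e : S.X₃ ⟶ R.cocomplex.X 0) (_ : Mono e)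
    (w0 : e ≫ R.cocomplex.d 0 1 = 0), (ShortComplex.mk e (R.cocomplex.d 0 1) w0).Exact :=
    ⟨R.ι.f 0, hm, w0, h2⟩
  obtain ⟨R', hR'⟩ := exists_splice hS hI R.cocomplex R.injective e he w0 h2 R.exact_succ
    (by rw [Category.assoc, w0, comp_zero])
  have h1 := h.of_iso (R'.isoRightDerivedObj F (n + 2)).symm
  refine IsZero.of_iso ?_ (R.isoRightDerivedObj F (n + 1))
  rw [hR'] at h1
  erw [← HomologicalComplex.exactAt_iff_isZero_homology] at h1 ⊢
  rw [HomologicalComplex.exactAt_iff' _ n (n + 1) (n + 2) (by simp) (by simp)]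
  rw [HomologicalComplex.exactAt_iff' _ (n + 1) (n + 2) (n + 3) (by simp) (by simp)] at h1
  exact h1

end generic

section derived

open DerivedCategory Pretriangulated

variable {𝒜 : Type*} [Category 𝒜] [Abelian 𝒜] [HasDerivedCategory 𝒜]
  {ℬ : Type*} [Category ℬ] [Abelian ℬ] [HasDerivedCategory ℬ]
  (π : 𝒜 ⥤ ℬ) [π.Additive] [EnoughInjectives 𝒜]
  (F : DerivedCategory 𝒜 ⥤ DerivedCategory ℬ) [F.CommShift ℤ] [F.IsTriangulated]

/-- `F` is computed on acyclic complexes. -/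
def Computes : Prop := ∀ K : CochainComplex 𝒜 ℤ,
  (∀ (i : ℤ) (n : ℕ), 1 ≤ n → IsZero ((π.rightDerived n).obj (K.X i))) →
  Nonempty (F.obj (DerivedCategory.Q.obj K) ≅
    DerivedCategory.Q.obj ((π.mapHomologicalComplex (ComplexShape.up ℤ)).obj K))

lemma isZero_Q_of_exact (K : CochainComplex 𝒜 ℤ) (h : ∀ i, K.ExactAt i) : IsZero (Q.obj K) := by
  have h1 : (Q.obj K).IsLE 0 := by
    rw [isLE_Q_obj_iff, CochainComplex.isLE_iff]
    exact fun i _ => h i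
  have h2 : (Q.obj K).IsGE 1 := by
    rw [isGE_Q_obj_iff, CochainComplex.isGE_iff]
    exact fun i _ => h i
  exact TStructure.t.isZero _ 0 1

lemma step_iso (S : ShortComplex (CochainComplex 𝒜 ℤ)) (hS : S.ShortExact)
    (hE : ∀ i, S.X₂.ExactAt i) (i j : ℤ) (hij : i + 1 = j)
    (hz : IsZero ((homologyFunctor ℬ i).obj (F.obj (Q.obj S.X₃)))) :
    IsZero ((homologyFunctor ℬ j).obj (F.obj (Q.obj S.X₁))) := by
  have hT := F.map_distinguished _ (triangleOfSES_distinguished hS)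
  have h2 := HomologySequence.exact₁ _ hT i j hij
  have hz2 : IsZero ((homologyFunctor ℬ j).obj (F.obj (Q.obj S.X₂))) :=
    Functor.map_isZero _ (F.map_isZero (isZero_Q_of_exact _ hE))
  exact h2.isZero_of_both_zeros (hz.eq_of_src _ _) (hz2.eq_of_tgt _ _)

lemma step_acyclic (k : ℕ) (S : ShortComplex (CochainComplex 𝒜 ℤ)) (hS : S.ShortExact)
    (hI : ∀ i, Injective (S.X₂.X i))
    (h : ∀ (i : ℤ) (n : ℕ), k + 2 ≤ n → IsZero ((π.rightDerived n).obj (S.X₁.X i))) :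
    ∀ (i : ℤ) (n : ℕ), k + 1 ≤ n → IsZero ((π.rightDerived n).obj (S.X₃.X i)) := by
  intro i n hn
  obtain ⟨m, rfl⟩ : ∃ m, n = m + 1 := ⟨n - 1, by omega⟩
  exact rightDerived_step π (hS.map_of_exact (HomologicalComplex.eval _ _ i)) (hI i) m
    (h i _ (by omega))

lemma F_le (hF : Computes π F) (k : ℕ) : ∀ (K : CochainComplex 𝒜 ℤ),
    (∀ (i : ℤ) (n : ℕ), k + 1 ≤ n → IsZero ((π.rightDerived n).obj (K.X i))) →
    ∀ a : ℤ, (∀ i, a < i → IsZero (K.X i)) → ∀ i, a + k < i →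
      IsZero ((homologyFunctor ℬ i).obj (F.obj (Q.obj K))) := by
  induction k with
  | zero =>
    intro K hK a ha i hi
    obtain ⟨e⟩ := hF K hK
    refine IsZero.of_iso ?_ ((homologyFunctor ℬ i).mapIso e ≪≫ (homologyFunctorFactors ℬ i).app _)
    refine HomologicalComplex.ExactAt.isZero_homology ?_
    exact ShortComplex.exact_of_isZero_X₂ _ (π.map_isZero (ha i (by simpa using hi)))
  | succ k ih =>
    intro K hK a ha i hi
    obtain ⟨S, hS, rfl, hI, hE, hZ⟩ := exists_step K
    refine step_iso F S hS hE (i - 1) i (by omega) ?_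
    refine ih S.X₃ (step_acyclic π k S hS hI hK) a ?_ _ (by push_cast at hi; omega)
    exact fun j hj => hZ j (ha j hj) (ha _ (by omega))

lemma F_ge (hF : Computes π F) (k : ℕ) : ∀ (K : CochainComplex 𝒜 ℤ),
    (∀ (i : ℤ) (n : ℕ), k + 1 ≤ n → IsZero ((π.rightDerived n).obj (K.X i))) →
    ∀ a : ℤ, (∀ i, i < a → IsZero (K.X i)) → ∀ i, i < a →
      IsZero ((homologyFunctor ℬ i).obj (F.obj (Q.obj K))) := by
  induction k with
  | zero =>
    intro K hK a ha i hi
    obtain ⟨e⟩ := hF K hK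
    refine IsZero.of_iso ?_ ((homologyFunctor ℬ i).mapIso e ≪≫ (homologyFunctorFactors ℬ i).app _)
    refine HomologicalComplex.ExactAt.isZero_homology ?_
    exact ShortComplex.exact_of_isZero_X₂ _ (π.map_isZero (ha i hi))
  | succ k ih =>
    intro K hK a ha i hi
    obtain ⟨S, hS, rfl, hI, hE, hZ⟩ := exists_step K
    refine step_iso F S hS hE (i - 1) i (by omega) ?_
    refine ih S.X₃ (step_acyclic π k S hS hI hK) (a - 1) ?_ _ (by omega)
    exact fun j hj => hZ j (ha j (by omega)) (ha _ (by omega))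

lemma F_isLE (d : ℕ)
    (hd : ∀ n : ℕ, d < n → ∀ X : 𝒜, IsZero ((π.rightDerived n).obj X))
    (hF : Computes π F) (X : DerivedCategory 𝒜) (a : ℤ) (hX : X.IsLE a) (i : ℤ)
    (hi : a + d < i) : IsZero ((homologyFunctor ℬ i).obj (F.obj X)) := by
  obtain ⟨K, _, ⟨e⟩⟩ := X.exists_iso_Q_obj_of_isLE a
  exact (F_le π F hF d K (fun i n hn => hd n hn _) a
    (fun j hj => K.isZero_of_isStrictlyLE a j hj) i hi).of_iso
    ((homologyFunctor ℬ i).mapIso (F.mapIso e))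

lemma F_isGE (d : ℕ)
    (hd : ∀ n : ℕ, d < n → ∀ X : 𝒜, IsZero ((π.rightDerived n).obj X))
    (hF : Computes π F) (X : DerivedCategory 𝒜) (a : ℤ) (hX : X.IsGE a) (i : ℤ)
    (hi : i < a) : IsZero ((homologyFunctor ℬ i).obj (F.obj X)) := by
  obtain ⟨K, _, ⟨e⟩⟩ := X.exists_iso_Q_obj_of_isGE a
  exact (F_ge π F hF d K (fun i n hn => hd n hn _) a
    (fun j hj => K.isZero_of_isStrictlyGE a j hj) i hi).of_iso
    ((homologyFunctor ℬ i).mapIso (F.mapIso e))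

/-- An object concentrated in one degree. -/
lemma killed_single (X : DerivedCategory 𝒜) (a : ℤ) (h1 : X.IsLE a) (h2 : X.IsGE a) (m : ℕ)
    (h : m • 𝟙 ((homologyFunctor 𝒜 a).obj X) = 0) : m • 𝟙 X = 0 := by
  obtain ⟨Y, ⟨e⟩⟩ := exists_iso_singleFunctor_obj_of_isGE_of_isLE X a
  have e' : (homologyFunctor 𝒜 a).obj X ≅ Y := (homologyFunctor 𝒜 a).mapIso e ≪≫
    (homologyFunctor 𝒜 a).mapIso ((singleFunctorIsoCompQ 𝒜 a).app Y) ≪≫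
    (homologyFunctorFactors 𝒜 a).app _ ≪≫
    HomologicalComplex.singleObjHomologySelfIso (ComplexShape.up ℤ) a Y
  have hY := killed_iso e' m h
  have hs : m • 𝟙 ((singleFunctor 𝒜 a).obj Y) = 0 := by
    rw [← CategoryTheory.Functor.map_id, ← CategoryTheory.Functor.map_nsmul, hY, CategoryTheory.Functor.map_zero]
  rw [← e.hom_inv_id, ← Category.id_comp e.inv, ← Preadditive.comp_nsmul,
    ← Preadditive.nsmul_comp, hs, zero_comp, comp_zero]

lemma killed_ge (d : ℕ)
    (hd : ∀ n : ℕ, d < n → ∀ X : 𝒜, IsZero ((π.rightDerived n).obj X))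
    (hF : Computes π F) (p : ℕ) (M : ℤ → ℕ) (i : ℤ) (k : ℕ) :
    ∀ (X : DerivedCategory 𝒜), X.IsGE (i + 1 - k) →
      (∀ j, p ^ M j • 𝟙 ((homologyFunctor 𝒜 j).obj X) = 0) →
      p ^ (∑ j ∈ Finset.range k, M (i - j)) • 𝟙 ((homologyFunctor ℬ i).obj (F.obj X)) = 0 := by
  induction k with
  | zero =>
    intro X hX _
    have := F_isGE π F d hd hF X (i + 1) (by simpa using hX) i (by omega)
    exact this.eq_of_src _ _
  | succ k ih =>
    intro X hX hM
    have hX' : X.IsGE (i - k) := by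
      have : i + 1 - ((k + 1 : ℕ) : ℤ) = i - k := by push_cast; ring
      rwa [this] at hX
    obtain ⟨Y, Z, hY, hZ, f, g, h, hT⟩ :=
      TStructure.t.exists_triangle X (i - k) (i + 1 - k) (by ring)
    replace hY : Y.IsLE (i - k) := ⟨hY⟩
    replace hZ : Z.IsGE (i + 1 - k) := ⟨hZ⟩
    have hZ0 := (isGE_iff _ _).1 hZ
    have hY0 := (isLE_iff _ _).1 hY
    have hX0 := (isGE_iff _ _).1 hX'
    -- isomorphisms on homology
    have hg (j : ℤ) (hj : i - k < j) : IsIso ((homologyFunctor 𝒜 j).map g) := by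
      have h1 : Mono ((homologyFunctor 𝒜 j).map g) :=
        (HomologySequence.mono_homologyMap_mor₂_iff _ hT j).2 ((hY0 j hj).eq_of_src _ _)
      have h2 : Epi ((homologyFunctor 𝒜 j).map g) :=
        (HomologySequence.epi_homologyMap_mor₂_iff _ hT j (j + 1)).2
          ((hY0 (j + 1) (by omega)).eq_of_tgt _ _)
      exact isIso_of_mono_of_epi _
    have hf (j : ℤ) (hj : j ≤ i - k) : IsIso ((homologyFunctor 𝒜 j).map f) := by
      have h1 : Mono ((homologyFunctor 𝒜 j).map f) :=
        (HomologySequence.mono_homologyMap_mor₁_iff _ hT (j - 1) j).2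
          ((hZ0 (j - 1) (by omega)).eq_of_src _ _)
      have h2 : Epi ((homologyFunctor 𝒜 j).map f) :=
        (HomologySequence.epi_homologyMap_mor₁_iff _ hT j).2
          ((hZ0 j (by omega)).eq_of_tgt _ _)
      exact isIso_of_mono_of_epi _
    have hYge : Y.IsGE (i - k) := by
      rw [isGE_iff]
      intro j hj
      have := hf j hj.le
      exact (hX0 j hj).of_iso (asIso ((homologyFunctor 𝒜 j).map f))
    have hZM : ∀ j, p ^ M j • 𝟙 ((homologyFunctor 𝒜 j).obj Z) = 0 := by
      intro j
      by_cases hj : i - k < j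
      · have := hg j hj
        exact killed_iso (asIso ((homologyFunctor 𝒜 j).map g)) _ (hM j)
      · exact (hZ0 j (by omega)).eq_of_src _ _
    have hYk : p ^ M (i - k) • 𝟙 Y = 0 := by
      have := hf (i - k) le_rfl
      exact killed_single Y _ hY hYge _
        (killed_iso (asIso ((homologyFunctor 𝒜 (i - k)).map f)).symm _ (hM _))
    have hFY : p ^ M (i - k) • 𝟙 ((homologyFunctor ℬ i).obj (F.obj Y)) = 0 := by
      rw [← CategoryTheory.Functor.map_id, ← CategoryTheory.Functor.map_id, ← CategoryTheory.Functor.map_nsmul, ← CategoryTheory.Functor.map_nsmul, hYk,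
        CategoryTheory.Functor.map_zero, CategoryTheory.Functor.map_zero]
    have hFZ := ih Z hZ hZM
    have hex := HomologySequence.exact₂ _ (F.map_distinguished _ hT) i
    have := killed_of_exact hex (p ^ M (i - k)) (p ^ (∑ j ∈ Finset.range k, M (i - j)))
      (nsmul_of_src _ _ hFY) (nsmul_of_tgt _ _ hFZ)
    rw [Finset.sum_range_succ, add_comm, pow_add]
    exact this

lemma killed_all (d : ℕ)
    (hd : ∀ n : ℕ, d < n → ∀ X : 𝒜, IsZero ((π.rightDerived n).obj X))
    (hF : Computes π F) (p : ℕ) (M : ℤ → ℕ) (i : ℤ)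
    (X : DerivedCategory 𝒜) (hM : ∀ j, p ^ M j • 𝟙 ((homologyFunctor 𝒜 j).obj X) = 0) :
    p ^ (∑ j ∈ Finset.range (d + 1), M (i - j)) •
      𝟙 ((homologyFunctor ℬ i).obj (F.obj X)) = 0 := by
  obtain ⟨Y, Z, hY, hZ, f, g, h, hT⟩ :=
    TStructure.t.exists_triangle X (i - d - 1) (i + 1 - (d + 1 : ℕ)) (by push_cast; ring)
  replace hY : Y.IsLE (i - d - 1) := ⟨hY⟩
  replace hZ : Z.IsGE (i + 1 - (d + 1 : ℕ)) := ⟨hZ⟩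
  have hZ0 := (isGE_iff _ _).1 hZ
  have hY0 := (isLE_iff _ _).1 hY
  have hZM : ∀ j, p ^ M j • 𝟙 ((homologyFunctor 𝒜 j).obj Z) = 0 := by
    intro j
    by_cases hj : i - d - 1 < j
    · have h1 : Mono ((homologyFunctor 𝒜 j).map g) :=
        (HomologySequence.mono_homologyMap_mor₂_iff _ hT j).2 ((hY0 j hj).eq_of_src _ _)
      have h2 : Epi ((homologyFunctor 𝒜 j).map g) :=
        (HomologySequence.epi_homologyMap_mor₂_iff _ hT j (j + 1)).2
          ((hY0 (j + 1) (by omega)).eq_of_tgt _ _)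
      have := isIso_of_mono_of_epi ((homologyFunctor 𝒜 j).map g)
      exact killed_iso (asIso ((homologyFunctor 𝒜 j).map g)) _ (hM j)
    · exact (hZ0 j (by push_cast; omega)).eq_of_src _ _
  have hFZ := killed_ge π F d hd hF p M i (d + 1) Z hZ hZM
  have hFY := F_isLE π F d hd hF Y _ hY i (by omega)
  have hex := HomologySequence.exact₂ _ (F.map_distinguished _ hT) i
  have := killed_of_exact hex 1 (p ^ (∑ j ∈ Finset.range (d + 1), M (i - j)))
    (hFY.eq_of_src _ _) (nsmul_of_tgt _ _ hFZ)
  rw [one_mul] at this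
  exact this

end derived
end IsogAux

/-- Let `π : 𝒜 → ℬ` be a left exact additive functor between abelian
categories, where `𝒜` has enough injectives and `Rⁿπ = 0` for `n > d`, so that `π` admits a
right derived functor `Rπ : D(𝒜) → D(ℬ)` (a triangulated functor computed termwise on
complexes of right `π`-acyclic objects).  Let `α : C → D` in `D(𝒜)` and `N : ℤ → ℕ` with
`N_i = 0` for `i` large, such that `H^i(α)` is a `p^{N_i}`-isogeny for all `i`.  Then there is
`N' : ℤ → ℕ`, depending only on `N` (and `d`), vanishing for `i` large, such that `H^i(Rπ(α))`
is a `p^{N'_i}`-isogeny for all `i`. -/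
theorem isogeny_of_derived_pushforward
    (p : ℕ) (hp : p.Prime) (d : ℕ) (N : ℤ → ℕ) (i₀ : ℤ) (hN : ∀ i : ℤ, i₀ ≤ i → N i = 0) :
    ∃ N' : ℤ → ℕ, (∃ i₁ : ℤ, ∀ i : ℤ, i₁ ≤ i → N' i = 0) ∧
      ∀ (𝒜 : Type u₁) [Category.{v₁} 𝒜] [Abelian 𝒜] [HasDerivedCategory 𝒜]
        (ℬ : Type u₂) [Category.{v₂} ℬ] [Abelian ℬ] [HasDerivedCategory ℬ]
        (π : 𝒜 ⥤ ℬ) [π.Additive] [PreservesFiniteLimits π] [EnoughInjectives 𝒜],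
        (∀ n : ℕ, d < n → ∀ X : 𝒜, IsZero ((π.rightDerived n).obj X)) →
        ∀ (F : DerivedCategory 𝒜 ⥤ DerivedCategory ℬ) [F.CommShift ℤ] [F.IsTriangulated],
          -- `F` is the right derived functor of `π`: it is computed termwise on complexes of
          -- right `π`-acyclic objects.
          (∀ K : CochainComplex 𝒜 ℤ,
            (∀ (i : ℤ) (n : ℕ), 1 ≤ n → IsZero ((π.rightDerived n).obj (K.X i))) →
            Nonempty (F.obj (DerivedCategory.Q.obj K) ≅
              DerivedCategory.Q.obj ((π.mapHomologicalComplex (ComplexShape.up ℤ)).obj K))) →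
          ∀ (C D : DerivedCategory 𝒜) (α : C ⟶ D),
            (∀ i : ℤ, IsPIsogeny p (N i) ((DerivedCategory.homologyFunctor 𝒜 i).map α)) →
            ∀ i : ℤ, IsPIsogeny p (N' i)
              ((DerivedCategory.homologyFunctor ℬ i).map (F.map α)) := by
  classical
  let M : ℤ → ℕ := fun j => N j + N (j + 1)
  let M' : ℤ → ℕ := fun i => ∑ j ∈ Finset.range (d + 1), M (i - j)
  have hM' : ∀ i : ℤ, i₀ + d ≤ i → M' i = 0 := by
    intro i hi
    refine Finset.sum_eq_zero fun j hj => ?_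
    have hj' : j < d + 1 := Finset.mem_range.1 hj
    show N (i - j) + N (i - j + 1) = 0
    rw [hN _ (by omega), hN _ (by omega)]
  refine ⟨fun i => M' (i - 1) + M' i, ⟨i₀ + d + 1, fun i hi => ?_⟩, ?_⟩
  · show M' (i - 1) + M' i = 0
    rw [hM' _ (by omega), hM' _ (by omega)]
  intro 𝒜 _ _ _ ℬ _ _ _ π _ _ _ hd F _ _ hF C D α hα i
  obtain ⟨K, g, h, hT⟩ := Pretriangulated.distinguished_cocone_triangle α
  have hK : ∀ j, p ^ M j • 𝟙 ((DerivedCategory.homologyFunctor 𝒜 j).obj K) = 0 := by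
    intro j
    have h3 := DerivedCategory.HomologySequence.exact₃ _ hT j (j + 1) rfl
    have a1 : p ^ N j • (DerivedCategory.homologyFunctor 𝒜 j).map g = 0 := by
      refine IsogAux.nsmul_eq_zero_of_cokernel
        ((DerivedCategory.homologyFunctor 𝒜 j).map α) _ ?_ _ (hα j).2
      have z : α ≫ g = 0 := Pretriangulated.comp_distTriang_mor_zero₁₂ _ hT
      rw [← CategoryTheory.Functor.map_comp, z, CategoryTheory.Functor.map_zero]
    have a2 : p ^ N (j + 1) • DerivedCategory.HomologySequence.δ
        (Pretriangulated.Triangle.mk α g h) j (j + 1) rfl = 0 :=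
      IsogAux.nsmul_eq_zero_of_kernel
        ((DerivedCategory.homologyFunctor 𝒜 (j + 1)).map α) _
        (DerivedCategory.HomologySequence.δ_comp _ hT j (j + 1) rfl) _ (hα (j + 1)).1
    have := IsogAux.killed_of_exact h3 (p ^ N j) (p ^ N (j + 1)) a1 a2
    rw [← pow_add] at this
    exact this
  have hT' := F.map_distinguished _ hT
  have hk : ∀ i, p ^ M' i • 𝟙 ((DerivedCategory.homologyFunctor ℬ i).obj (F.obj K)) = 0 :=
    fun i => IsogAux.killed_all π F d hd hF p M i K hK
  have e1 := DerivedCategory.HomologySequence.exact₁ _ hT' (i - 1) i (by omega)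
  have e2 := DerivedCategory.HomologySequence.exact₂ _ hT' i
  have k1 : p ^ M' (i - 1) •
      𝟙 (kernel ((DerivedCategory.homologyFunctor ℬ i).map (F.map α))) = 0 :=
    IsogAux.killed_kernel _ _ _ e1 _ (hk (i - 1))
  have k2 : p ^ M' i •
      𝟙 (cokernel ((DerivedCategory.homologyFunctor ℬ i).map (F.map α))) = 0 :=
    IsogAux.killed_cokernel _ _ _ e2 _ (hk i)
  constructor
  · show p ^ (M' (i - 1) + M' i) • _ = _
    rw [pow_add, mul_comm, mul_smul, k1, smul_zero]
  · show p ^ (M' (i - 1) + M' i) • _ = _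
    rw [pow_add, mul_smul, k2, smul_zero]
end

section
/- Let B be a commutative ring and p ∈ B. Let M be a p-adically complete B-module (i.e. M ≅ lim_n M/p^nM), let X be any B-module, and let X̂ = lim_n X/p^nX be its p-adic completion. Then precomposition with the canonical map X → X̂ induces a bijection Hom_B(X̂, M) ≅ Hom_B(X, M); that is, every B-linear map from X to a p-adically complete module factors uniquely through the p-adic completion of X. -/
/-- Let `B` be a commutative ring and `p ∈ B`. If `M` is a `p`-adically
complete `B`-module, then for any `B`-module `X`, precomposition with the canonical map
`X → X̂ = lim_n X/pⁿX` is a bijection `Hom_B(X̂, M) ≅ Hom_B(X, M)`: every `B`-linear map from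
`X` to a `p`-adically complete module factors uniquely through the `p`-adic completion. -/
theorem universal_property_of_p_adic_completion
    (B : Type*) [CommRing B] (p : B)
    (M : Type*) [AddCommGroup M] [Module B M]
    (X : Type*) [AddCommGroup X] [Module B X]
    (hM : IsAdicComplete (Ideal.span {p}) M) :
    Function.Bijective
      (fun f : AdicCompletion (Ideal.span {p}) X →ₗ[B] M =>
        f.comp (AdicCompletion.of (Ideal.span {p}) X)) := by
  constructor
  · intro f g hfg
    refine LinearMap.ext fun x => ?_
    rw [← sub_eq_zero]
    refine hM.toIsHausdorff.haus _ fun n => ?_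
    rw [SModEq.zero]
    obtain ⟨y, hy⟩ := Submodule.Quotient.mk_surjective _
      (AdicCompletion.eval (Ideal.span {p}) X n x)
    have hmem : x - AdicCompletion.of (Ideal.span {p}) X y ∈
        ((Ideal.span {p}) ^ n • ⊤ : Submodule B (AdicCompletion (Ideal.span {p}) X)) := by
      rw [AdicCompletion.pow_smul_top_eq_ker_eval (Submodule.fg_span_singleton p),
        LinearMap.mem_ker, map_sub, AdicCompletion.eval_of, ← hy]
      simp
    have hy2 : f (AdicCompletion.of (Ideal.span {p}) X y) =
        g (AdicCompletion.of (Ideal.span {p}) X y) := LinearMap.congr_fun hfg y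
    have h2 := Submodule.mem_map_of_mem (f := f - g) hmem
    rw [Submodule.map_smul''] at h2
    have h3 := Submodule.smul_mono (le_refl ((Ideal.span {p}) ^ n))
      (le_top : Submodule.map (f - g) ⊤ ≤ ⊤) h2
    simpa [hy2] using h3
  · intro g
    refine ⟨(AdicCompletion.ofLinearEquiv (Ideal.span {p}) M).symm.toLinearMap.comp
      ((AdicCompletion.map (Ideal.span {p}) g).restrictScalars B), ?_⟩
    ext x
    simp [AdicCompletion.map_of]
end
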